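/- The N×N Toeplitz matrix T_N(f) is real symmetric with all eigenvalues in [−1,1], and the sequence S(T_N(f)) − (R/3)·log₂ N converges to a finite limit as N → ∞. (The entanglement entropy of a block of N sites of the infinite translation-invariant critical chain equals (R/3)log₂N plus a constant plus o(1), where R is the number of Fermi points in (0,π).) -/

import Mathlib

/-!
Entanglement entropy scaling of the translation-invariant critical chain:
`T_N(f)` is real symmetric with eigenvalues in `[−1,1]`, and
`S(T_N(f)) − (R/3) log₂ N` converges to a finite limit as `N → ∞`.
-/

noncomputable section

/-- The `n`-th Fourier coefficient `f_n = (1/2π) ∫_0^{2π} f(θ) e^{−inθ} dθ`. -/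
def fourierCoef (f : ℝ → ℝ) (n : ℤ) : ℂ :=
  (1 / (2 * Real.pi) : ℂ) *
    ∫ t in (0 : ℝ)..(2 * Real.pi), (f t : ℂ) * Complex.exp (-Complex.I * (n : ℂ) * (t : ℂ))

/-- The bipartite entanglement function
`e(1, ν) = −((1+ν)/2)log₂((1+ν)/2) − ((1−ν)/2)log₂((1−ν)/2)`
(with the convention `0·log₂ 0 = 0`, automatic since `Real.logb 2 0 = 0`). -/
def entBin (ν : ℝ) : ℝ :=
  -((1 + ν) / 2) * Real.logb 2 ((1 + ν) / 2) - ((1 - ν) / 2) * Real.logb 2 ((1 - ν) / 2)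

/-!
For a `±1`-valued symbol, `cosh x + sinh x · f = exp (x f)`, so `det (cosh x + sinh x · T_N(f))` is
the Toeplitz determinant of the Fisher–Hartwig symbol `exp (x f)`, up to a constant a product of
pure jump symbols `exp (x η ψ_τ)` with `ψ_τ` a sawtooth. The entropy is an integral of logarithms of
such determinants, because
`2 log 2 · e(1, ν) = ∫_0^∞ (log (cosh x + ν sinh x) + log (cosh x - ν sinh x)) / sinh² x dx`.
The Toeplitz matrix of a single pure jump is, up to phases, a Cauchy matrix, so that its determinant
is explicit and its logarithm is `(x η / π)² log N + O(1)`. Jumps at different places decouple: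
`log det T_N(ab) - log det T_N(a) - log det T_N(b)` converges when `a` and `b` have no common
jump, by summation by parts in the oscillating sums that measure the failure of `T_N` to be
multiplicative. All bounds are of order `x² exp |x|`, which is integrable against `1 / sinh² x`, so
dominated convergence applies and `∫_0^∞ x² / sinh² x dx = π² / 6` turns `2R` jumps of weight one
into the coefficient `R / 3`.
-/

namespace ToeplitzEntropy
open MeasureTheory Filter Topology
open scoped ComplexConjugate Matrix ComplexOrder Matrix.Norms.L2Operator Real

/-! ### Toeplitz matrices of bounded real symbols -/

/-- Lebesgue measure on the period `(0, 2π]`; a bounded symbol is an `a` with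
`MemLp a ⊤ periodMeasure`. -/
abbrev periodMeasure : Measure ℝ := volume.restrict (Set.Ioc 0 (2 * π))

/-- The `N × N` Toeplitz matrix `T_N(a) = (a_{j-k})` of the symbol `a`. -/
def toeplitz (a : ℝ → ℝ) (N : ℕ) : Matrix (Fin N) (Fin N) ℂ :=
  Matrix.of fun j k : Fin N => fourierCoef a ((j : ℤ) - (k : ℤ))

section Toeplitz

variable {a b : ℝ → ℝ}

lemma fourierCoef_eq_integral (a : ℝ → ℝ) (n : ℤ) : fourierCoef a n =
    (1 / (2 * π) : ℂ) *
      ∫ t, (a t : ℂ) * Complex.exp (-Complex.I * (n : ℂ) * (t : ℂ)) ∂periodMeasure := by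
  rw [fourierCoef, intervalIntegral.integral_of_le Real.two_pi_pos.le]

lemma fourierCoef_congr (h : a =ᵐ[periodMeasure] b) (n : ℤ) :
    fourierCoef a n = fourierCoef b n := by
  rw [fourierCoef_eq_integral, fourierCoef_eq_integral]
  congr 1
  refine integral_congr_ae ?_
  filter_upwards [h] with t ht
  rw [ht]

lemma integrable_mul_exp (ha : MemLp a ⊤ periodMeasure) (n : ℤ) :
    Integrable (fun t : ℝ => (a t : ℂ) * Complex.exp (-Complex.I * (n : ℂ) * (t : ℂ)))
      periodMeasure := by
  refine (ha.integrable le_top).ofReal.mul_bdd (c := 1) (by fun_prop) (.of_forall fun t => ?_)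
  rw [show -Complex.I * (n : ℂ) * (t : ℂ) = ((-(n * t) : ℝ) : ℂ) * Complex.I by push_cast; ring,
    Complex.norm_exp_ofReal_mul_I]

lemma fourierCoef_add (ha : MemLp a ⊤ periodMeasure) (hb : MemLp b ⊤ periodMeasure) (n : ℤ) :
    fourierCoef (fun t => a t + b t) n = fourierCoef a n + fourierCoef b n := by
  simp only [fourierCoef_eq_integral]
  rw [← mul_add, ← integral_add (integrable_mul_exp ha n) (integrable_mul_exp hb n)]
  congr 2
  ext t
  push_cast
  ring

lemma fourierCoef_const_mul (c : ℝ) (a : ℝ → ℝ) (n : ℤ) :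
    fourierCoef (fun t => c * a t) n = c * fourierCoef a n := by
  simp only [fourierCoef_eq_integral]
  rw [mul_left_comm, ← integral_const_mul (c : ℂ)]
  congr 2
  ext t
  push_cast
  ring

lemma fourierCoef_one (n : ℤ) : fourierCoef (fun _ => 1) n = if n = 0 then 1 else 0 := by
  have hpi : (π : ℂ) ≠ 0 := by exact_mod_cast Real.pi_ne_zero
  rw [fourierCoef]
  split_ifs with h
  · subst h
    simp
    field_simp
  · have hn : -Complex.I * (n : ℂ) ≠ 0 :=
      mul_ne_zero (neg_ne_zero.mpr Complex.I_ne_zero) (by exact_mod_cast h)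
    have hperiod : -Complex.I * (n : ℂ) * ((2 * π : ℝ) : ℂ) =
        ((-n : ℤ) : ℂ) * (2 * π * Complex.I) := by
      push_cast
      ring
    simp only [Complex.ofReal_one, one_mul]
    rw [integral_exp_mul_complex hn, hperiod, Complex.exp_int_mul_two_pi_mul_I]
    simp

lemma conj_fourierCoef (a : ℝ → ℝ) (n : ℤ) :
    conj (fourierCoef a n) = fourierCoef a (-n) := by
  simp only [fourierCoef_eq_integral]
  rw [map_mul, ← integral_conj]
  congr 1
  · simp [map_ofNat]
  · congr 1
    ext t
    rw [map_mul, ← Complex.exp_conj]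
    simp

lemma toeplitz_isHermitian (a : ℝ → ℝ) (N : ℕ) : (toeplitz a N).IsHermitian := by
  ext j k
  simpa [toeplitz] using conj_fourierCoef a ((k : ℤ) - j)

lemma toeplitz_one (N : ℕ) : toeplitz (fun _ => 1) N = 1 := by
  ext j k
  simp [toeplitz, fourierCoef_one, Matrix.one_apply, sub_eq_zero, Fin.ext_iff]

lemma toeplitz_add (ha : MemLp a ⊤ periodMeasure) (hb : MemLp b ⊤ periodMeasure) (N : ℕ) :
    toeplitz (fun t => a t + b t) N = toeplitz a N + toeplitz b N := by
  ext j k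
  simp [toeplitz, fourierCoef_add ha hb]

lemma toeplitz_const_mul (c : ℝ) (a : ℝ → ℝ) (N : ℕ) :
    toeplitz (fun t => c * a t) N = (c : ℂ) • toeplitz a N := by
  ext j k
  simp [toeplitz, fourierCoef_const_mul]

lemma toeplitz_congr (h : a =ᵐ[periodMeasure] b) (N : ℕ) : toeplitz a N = toeplitz b N := by
  ext j k
  simp [toeplitz, fourierCoef_congr h]

lemma sum_sum_conj_mul_exp {N : ℕ} (x : Fin N → ℂ) (t : ℝ) :
    ∑ j, ∑ k, conj (x j) * x k * Complex.exp (-Complex.I * ((j - k : ℤ) : ℂ) * t) =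
      (‖∑ k, x k * Complex.exp (Complex.I * (k : ℂ) * (t : ℂ))‖ ^ 2 : ℝ) := by
  push_cast
  rw [← Complex.conj_mul', map_sum, Finset.sum_mul_sum]
  refine Finset.sum_congr rfl fun j _ => Finset.sum_congr rfl fun k _ => ?_
  have hexp : Complex.exp (-Complex.I * ((j : ℂ) - (k : ℂ)) * t) =
      Complex.exp (conj (Complex.I * (j : ℂ) * t)) * Complex.exp (Complex.I * (k : ℂ) * t) := by
    rw [← Complex.exp_add]
    congr 1
    simp
    ring
  rw [map_mul, ← Complex.exp_conj, hexp]
  ring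

lemma star_dotProduct_toeplitz_mulVec (ha : MemLp a ⊤ periodMeasure) {N : ℕ} (x : Fin N → ℂ) :
    star x ⬝ᵥ (toeplitz a N *ᵥ x) = ((1 / (2 * π) * ∫ t, a t *
      ‖∑ k, x k * Complex.exp (Complex.I * (k : ℂ) * (t : ℂ))‖ ^ 2 ∂periodMeasure : ℝ) : ℂ) := by
  have hint (j k : Fin N) := (integrable_mul_exp ha ((j : ℤ) - k)).const_mul (conj (x j) * x k)
  calc star x ⬝ᵥ (toeplitz a N *ᵥ x)
      = (1 / (2 * π) : ℂ) * ∑ j : Fin N, ∑ k : Fin N, ∫ t, conj (x j) * x k *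
          ((a t : ℂ) * Complex.exp (-Complex.I * ((j - k : ℤ) : ℂ) * t)) ∂periodMeasure := by
        simp only [dotProduct, Matrix.mulVec, toeplitz, Matrix.of_apply, fourierCoef_eq_integral,
          Pi.star_apply, RCLike.star_def, Finset.mul_sum, integral_const_mul]
        exact Finset.sum_congr rfl fun j _ => Finset.sum_congr rfl fun k _ => by ring
    _ = (1 / (2 * π) : ℂ) * ∫ t, ((a t *
          ‖∑ k, x k * Complex.exp (Complex.I * (k : ℂ) * (t : ℂ))‖ ^ 2 : ℝ) : ℂ)
            ∂periodMeasure := by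
        simp only [← integral_finsetSum _ fun k _ => hint _ k]
        rw [← integral_finsetSum _ fun j _ => integrable_finsetSum _ fun k _ => hint j k]
        congr 2
        ext t
        rw [Complex.ofReal_mul, ← sum_sum_conj_mul_exp, Finset.mul_sum]
        refine Finset.sum_congr rfl fun j _ => ?_
        rw [Finset.mul_sum]
        exact Finset.sum_congr rfl fun k _ => by ring
    _ = _ := by
        rw [integral_complex_ofReal]
        push_cast
        rfl

lemma toeplitz_posSemidef (ha : MemLp a ⊤ periodMeasure) (h0 : ∀ᵐ t ∂periodMeasure, 0 ≤ a t)
    (N : ℕ) : (toeplitz a N).PosSemidef := by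
  refine .of_dotProduct_mulVec_nonneg (toeplitz_isHermitian a N) fun x => ?_
  rw [star_dotProduct_toeplitz_mulVec ha, Complex.zero_le_real]
  refine mul_nonneg (by positivity) (integral_nonneg_of_ae ?_)
  filter_upwards [h0] with t ht
  positivity

lemma le_re_star_dotProduct_toeplitz_mulVec (ha : MemLp a ⊤ periodMeasure) {δ : ℝ}
    (h0 : ∀ᵐ t ∂periodMeasure, δ ≤ a t) {N : ℕ} (x : Fin N → ℂ) :
    δ * ∑ k, ‖x k‖ ^ 2 ≤ (star x ⬝ᵥ (toeplitz a N *ᵥ x)).re := by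
  have hconst : MemLp (fun _ => -δ * 1) ⊤ periodMeasure := memLp_const _
  have hpsd : (toeplitz (fun t => a t + -δ * 1) N).PosSemidef := by
    refine toeplitz_posSemidef (ha.add hconst) ?_ N
    filter_upwards [h0] with t ht
    simpa using ht
  have hnorm : star x ⬝ᵥ x = ((∑ k, ‖x k‖ ^ 2 : ℝ) : ℂ) := by
    simp only [dotProduct, Pi.star_apply, RCLike.star_def, Complex.conj_mul']
    push_cast
    rfl
  have h := hpsd.re_dotProduct_nonneg x
  rw [toeplitz_add ha hconst, toeplitz_const_mul, toeplitz_one, Matrix.add_mulVec, dotProduct_add,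
    Matrix.smul_mulVec, Matrix.one_mulVec, dotProduct_smul, hnorm] at h
  simp only [RCLike.re_to_complex, smul_eq_mul, Complex.add_re, ← Complex.ofReal_mul,
    Complex.ofReal_re] at h
  linarith

end Toeplitz

section FourierCoefficients

open AddCircle

variable {T : ℝ} [Fact (0 < T)] {f g : AddCircle T → ℂ}

lemma hasSum_conj_fourierCoeff_mul (hf : MemLp f 2 haarAddCircle) (hg : MemLp g 2 haarAddCircle) :
    HasSum (fun l : ℤ => conj (fourierCoeff f l) * fourierCoeff g l)
      (∫ t, conj (f t) * g t ∂haarAddCircle) := by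
  have hrepr {h : AddCircle T → ℂ} (hh : MemLp h 2 haarAddCircle) (l : ℤ) :
      inner ℂ (fourierBasis l) hh.toLp = fourierCoeff h l := by
    rw [← fourierBasis.repr_apply_apply, fourierBasis_repr, fourierCoeff_congr_ae hh.coeFn_toLp]
  have hinner : inner ℂ hf.toLp hg.toLp = ∫ t, conj (f t) * g t ∂haarAddCircle := by
    rw [L2.inner_def]
    refine integral_congr_ae ?_
    filter_upwards [hf.coeFn_toLp, hg.coeFn_toLp] with t hft hgt
    rw [hft, hgt, RCLike.inner_apply']
  rw [← hinner]
  refine (fourierBasis.hasSum_inner_mul_inner hf.toLp hg.toLp).congr_fun fun l => ?_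
  rw [← inner_conj_symm, hrepr, hrepr]

lemma hasSum_fourierCoeff_mul (hf : MemLp f 2 haarAddCircle) (hg : MemLp g 2 haarAddCircle)
    (n : ℤ) : HasSum (fun l : ℤ => fourierCoeff f (n - l) * fourierCoeff g l)
      (fourierCoeff (f * g) n) := by
  have hmem : MemLp (fun t => fourier n t * conj (f t)) 2 haarAddCircle := by
    have hmeas := (fourier n).continuous.aestronglyMeasurable.mul
      (Complex.continuous_conj.comp_aestronglyMeasurable hf.1)
    refine hf.of_le hmeas (.of_forall fun t => ?_)
    simp [Circle.norm_coe]
  convert hasSum_conj_fourierCoeff_mul hmem hg using 2 with l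
  · congr 1
    rw [fourierCoeff, fourierCoeff, ← integral_conj]
    congr 1
    ext t
    rw [smul_eq_mul, smul_eq_mul, map_mul, map_mul, Complex.conj_conj, ← fourier_neg,
      ← fourier_neg, neg_neg, ← mul_assoc, ← fourier_add, neg_sub, sub_eq_add_neg]
  · simp [fourierCoeff, mul_assoc]

end FourierCoefficients

section Convolution

local instance fact_two_pi_pos : Fact (0 < 2 * π) := ⟨Real.two_pi_pos⟩

variable {a b : ℝ → ℝ}

lemma fourierCoef_eq_fourierCoeff_liftIoc (a : ℝ → ℝ) (n : ℤ) : fourierCoef a n =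
    fourierCoeff (AddCircle.liftIoc (2 * π) 0 fun t => (a t : ℂ)) n := by
  rw [fourierCoeff_liftIoc_eq, fourierCoeffOn_eq_integral, fourierCoef, Complex.real_smul]
  simp only [zero_add, sub_zero, fourier_coe_apply, smul_eq_mul]
  push_cast
  congr 2
  ext t
  rw [mul_comm]
  congr 2
  have hpi : (π : ℂ) ≠ 0 := by exact_mod_cast Real.pi_ne_zero
  field_simp

lemma memLp_two_liftIoc (ha : MemLp a ⊤ periodMeasure) :
    MemLp (AddCircle.liftIoc (2 * π) 0 fun t => (a t : ℂ)) 2 AddCircle.haarAddCircle := by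
  have h : MemLp (fun t => (a t : ℂ)) 2 (volume.restrict (Set.Ioc 0 (0 + 2 * π))) := by
    rw [zero_add]
    exact ha.ofReal.mono_exponent le_top
  exact h.memLp_liftIoc.haarAddCircle

lemma hasSum_fourierCoef_mul (ha : MemLp a ⊤ periodMeasure) (hb : MemLp b ⊤ periodMeasure)
    (n : ℤ) : HasSum (fun l : ℤ => fourierCoef a (n - l) * fourierCoef b l)
      (fourierCoef (fun t => a t * b t) n) := by
  simp only [fourierCoef_eq_fourierCoeff_liftIoc]
  convert hasSum_fourierCoeff_mul (memLp_two_liftIoc ha) (memLp_two_liftIoc hb) n using 2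
  ext t
  simp [AddCircle.liftIoc]

end Convolution

/-! ### Nuclear norm bounds for determinants -/

section L2Norm

variable {n : Type*} [Fintype n]

/-- The Euclidean norm of a complex vector. -/
def l2norm (u : n → ℂ) : ℝ := ‖(WithLp.toLp 2 u : EuclideanSpace ℂ n)‖

lemma l2norm_nonneg (u : n → ℂ) : 0 ≤ l2norm u := norm_nonneg _

lemma l2norm_sq (u : n → ℂ) : l2norm u ^ 2 = ∑ k, ‖u k‖ ^ 2 := EuclideanSpace.norm_sq_eq _

lemma l2norm_eq_zero {u : n → ℂ} : l2norm u = 0 ↔ u = 0 := by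
  rw [l2norm, norm_eq_zero, WithLp.toLp_eq_zero]

lemma l2norm_smul (z : ℂ) (u : n → ℂ) : l2norm (z • u) = ‖z‖ * l2norm u := by
  rw [l2norm, WithLp.toLp_smul, norm_smul, l2norm]

lemma l2norm_star (u : n → ℂ) : l2norm (star u) = l2norm u := by
  refine (sq_eq_sq₀ (l2norm_nonneg _) (l2norm_nonneg _)).mp ?_
  simp [l2norm_sq]

lemma norm_dotProduct_le (u v : n → ℂ) : ‖u ⬝ᵥ v‖ ≤ l2norm u * l2norm v := by
  have h := norm_inner_le_norm (𝕜 := ℂ) (WithLp.toLp 2 (star u) : EuclideanSpace ℂ n)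
    (WithLp.toLp 2 v)
  rw [EuclideanSpace.inner_eq_star_dotProduct, star_star, dotProduct_comm] at h
  exact h.trans_eq (congrArg (· * l2norm v) (l2norm_star u))

lemma l2norm_le_of_coercive {T : Matrix n n ℂ} {δ : ℝ}
    (h : ∀ x : n → ℂ, δ * ∑ k, ‖x k‖ ^ 2 ≤ (star x ⬝ᵥ (T *ᵥ x)).re) (x : n → ℂ) :
    δ * l2norm x ≤ l2norm (T *ᵥ x) := by
  have hcs := (h x).trans ((Complex.re_le_norm _).trans (norm_dotProduct_le (star x) (T *ᵥ x)))
  rw [← l2norm_sq, l2norm_star] at hcs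
  rcases (l2norm_nonneg x).eq_or_lt with h0 | hpos
  · rw [← h0, mul_zero]
    exact l2norm_nonneg _
  · nlinarith

variable [DecidableEq n]

lemma l2norm_mulVec_le (B : Matrix n n ℂ) (u : n → ℂ) : l2norm (B *ᵥ u) ≤ ‖B‖ * l2norm u :=
  Matrix.l2_opNorm_mulVec B (WithLp.toLp 2 u)

lemma l2_opNorm_le {B : Matrix n n ℂ} {c : ℝ} (hc : 0 ≤ c)
    (h : ∀ u, l2norm (B *ᵥ u) ≤ c * l2norm u) : ‖B‖ ≤ c := by
  rw [Matrix.l2_opNorm_def]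
  exact ContinuousLinearMap.opNorm_le_bound _ hc fun x => h (WithLp.ofLp x)

lemma l2_opNorm_one_le : ‖(1 : Matrix n n ℂ)‖ ≤ 1 :=
  l2_opNorm_le zero_le_one fun u => by rw [Matrix.one_mulVec, one_mul]

lemma norm_vecMulVec_le (u v : n → ℂ) : ‖Matrix.vecMulVec u v‖ ≤ l2norm u * l2norm v := by
  refine l2_opNorm_le (mul_nonneg (l2norm_nonneg _) (l2norm_nonneg _)) fun w => ?_
  rw [Matrix.vecMulVec_mulVec, op_smul_eq_smul, l2norm_smul]
  nlinarith [norm_dotProduct_le v w, l2norm_nonneg u]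

lemma det_ne_zero_of_coercive {T : Matrix n n ℂ} {δ : ℝ} (hδ : 0 < δ)
    (h : ∀ x : n → ℂ, δ * ∑ k, ‖x k‖ ^ 2 ≤ (star x ⬝ᵥ (T *ᵥ x)).re) : T.det ≠ 0 := by
  intro hdet
  obtain ⟨v, hv, hTv⟩ := Matrix.exists_mulVec_eq_zero_iff.mpr hdet
  have hle := l2norm_le_of_coercive h v
  rw [hTv, l2norm_eq_zero.mpr rfl] at hle
  exact hv (l2norm_eq_zero.mp (by nlinarith [l2norm_nonneg v]))

lemma norm_inv_le_of_coercive {T : Matrix n n ℂ} {δ : ℝ} (hδ : 0 < δ)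
    (h : ∀ x : n → ℂ, δ * ∑ k, ‖x k‖ ^ 2 ≤ (star x ⬝ᵥ (T *ᵥ x)).re) : ‖T⁻¹‖ ≤ 1 / δ := by
  refine l2_opNorm_le (by positivity) fun u => ?_
  have hle := l2norm_le_of_coercive h (T⁻¹ *ᵥ u)
  rw [Matrix.mulVec_mulVec, Matrix.mul_nonsing_inv _ (det_ne_zero_of_coercive hδ h).isUnit,
    Matrix.one_mulVec] at hle
  rw [div_mul_eq_mul_div, one_mul, le_div_iff₀ hδ]
  linarith

end L2Norm

section Nuclear

variable {n : Type*} [Fintype n] [DecidableEq n]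

/-- The nuclear (trace) norm of `F` is at most `c`; encoded through the duality of the nuclear
norm with the operator norm. -/
def NuclearNormLE (F : Matrix n n ℂ) (c : ℝ) : Prop :=
  ∀ B : Matrix n n ℂ, ‖B‖ ≤ 1 → ‖(B * F).trace‖ ≤ c

namespace NuclearNormLE

variable {F G : Matrix n n ℂ} {c d : ℝ}

lemma nonneg (h : NuclearNormLE F c) : 0 ≤ c := by
  simpa using h 0 (by simp)

lemma norm_trace_mul_le (h : NuclearNormLE F c) (B : Matrix n n ℂ) :
    ‖(B * F).trace‖ ≤ ‖B‖ * c := by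
  rcases eq_or_ne B 0 with rfl | hB
  · simp
  · have hpos : 0 < ‖B‖ := norm_pos_iff.mpr hB
    have hunit : ‖((‖B‖⁻¹ : ℝ) : ℂ) • B‖ = 1 := by
      rw [norm_smul, Complex.norm_real, norm_inv, norm_norm, inv_mul_cancel₀ hpos.ne']
    have h1 := h _ hunit.le
    rw [Matrix.smul_mul, Matrix.trace_smul, norm_smul, Complex.norm_real, norm_inv, norm_norm]
      at h1
    rwa [inv_mul_le_iff₀ hpos] at h1

lemma mono (h : NuclearNormLE F c) (hcd : c ≤ d) : NuclearNormLE F d :=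
  fun B hB => (h B hB).trans hcd

lemma add (h : NuclearNormLE F c) (h' : NuclearNormLE G d) : NuclearNormLE (F + G) (c + d) :=
  fun B hB => by
    rw [Matrix.mul_add, Matrix.trace_add]
    exact (norm_add_le _ _).trans (add_le_add (h B hB) (h' B hB))

lemma smul (h : NuclearNormLE F c) (z : ℂ) : NuclearNormLE (z • F) (‖z‖ * c) :=
  fun B hB => by
    rw [Matrix.mul_smul, Matrix.trace_smul, norm_smul]
    exact mul_le_mul_of_nonneg_left (h B hB) (norm_nonneg _)

lemma neg (h : NuclearNormLE F c) : NuclearNormLE (-F) c := fun B hB => by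
  rw [Matrix.mul_neg, Matrix.trace_neg, norm_neg]
  exact h B hB

lemma sum {ι : Type*} {s : Finset ι} {F : ι → Matrix n n ℂ} {c : ι → ℝ}
    (h : ∀ i ∈ s, NuclearNormLE (F i) (c i)) :
    NuclearNormLE (∑ i ∈ s, F i) (∑ i ∈ s, c i) := fun B hB => by
  rw [Matrix.mul_sum, Matrix.trace_sum]
  exact (norm_sum_le _ _).trans (Finset.sum_le_sum fun i hi => h i hi B hB)

lemma mul_left (h : NuclearNormLE F c) (G : Matrix n n ℂ) : NuclearNormLE (G * F) (‖G‖ * c) :=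
  fun B hB => by
    rw [← Matrix.mul_assoc]
    refine (h.norm_trace_mul_le _).trans (mul_le_mul_of_nonneg_right ?_ h.nonneg)
    exact (norm_mul_le B G).trans (mul_le_of_le_one_left (norm_nonneg _) hB)

lemma mul_right (h : NuclearNormLE F c) (G : Matrix n n ℂ) : NuclearNormLE (F * G) (‖G‖ * c) :=
  fun B hB => by
    rw [← Matrix.mul_assoc, Matrix.trace_mul_comm, ← Matrix.mul_assoc]
    refine (h.norm_trace_mul_le _).trans (mul_le_mul_of_nonneg_right ?_ h.nonneg)
    exact (norm_mul_le G B).trans (mul_le_of_le_one_right (norm_nonneg _) hB)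

lemma vecMulVec (u v : n → ℂ) : NuclearNormLE (Matrix.vecMulVec u v) (l2norm u * l2norm v) :=
  fun B hB => by
    rw [Matrix.mul_vecMulVec, Matrix.trace_vecMulVec, dotProduct_comm]
    have hBu : l2norm (B *ᵥ u) ≤ l2norm u :=
      (l2norm_mulVec_le B u).trans (mul_le_of_le_one_left (l2norm_nonneg _) hB)
    nlinarith [norm_dotProduct_le v (B *ᵥ u), l2norm_nonneg v]

lemma of_hasSum {F : ℕ → Matrix n n ℂ} {F₀ : Matrix n n ℂ} {c : ℕ → ℝ} {c₀ : ℝ}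
    (hF : ∀ j k, HasSum (fun l => F l j k) (F₀ j k)) (hc : HasSum c c₀)
    (h : ∀ l, NuclearNormLE (F l) (c l)) : NuclearNormLE F₀ c₀ := fun B hB => by
  have htrace : HasSum (fun l => (B * F l).trace) ((B * F₀).trace) := by
    simp only [Matrix.trace, Matrix.diag_apply, Matrix.mul_apply]
    exact hasSum_sum fun i _ => hasSum_sum fun j _ => (hF j i).mul_left _
  exact htrace.norm_le_of_bounded hc fun l => h l B hB

lemma norm_le (h : NuclearNormLE F c) : ‖F‖ ≤ c := by
  refine l2_opNorm_le h.nonneg fun u => ?_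
  have htrace : (Matrix.vecMulVec u (star (F *ᵥ u)) * F).trace =
      ((l2norm (F *ᵥ u) ^ 2 : ℝ) : ℂ) := by
    rw [Matrix.trace_mul_comm, Matrix.mul_vecMulVec, Matrix.trace_vecMulVec, l2norm_sq]
    simp only [dotProduct, Pi.star_apply, RCLike.star_def, Complex.mul_conj']
    push_cast
    rfl
  have hle := h.norm_trace_mul_le (Matrix.vecMulVec u (star (F *ᵥ u)))
  rw [htrace, Complex.norm_real, Real.norm_of_nonneg (sq_nonneg _)] at hle
  have hnorm := norm_vecMulVec_le u (star (F *ᵥ u))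
  rw [l2norm_star] at hnorm
  have hsq := hle.trans (mul_le_mul_of_nonneg_right hnorm h.nonneg)
  rcases (l2norm_nonneg (F *ᵥ u)).eq_or_lt with h0 | hpos
  · rw [← h0]
    exact mul_nonneg h.nonneg (l2norm_nonneg _)
  · nlinarith

end NuclearNormLE

lemma norm_det_le_exp_trace {P : Matrix n n ℂ} (hP : P.PosSemidef) :
    ‖P.det‖ ≤ Real.exp (P.trace.re - Fintype.card n) := by
  have htrace : P.trace.re = ∑ i, hP.isHermitian.eigenvalues i := by
    rw [hP.isHermitian.trace_eq_sum_eigenvalues]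
    simp
  have hdet : ‖P.det‖ = ∏ i, hP.isHermitian.eigenvalues i := by
    rw [hP.isHermitian.det_eq_prod_eigenvalues, norm_prod]
    exact Finset.prod_congr rfl fun i _ => RCLike.norm_of_nonneg (hP.eigenvalues_nonneg i)
  have hsum : P.trace.re - Fintype.card n = ∑ i, (hP.isHermitian.eigenvalues i - 1) := by
    simp [htrace]
  rw [hdet, hsum, Real.exp_sum]
  refine Finset.prod_le_prod (fun i _ => hP.eigenvalues_nonneg i) fun i _ => ?_
  linarith [Real.add_one_le_exp (hP.isHermitian.eigenvalues i - 1)]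

namespace NuclearNormLE

variable {F : Matrix n n ℂ} {c : ℝ}

lemma re_trace_conjTranspose_mul_self_le (h : NuclearNormLE F c) :
    ((1 + F)ᴴ * (1 + F)).trace.re ≤ Fintype.card n + 2 * c + c ^ 2 := by
  have hexpand : (1 + F)ᴴ * (1 + F) = 1 + F + Fᴴ + Fᴴ * F := by
    rw [Matrix.conjTranspose_add, Matrix.conjTranspose_one]
    noncomm_ring
  have htrace : F.trace.re ≤ c := by
    refine (Complex.re_le_norm _).trans ?_
    simpa using h 1 l2_opNorm_one_le
  have htrace_sq : (Fᴴ * F).trace.re ≤ c * c := by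
    refine (Complex.re_le_norm _).trans ((h.norm_trace_mul_le _).trans ?_)
    rw [Matrix.l2_opNorm_conjTranspose]
    exact mul_le_mul_of_nonneg_right h.norm_le h.nonneg
  rw [hexpand, Matrix.trace_add, Matrix.trace_add, Matrix.trace_add, Matrix.trace_one,
    Matrix.trace_conjTranspose]
  simp only [Complex.add_re, Complex.natCast_re, RCLike.star_def, Complex.conj_re]
  nlinarith

lemma norm_det_one_add_le (h : NuclearNormLE F c) :
    ‖(1 + F).det‖ ≤ Real.exp (c + c ^ 2 / 2) := by
  have hdet : ‖(1 + F).det‖ ^ 2 = ‖((1 + F)ᴴ * (1 + F)).det‖ := by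
    rw [Matrix.det_mul, Matrix.det_conjTranspose, norm_mul, norm_star, sq]
  refine (sq_le_sq₀ (norm_nonneg _) (Real.exp_pos _).le).mp ?_
  rw [hdet, ← Real.exp_nat_mul]
  refine (norm_det_le_exp_trace (Matrix.posSemidef_conjTranspose_mul_self _)).trans
    (Real.exp_le_exp.mpr ?_)
  push_cast
  linarith [h.re_trace_conjTranspose_mul_self_le]

lemma det_one_add_ne_zero (h : NuclearNormLE F c) (hc : c < 1) : (1 + F).det ≠ 0 := by
  have hF : ‖-F‖ < 1 := by
    rw [norm_neg]
    exact h.norm_le.trans_lt hc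
  have hunit := (Units.oneSub (-F) hF).isUnit
  rw [Units.val_oneSub, sub_neg_eq_add] at hunit
  exact ((Matrix.isUnit_iff_isUnit_det _).mp hunit).ne_zero

lemma norm_inv_one_add_le (h : NuclearNormLE F c) (hc : c ≤ 1 / 2) : ‖(1 + F)⁻¹‖ ≤ 2 := by
  have hunit := (h.det_one_add_ne_zero (by linarith)).isUnit
  have hinv : (1 + F)⁻¹ = 1 - F * (1 + F)⁻¹ := by
    have hmul := Matrix.mul_nonsing_inv _ hunit
    rw [Matrix.add_mul, Matrix.one_mul] at hmul
    exact eq_sub_of_add_eq hmul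
  have hle : ‖(1 + F)⁻¹‖ ≤ 1 + ‖F‖ * ‖(1 + F)⁻¹‖ :=
    calc ‖(1 + F)⁻¹‖ = ‖1 - F * (1 + F)⁻¹‖ := congrArg norm hinv
      _ ≤ ‖(1 : Matrix n n ℂ)‖ + ‖F * (1 + F)⁻¹‖ := norm_sub_le _ _
      _ ≤ _ := add_le_add l2_opNorm_one_le (norm_mul_le _ _)
  nlinarith [h.norm_le, norm_nonneg (1 + F)⁻¹]

lemma abs_log_norm_det_one_add_le (h : NuclearNormLE F c) (hc : c ≤ 1 / 2) :
    |Real.log ‖(1 + F).det‖| ≤ 4 * c := by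
  have hdet := h.det_one_add_ne_zero (by linarith)
  have hpos : 0 < ‖(1 + F).det‖ := norm_pos_iff.mpr hdet
  have hinv : (1 + F)⁻¹ = 1 + -((1 + F)⁻¹ * F) := by
    have hmul := Matrix.nonsing_inv_mul _ hdet.isUnit
    rw [Matrix.mul_add, Matrix.mul_one] at hmul
    rw [← sub_eq_add_neg]
    exact eq_sub_of_add_eq hmul
  have hnuc : NuclearNormLE (-((1 + F)⁻¹ * F)) (2 * c) :=
    ((h.mul_left _).neg).mono (mul_le_mul_of_nonneg_right (h.norm_inv_one_add_le hc) h.nonneg)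
  have hlower := hnuc.norm_det_one_add_le
  rw [← hinv, Matrix.det_nonsing_inv, Ring.inverse_eq_inv', norm_inv,
    ← Real.log_le_iff_le_exp (inv_pos.mpr hpos), Real.log_inv] at hlower
  have hupper := h.norm_det_one_add_le
  rw [← Real.log_le_iff_le_exp hpos] at hupper
  rw [abs_le]
  constructor <;> nlinarith [h.nonneg]

end NuclearNormLE

/-- The finite-rank matrix `∑ t, k t • U_t V_tᵀ`. -/
def sumRankOne {r : Type*} [Fintype r] (k : r → ℂ) (U V : r → n → ℂ) : Matrix n n ℂ :=
  ∑ t, k t • Matrix.vecMulVec (U t) (V t)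

variable {r : Type*} [Fintype r]

lemma det_one_add_sumRankOne_mul [DecidableEq r] (k : r → ℂ) (U V : r → n → ℂ) (G : Matrix n n ℂ) :
    (1 + sumRankOne k U V * G).det =
      (1 + Matrix.of fun s t => k s * (V s ⬝ᵥ (G *ᵥ U t))).det := by
  have hfactor : sumRankOne k U V =
      (Matrix.of fun i t => U t i) * (Matrix.of fun t i => k t * V t i) := by
    ext i j
    simp only [sumRankOne, Matrix.sum_apply, Matrix.smul_apply, Matrix.vecMulVec_apply,
      Matrix.mul_apply, Matrix.of_apply, smul_eq_mul]
    exact Finset.sum_congr rfl fun t _ => by ring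
  rw [hfactor, Matrix.mul_assoc, Matrix.det_one_add_mul_comm, Matrix.mul_assoc]
  congr 2
  ext s t
  simp only [Matrix.mul_apply, Matrix.of_apply, dotProduct, Matrix.mulVec, Finset.mul_sum]
  exact Finset.sum_congr rfl fun i _ => Finset.sum_congr rfl fun j _ => by ring

lemma norm_det_one_add_sumRankOne_mul_le {k : r → ℂ} {U V : r → n → ℂ} (G : Matrix n n ℂ)
    {κ : ℝ} (h : ∀ s t, ‖k s‖ * (l2norm (V s) * l2norm (U t)) ≤ κ) :
    ‖(1 + sumRankOne k U V * G).det‖ ≤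
      (Fintype.card r).factorial * (1 + κ * ‖G‖) ^ Fintype.card r := by
  classical
  rw [det_one_add_sumRankOne_mul, ← nsmul_eq_mul]
  refine Matrix.det_le (abv := NormedField.toAbsoluteValue ℂ) fun s t => ?_
  change ‖(1 + Matrix.of fun s t => k s * (V s ⬝ᵥ (G *ᵥ U t))) s t‖ ≤ _
  rw [Matrix.add_apply]
  refine (norm_add_le _ _).trans (add_le_add ?_ ?_)
  · rw [Matrix.one_apply]
    split_ifs <;> simp
  · have hdot : ‖V s ⬝ᵥ (G *ᵥ U t)‖ ≤ l2norm (V s) * (‖G‖ * l2norm (U t)) :=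
      (norm_dotProduct_le _ _).trans
        (mul_le_mul_of_nonneg_left (l2norm_mulVec_le G _) (l2norm_nonneg _))
    calc ‖k s * (V s ⬝ᵥ (G *ᵥ U t))‖ ≤ ‖k s‖ * (l2norm (V s) * (‖G‖ * l2norm (U t))) := by
          rw [norm_mul]
          exact mul_le_mul_of_nonneg_left hdot (norm_nonneg _)
      _ = ‖k s‖ * (l2norm (V s) * l2norm (U t)) * ‖G‖ := by ring
      _ ≤ κ * ‖G‖ := mul_le_mul_of_nonneg_right (h s t) (norm_nonneg _)

lemma norm_det_one_add_sumRankOne_add_mul_le {k : r → ℂ} {U V : r → n → ℂ} {E G : Matrix n n ℂ}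
    {κ ε D : ℝ} (hκ : 0 ≤ κ) (hD : ‖G‖ ≤ D)
    (h : ∀ s t, ‖k s‖ * (l2norm (V s) * l2norm (U t)) ≤ κ)
    (hE : NuclearNormLE E ε) (hεD : D * ε ≤ 1 / 2) :
    ‖(1 + (sumRankOne k U V + E) * G).det‖ ≤
      Real.exp 1 * ((Fintype.card r).factorial * (1 + κ * (2 * D)) ^ Fintype.card r) := by
  have hEG : NuclearNormLE (E * G) (1 / 2) :=
    (hE.mul_right G).mono ((mul_le_mul_of_nonneg_right hD hE.nonneg).trans hεD)
  have hunit := (hEG.det_one_add_ne_zero (by norm_num)).isUnit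
  have hfactor : 1 + (sumRankOne k U V + E) * G =
      (1 + sumRankOne k U V * (G * (1 + E * G)⁻¹)) * (1 + E * G) := by
    rw [Matrix.add_mul (sumRankOne k U V) E G, Matrix.add_mul (1 : Matrix n n ℂ), Matrix.one_mul,
      Matrix.mul_assoc (sumRankOne k U V), Matrix.mul_assoc G, Matrix.nonsing_inv_mul _ hunit,
      Matrix.mul_one]
    abel
  have hnorm : ‖G * (1 + E * G)⁻¹‖ ≤ 2 * D := by
    refine (norm_mul_le _ _).trans ?_
    nlinarith [norm_nonneg G, norm_nonneg (1 + E * G)⁻¹, hEG.norm_inv_one_add_le le_rfl]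
  rw [hfactor, Matrix.det_mul, norm_mul, mul_comm]
  refine mul_le_mul ?_ ?_ (norm_nonneg _) (Real.exp_pos _).le
  · exact hEG.norm_det_one_add_le.trans (Real.exp_le_exp.mpr (by norm_num))
  · refine (norm_det_one_add_sumRankOne_mul_le _ h).trans ?_
    gcongr

end Nuclear

/-- A bounded symbol that is bounded below by `δ > 0`; its Toeplitz matrices are uniformly
invertible. -/
structure CoerciveSymbol (a : ℝ → ℝ) (δ : ℝ) : Prop where
  memLp : MemLp a ⊤ periodMeasure
  pos : 0 < δ
  le : ∀ᵐ t ∂periodMeasure, δ ≤ a t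

namespace CoerciveSymbol

variable {a : ℝ → ℝ} {δ : ℝ}

lemma le_re_star_dotProduct (h : CoerciveSymbol a δ) {N : ℕ} (x : Fin N → ℂ) :
    δ * ∑ k, ‖x k‖ ^ 2 ≤ (star x ⬝ᵥ (toeplitz a N *ᵥ x)).re :=
  le_re_star_dotProduct_toeplitz_mulVec h.memLp h.le x

lemma det_toeplitz_ne_zero (h : CoerciveSymbol a δ) (N : ℕ) : (toeplitz a N).det ≠ 0 :=
  det_ne_zero_of_coercive h.pos h.le_re_star_dotProduct

lemma norm_inv_toeplitz_le (h : CoerciveSymbol a δ) (N : ℕ) : ‖(toeplitz a N)⁻¹‖ ≤ 1 / δ :=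
  norm_inv_le_of_coercive h.pos h.le_re_star_dotProduct

end CoerciveSymbol

/-! ### Summation by parts and finite-rank approximation -/

section SummationByParts

variable {ω : Circle} {h : ℕ → ℂ}

lemma summable_pow_mul (ω : Circle) (hh : Summable h) : Summable fun l => (ω : ℂ) ^ l * h l := by
  refine Summable.of_norm ?_
  simpa only [norm_mul, norm_pow, Circle.norm_coe, one_pow, one_mul] using hh.norm

lemma summable_fwdDiff_iter (hh : Summable h) (p : ℕ) : Summable ((fwdDiff 1)^[p] h) := by
  induction p with
  | zero => exact hh
  | succ p ih =>
    rw [Function.iterate_succ_apply']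
    exact ((summable_nat_add_iff 1).mpr ih).sub ih

lemma summable_pow_add_mul (ω : Circle) (hh : Summable h) (M : ℕ) :
    Summable fun l => (ω : ℂ) ^ (M + l) * h (M + l) := by
  simpa only [add_comm M] using (summable_nat_add_iff M).mpr (summable_pow_mul ω hh)

lemma one_sub_coe_ne_zero (hω : ω ≠ 1) : (1 : ℂ) - ω ≠ 0 :=
  sub_ne_zero.mpr fun h => hω (Circle.ext h.symm)

lemma tsum_pow_mul_eq_fwdDiff (hω : ω ≠ 1) (hh : Summable h) (M : ℕ) :
    ∑' l, (ω : ℂ) ^ (M + l) * h (M + l) = (ω : ℂ) ^ M / (1 - ω) * h M +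
      ω / (1 - ω) * ∑' l, (ω : ℂ) ^ (M + l) * fwdDiff 1 h (M + l) := by
  have hne := one_sub_coe_ne_zero hω
  have hsum := summable_pow_add_mul ω hh M
  have hsum' : Summable fun l => (ω : ℂ) ^ (M + (l + 1)) * h (M + (l + 1)) :=
    (summable_nat_add_iff 1).mpr hsum
  have hhead := hsum.tsum_eq_zero_add
  have hdiff : ω * ∑' l, (ω : ℂ) ^ (M + l) * fwdDiff 1 h (M + l) =
      (∑' l, (ω : ℂ) ^ (M + (l + 1)) * h (M + (l + 1))) -
        ω * ∑' l, (ω : ℂ) ^ (M + l) * h (M + l) := by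
    rw [← tsum_mul_left, ← tsum_mul_left, ← hsum'.tsum_sub (hsum.mul_left (ω : ℂ))]
    refine tsum_congr fun l => ?_
    rw [fwdDiff, add_assoc]
    ring
  rw [div_mul_eq_mul_div (ω : ℂ), hdiff]
  rw [add_zero] at hhead
  field_simp
  linear_combination hhead

lemma tsum_pow_mul_eq_fwdDiff_iter (hω : ω ≠ 1) (hh : Summable h) (p M : ℕ) :
    ∑' l, (ω : ℂ) ^ (M + l) * h (M + l) =
      (ω : ℂ) ^ M / (1 - ω) * ∑ i ∈ Finset.range p, (ω / (1 - ω) : ℂ) ^ i * (fwdDiff 1)^[i] h M +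
      (ω / (1 - ω) : ℂ) ^ p * ∑' l, (ω : ℂ) ^ (M + l) * (fwdDiff 1)^[p] h (M + l) := by
  induction p with
  | zero => simp
  | succ p ih =>
    rw [ih, tsum_pow_mul_eq_fwdDiff hω (summable_fwdDiff_iter hh p), Finset.sum_range_succ,
      Function.iterate_succ_apply']
    ring

lemma exists_sum_fwdDiff_iter_eq (A : ℂ) (p : ℕ) : ∃ γ : ℕ → ℂ, ∃ C : ℝ, (∀ k, ‖γ k‖ ≤ C) ∧
    ∀ (h : ℕ → ℂ) (M : ℕ), ∑ i ∈ Finset.range p, A ^ i * (fwdDiff 1)^[i] h M =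
      ∑ k ∈ Finset.range p, γ k * h (M + k) := by
  refine ⟨fun k => ∑ i ∈ Finset.range p, A ^ i * ((-1) ^ (i - k) * i.choose k),
    ∑ i ∈ Finset.range p, ‖A‖ ^ i * 2 ^ i, fun k => ?_, fun h M => ?_⟩
  · refine (norm_sum_le _ _).trans (Finset.sum_le_sum fun i _ => ?_)
    rw [norm_mul, norm_mul, norm_pow, norm_pow, norm_neg, norm_one, one_pow, one_mul,
      Complex.norm_natCast]
    gcongr
    exact_mod_cast Nat.choose_le_two_pow i k
  · simp only [Finset.sum_mul]
    rw [Finset.sum_comm]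
    refine Finset.sum_congr rfl fun i hi => ?_
    rw [fwdDiff_iter_eq_sum_shift, Finset.mul_sum]
    refine (Finset.sum_subset (Finset.range_subset_range.mpr (Finset.mem_range.mp hi))
      fun k _ hk => ?_).trans (Finset.sum_congr rfl fun k _ => ?_)
    · rw [Nat.choose_eq_zero_of_lt (by simpa using hk)]
      simp
    · simp only [smul_eq_mul, mul_one, zsmul_eq_mul]
      push_cast
      ring

lemma exists_summation_by_parts (hω : ω ≠ 1) (p : ℕ) : ∃ C : ℝ, 0 ≤ C ∧ ∀ M : ℕ, ∃ κ : ℕ → ℂ,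
    (∀ l, ‖κ l‖ ≤ C) ∧ ∀ h : ℕ → ℂ, Summable h →
      ∑' l, (ω : ℂ) ^ l * h l = ∑ l ∈ Finset.range (M + p), κ l * h l +
        (ω / (1 - ω) : ℂ) ^ p * ∑' l, (ω : ℂ) ^ (M + l) * (fwdDiff 1)^[p] h (M + l) := by
  obtain ⟨γ, C, hγ, hsum⟩ := exists_sum_fwdDiff_iter_eq (ω / (1 - ω)) p
  have hC : 0 ≤ C := (norm_nonneg _).trans (hγ 0)
  refine ⟨1 + ‖(1 - ω : ℂ)‖⁻¹ * C, by positivity, fun M => ⟨fun l =>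
    if l < M then (ω : ℂ) ^ l else ω ^ M / (1 - ω) * γ (l - M), fun l => ?_, fun h hh => ?_⟩⟩
  · dsimp only
    split_ifs
    · rw [norm_pow, Circle.norm_coe, one_pow]
      exact le_add_of_nonneg_right (by positivity)
    · rw [norm_mul, norm_div, norm_pow, Circle.norm_coe, one_pow, one_div]
      exact (mul_le_mul_of_nonneg_left (hγ _) (by positivity)).trans
        (le_add_of_nonneg_left zero_le_one)
  · have hhead : ∑ l ∈ Finset.range M,
        (if l < M then (ω : ℂ) ^ l else ω ^ M / (1 - ω) * γ (l - M)) * h l =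
        ∑ l ∈ Finset.range M, (ω : ℂ) ^ l * h l :=
      Finset.sum_congr rfl fun l hl => by rw [if_pos (Finset.mem_range.mp hl)]
    rw [← (summable_pow_mul ω hh).sum_add_tsum_nat_add M]
    simp only [add_comm _ M]
    rw [tsum_pow_mul_eq_fwdDiff_iter hω hh p M, hsum, Finset.sum_range_add, hhead, Finset.mul_sum,
      add_assoc]
    congr 2
    refine Finset.sum_congr rfl fun k _ => ?_
    rw [if_neg (by omega), Nat.add_sub_cancel_left, mul_assoc]

end SummationByParts

section DecayingVectors

lemma le_norm_add_mul_I (a m : ℝ) : a ≤ ‖(a + m * Complex.I : ℂ)‖ := by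
  simpa using Complex.re_le_norm (a + m * Complex.I : ℂ)

lemma add_mul_I_ne_zero {a : ℝ} (ha : 0 < a) (m : ℝ) : (a + m * Complex.I : ℂ) ≠ 0 :=
  norm_pos_iff.mp (ha.trans_le (le_norm_add_mul_I a m))

/-- The sequences `z ^ j / ((j + l + 1 + i m) ⋯ (j + l + q + 1 + i m))`. The Fourier coefficients
of a jump symbol are of this form with `q = 0`, and raising `q` by one corresponds to taking a
difference in `l`. -/
def decayTerm (z : Circle) (m : ℝ) (q l j : ℕ) : ℂ :=
  (z : ℂ) ^ j / ∏ i ∈ Finset.range (q + 1), ((j + l + i + 1 : ℝ) + m * Complex.I : ℂ)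

lemma norm_decayTerm_le (z : Circle) (m : ℝ) (q l j : ℕ) :
    ‖decayTerm z m q l j‖ ≤ 1 / ((l + 1 : ℝ) ^ q * (j + l + 1)) := by
  rw [decayTerm, norm_div, norm_pow, Circle.norm_coe, one_pow, norm_prod, Finset.prod_range_succ']
  refine one_div_le_one_div_of_le (by positivity) (mul_le_mul ?_ ?_ (by positivity)
    (Finset.prod_nonneg fun i _ => norm_nonneg _))
  · calc (l + 1 : ℝ) ^ q = ∏ _i ∈ Finset.range q, (l + 1 : ℝ) := by simp
      _ ≤ _ := Finset.prod_le_prod (fun i _ => by positivity) fun i _ =>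
        le_trans (by push_cast; linarith [i.cast_nonneg (α := ℝ), j.cast_nonneg (α := ℝ)])
          (le_norm_add_mul_I _ m)
  · exact le_trans (by push_cast; linarith) (le_norm_add_mul_I _ m)

lemma decayTerm_succ_sub (z : Circle) (m : ℝ) (q l j : ℕ) :
    decayTerm z m q (l + 1) j - decayTerm z m q l j =
      -(q + 1 : ℂ) * decayTerm z m (q + 1) l j := by
  have hfirst : ∏ i ∈ Finset.range (q + 1 + 1), ((j + l + i + 1 : ℝ) + m * Complex.I : ℂ) =
      (∏ i ∈ Finset.range (q + 1), ((j + (l + 1 : ℕ) + i + 1 : ℝ) + m * Complex.I : ℂ)) *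
        ((j + l + 1 : ℝ) + m * Complex.I : ℂ) := by
    rw [Finset.prod_range_succ']
    congr 1
    · refine Finset.prod_congr rfl fun i _ => ?_
      push_cast
      ring
    · push_cast
      ring
  have hlast := Finset.prod_range_succ
    (fun i : ℕ => ((j + l + i + 1 : ℝ) + m * Complex.I : ℂ)) (q + 1)
  have hfirst_ne := add_mul_I_ne_zero (a := j + l + 1) (by positivity) m
  have hlast_ne := add_mul_I_ne_zero (a := j + l + (q + 1 : ℕ) + 1) (by positivity) m
  have hprod_ne : ∏ i ∈ Finset.range (q + 1 + 1), ((j + l + i + 1 : ℝ) + m * Complex.I : ℂ) ≠ 0 :=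
    Finset.prod_ne_zero_iff.mpr fun i _ => add_mul_I_ne_zero (by positivity) _
  simp only [decayTerm]
  rw [eq_div_of_mul_eq hfirst_ne hfirst.symm, eq_div_of_mul_eq hlast_ne hlast.symm]
  push_cast at hfirst_ne hlast_ne hprod_ne ⊢
  field_simp
  ring

/-- The distance of the index `j` from the right (`σ = true`) or left (`σ = false`) end of
`{0, …, N - 1}`. -/
def endDist {N : ℕ} (σ : Bool) (j : Fin N) : ℕ := if σ then (Fin.rev j : ℕ) else (j : ℕ)

lemma sum_endDist {N : ℕ} (σ : Bool) (F : ℕ → ℝ) :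
    ∑ j : Fin N, F (endDist σ j) = ∑ j ∈ Finset.range N, F j := by
  rw [← Fin.sum_univ_eq_sum_range]
  cases σ
  · rfl
  · exact Equiv.sum_comp Fin.revPerm fun j : Fin N => F j

lemma sum_sq_one_div_add_le {L : ℝ} (hL : 1 ≤ L) (N : ℕ) :
    ∑ j ∈ Finset.range N, (1 / ((j : ℝ) + L)) ^ 2 ≤ 2 / L - 2 / (N + L) := by
  induction N with
  | zero => simp
  | succ N ih =>
    have hstep : (1 / ((N : ℝ) + L)) ^ 2 ≤ 2 / (N + L) - 2 / (N + L + 1) := by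
      have hy : 1 ≤ (N : ℝ) + L := hL.trans (le_add_of_nonneg_left N.cast_nonneg)
      rw [div_sub_div _ _ (by positivity) (by positivity), div_pow,
        div_le_div_iff₀ (by positivity) (by positivity)]
      nlinarith [hy]
    rw [Finset.sum_range_succ]
    push_cast
    rw [add_right_comm]
    linarith

/-- The first `N` terms of the sequence `u`, placed on `{0, …, N - 1}` starting from the
right (`σ = true`) or left (`σ = false`) end. -/
def endVec (N : ℕ) (σ : Bool) (u : ℕ → ℂ) : Fin N → ℂ := fun j => u (endDist σ j)

/-- The vector on `{0, …, N - 1}` with entries `decayTerm`, decaying away from the end `σ`. -/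
def decayVec (N : ℕ) (σ : Bool) (z : Circle) (m : ℝ) (q l : ℕ) : Fin N → ℂ :=
  endVec N σ (decayTerm z m q l)

variable (N : ℕ) (σ : Bool) (z z' : Circle) (m m' : ℝ)

lemma l2norm_decayVec_sq_le (q l : ℕ) :
    l2norm (decayVec N σ z m q l) ^ 2 ≤ 2 / (l + 1 : ℝ) ^ (2 * q + 1) := by
  have hentry : ∀ j : Fin N, ‖decayVec N σ z m q l j‖ ^ 2 ≤
      (1 / (l + 1 : ℝ) ^ (2 * q)) * (1 / ((endDist σ j : ℝ) + (l + 1))) ^ 2 := fun j => by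
    refine (pow_le_pow_left₀ (norm_nonneg _)
      (norm_decayTerm_le z m q l (endDist σ j)) 2).trans_eq ?_
    rw [pow_mul' (l + 1 : ℝ), ← add_assoc]
    field_simp
  have hsum := sum_sq_one_div_add_le (L := l + 1) (by linarith [l.cast_nonneg (α := ℝ)]) N
  rw [l2norm_sq]
  refine (Finset.sum_le_sum fun j _ => hentry j).trans ?_
  rw [← Finset.mul_sum, sum_endDist σ fun j => (1 / ((j : ℝ) + (l + 1))) ^ 2]
  calc _ ≤ (1 / (l + 1 : ℝ) ^ (2 * q)) * (2 / (l + 1)) :=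
        mul_le_mul_of_nonneg_left (hsum.trans (sub_le_self _ (by positivity))) (by positivity)
    _ = _ := by rw [div_mul_div_comm, one_mul, pow_succ]

lemma l2norm_decayVec_le_two (q l : ℕ) : l2norm (decayVec N σ z m q l) ≤ 2 := by
  have h2 : 2 / (l + 1 : ℝ) ^ (2 * q + 1) ≤ 2 :=
    div_le_self zero_le_two (one_le_pow₀ (by linarith [l.cast_nonneg (α := ℝ)]))
  nlinarith [l2norm_decayVec_sq_le N σ z m q l]

lemma l2norm_decayVec_mul_le (q r a b l : ℕ) :
    l2norm (decayVec N σ z m q (l + a)) * l2norm (decayVec N σ z' m' r (l + b)) ≤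
      2 / (l + 1 : ℝ) ^ (q + r + 1) := by
  have hshift : ∀ (z : Circle) (m : ℝ) (q a : ℕ),
      l2norm (decayVec N σ z m q (l + a)) ^ 2 ≤ 2 / (l + 1 : ℝ) ^ (2 * q + 1) := fun z m q a => by
    refine (l2norm_decayVec_sq_le N σ z m q (l + a)).trans ?_
    push_cast
    gcongr
    exact le_add_of_nonneg_right a.cast_nonneg
  refine (sq_le_sq₀ (mul_nonneg (l2norm_nonneg _) (l2norm_nonneg _)) (by positivity)).mp ?_
  calc _ = l2norm (decayVec N σ z m q (l + a)) ^ 2 *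
        l2norm (decayVec N σ z' m' r (l + b)) ^ 2 := mul_pow _ _ _
    _ ≤ (2 / (l + 1 : ℝ) ^ (2 * q + 1)) * (2 / (l + 1 : ℝ) ^ (2 * r + 1)) :=
        mul_le_mul (hshift z m q a) (hshift z' m' r b) (by positivity) (by positivity)
    _ = _ := by
      rw [div_mul_div_comm, ← pow_add, div_pow, ← pow_mul]
      ring_nf

/-- The rank-one matrices built from two decaying vectors. -/
def decayRankOne (q r a b l : ℕ) : Matrix (Fin N) (Fin N) ℂ :=
  Matrix.vecMulVec (decayVec N σ z m q (l + a)) (decayVec N σ z' m' r (l + b))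

lemma fwdDiff_decayRankOne (q r a b : ℕ) :
    fwdDiff 1 (decayRankOne N σ z z' m m' q r a b) =
      (-(q + 1 : ℂ)) • decayRankOne N σ z z' m m' (q + 1) r a (b + 1) +
        (-(r + 1 : ℂ)) • decayRankOne N σ z z' m m' q (r + 1) a b := by
  funext l
  ext j k
  have hj := decayTerm_succ_sub z m q (l + a) (endDist σ j)
  have hk := decayTerm_succ_sub z' m' r (l + b) (endDist σ k)
  simp only [fwdDiff, decayRankOne, Matrix.sub_apply, Matrix.vecMulVec_apply, decayVec, endVec,
    Pi.add_apply, Pi.smul_apply, Matrix.add_apply, Matrix.smul_apply, smul_eq_mul]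
  rw [add_right_comm l 1 a, add_right_comm l 1 b, ← add_assoc l b 1, ← mul_assoc, ← hj,
    mul_left_comm, ← hk]
  ring

/-- The constant in the nuclear bound for the `p`-th difference of `decayRankOne`. -/
def iterDiffConst : ℕ → ℕ → ℕ → ℝ
  | 0, _, _ => 2
  | p + 1, q, r => (q + 1) * iterDiffConst p (q + 1) r + (r + 1) * iterDiffConst p q (r + 1)

lemma nuclearNormLE_fwdDiff_iter_decayRankOne (p q r a b l : ℕ) :
    NuclearNormLE (((fwdDiff 1)^[p] (decayRankOne N σ z z' m m' q r a b)) l)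
      (iterDiffConst p q r / (l + 1 : ℝ) ^ (q + r + p + 1)) := by
  induction p generalizing q r a b with
  | zero =>
    exact (NuclearNormLE.vecMulVec _ _).mono (l2norm_decayVec_mul_le N σ z z' m m' q r a b l)
  | succ p ih =>
    have hnorm : ∀ q : ℕ, ‖(-(q + 1 : ℂ))‖ = q + 1 := fun q => by
      rw [norm_neg]
      exact_mod_cast Complex.norm_natCast (q + 1)
    rw [Function.iterate_succ_apply, fwdDiff_decayRankOne, fwdDiff_iter_add,
      fwdDiff_iter_const_smul, fwdDiff_iter_const_smul]
    refine (((ih (q + 1) r a (b + 1)).smul (-(q + 1 : ℂ))).add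
      ((ih q (r + 1) a b).smul (-(r + 1 : ℂ)))).mono (le_of_eq ?_)
    rw [hnorm, hnorm, iterDiffConst, show q + 1 + r + p + 1 = q + r + (p + 1) + 1 by ring,
      show q + (r + 1) + p + 1 = q + r + (p + 1) + 1 by ring]
    ring

lemma norm_decayRankOne_apply_le (l : ℕ) (j k : Fin N) :
    ‖decayRankOne N σ z z' m m' 0 0 0 0 l j k‖ ≤ 1 / (l + 1 : ℝ) ^ 2 := by
  have hvec : ∀ (z : Circle) (m : ℝ) (j : Fin N),
      ‖decayVec N σ z m 0 (l + 0) j‖ ≤ 1 / (l + 1) := fun z m j => by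
    refine (norm_decayTerm_le z m 0 l (endDist σ j)).trans ?_
    rw [pow_zero, one_mul]
    exact one_div_le_one_div_of_le (by positivity)
      (by linarith [(endDist σ j).cast_nonneg (α := ℝ)])
  rw [decayRankOne, Matrix.vecMulVec_apply, norm_mul, ← one_div_pow, sq]
  exact mul_le_mul (hvec z m j) (hvec z' m' k) (norm_nonneg _) (by positivity)

lemma summable_one_div_succ_sq : Summable fun l : ℕ => 1 / (l + 1 : ℝ) ^ 2 := by
  simpa using (summable_nat_add_iff 1).mpr (Real.summable_one_div_nat_pow.mpr one_lt_two)

lemma summable_decayRankOne_apply (j k : Fin N) :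
    Summable fun l => decayRankOne N σ z z' m m' 0 0 0 0 l j k :=
  Summable.of_norm_bounded summable_one_div_succ_sq fun l =>
    norm_decayRankOne_apply_le N σ z z' m m' l j k

lemma fwdDiff_iter_matrix_apply {n : Type*} (g : ℕ → Matrix n n ℂ) (p : ℕ) (j k : n) :
    (fwdDiff 1)^[p] (fun l => g l j k) = fun l => ((fwdDiff 1)^[p] g l) j k := by
  induction p with
  | zero => rfl
  | succ p ih =>
    rw [Function.iterate_succ_apply', Function.iterate_succ_apply', ih]
    rfl

/-- The matrices `∑ l, ω ^ l • u_l v_lᵀ` of which the remainder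
`T(ab) - T(a) T(b)` of two jump symbols is composed. -/
def oscillatingSum (ω : Circle) : Matrix (Fin N) (Fin N) ℂ :=
  Matrix.of fun j k => ∑' l, (ω : ℂ) ^ l * decayRankOne N σ z z' m m' 0 0 0 0 l j k

lemma nuclearNormLE_tsum_fwdDiff_decayRankOne (ω : Circle) {S : ℝ}
    (hS : HasSum (fun l : ℕ => 1 / (l + 1 : ℝ) ^ 2) S) (p M : ℕ) :
    NuclearNormLE (Matrix.of fun j k => ∑' l, (ω : ℂ) ^ (M + l) *
        ((fwdDiff 1)^[p + 1] (decayRankOne N σ z z' m m' 0 0 0 0) (M + l)) j k)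
      (iterDiffConst (p + 1) 0 0 / (M + 1 : ℝ) ^ p * S) := by
  set g := decayRankOne N σ z z' m m' 0 0 0 0
  refine NuclearNormLE.of_hasSum (F := fun l => (ω : ℂ) ^ (M + l) •
    ((fwdDiff 1)^[p + 1] g (M + l))) (fun j k => ?_) (hS.mul_left _) fun l => ?_
  · have hsum := summable_pow_add_mul ω
      (summable_fwdDiff_iter (summable_decayRankOne_apply N σ z z' m m' j k) (p + 1)) M
    rw [fwdDiff_iter_matrix_apply] at hsum
    exact hsum.hasSum
  · have hnuc := nuclearNormLE_fwdDiff_iter_decayRankOne N σ z z' m m' (p + 1) 0 0 0 0 (M + l)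
    have hconst : 0 ≤ iterDiffConst (p + 1) 0 0 := by
      simpa [le_div_iff₀] using (nuclearNormLE_fwdDiff_iter_decayRankOne
        N σ z z' m m' (p + 1) 0 0 0 0 0).nonneg
    refine (hnuc.smul ((ω : ℂ) ^ (M + l))).mono ?_
    rw [norm_pow, Circle.norm_coe, one_pow, one_mul, zero_add, zero_add, div_mul_div_comm, mul_one]
    refine div_le_div_of_nonneg_left hconst (by positivity) ?_
    rw [add_assoc, pow_add]
    push_cast
    gcongr
    · exact le_add_of_nonneg_right l.cast_nonneg
    · exact le_add_of_nonneg_left M.cast_nonneg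

theorem exists_oscillatingSum_approx {ω : Circle} (hω : ω ≠ 1) (p : ℕ) :
    ∃ C : ℝ, 0 ≤ C ∧ ∀ M : ℕ, ∃ κ : ℕ → ℂ, (∀ l, ‖κ l‖ ≤ C) ∧
      ∀ (N : ℕ) (σ : Bool) (z z' : Circle) (m m' : ℝ),
      NuclearNormLE (oscillatingSum N σ z z' m m' ω - ∑ l ∈ Finset.range (M + (p + 1)), κ l •
          Matrix.vecMulVec (decayVec N σ z m 0 l) (decayVec N σ z' m' 0 l))
        (C / (M + 1 : ℝ) ^ p) := by
  obtain ⟨C, hC, hparts⟩ := exists_summation_by_parts hω (p + 1)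
  obtain ⟨S, hS⟩ := summable_one_div_succ_sq
  set A : ℂ := (ω / (1 - ω)) ^ (p + 1)
  refine ⟨max C (‖A‖ * (iterDiffConst (p + 1) 0 0 * S)), le_max_of_le_left hC, fun M => ?_⟩
  obtain ⟨κ, hκ, hparts⟩ := hparts M
  refine ⟨κ, fun l => (hκ l).trans (le_max_left _ _), fun N σ z z' m m' => ?_⟩
  have htail : oscillatingSum N σ z z' m m' ω - ∑ l ∈ Finset.range (M + (p + 1)), κ l •
      Matrix.vecMulVec (decayVec N σ z m 0 l) (decayVec N σ z' m' 0 l) =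
      A • Matrix.of fun j k => ∑' l, (ω : ℂ) ^ (M + l) *
        ((fwdDiff 1)^[p + 1] (decayRankOne N σ z z' m m' 0 0 0 0) (M + l)) j k := by
    ext j k
    rw [Matrix.sub_apply, oscillatingSum, Matrix.of_apply,
      hparts _ (summable_decayRankOne_apply N σ z z' m m' j k), Matrix.sum_apply]
    simp only [fwdDiff_iter_matrix_apply, Matrix.smul_apply, smul_eq_mul, Matrix.of_apply]
    exact add_sub_cancel_left _ _
  rw [htail]
  refine ((nuclearNormLE_tsum_fwdDiff_decayRankOne N σ z z' m m' ω hS p M).smul A).mono ?_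
  refine le_trans (le_of_eq ?_) (div_le_div_of_nonneg_right (le_max_right _ _) (by positivity))
  ring

end DecayingVectors

/-! ### Galerkin approximation for inverse Toeplitz matrices -/

section Galerkin

variable {u w : ℕ → ℂ}

lemma l2norm_endVec_le (hu : Summable fun j => ‖u j‖ ^ 2) (N : ℕ) (σ : Bool) :
    l2norm (endVec N σ u) ≤ √(∑' j, ‖u j‖ ^ 2) := by
  refine Real.le_sqrt_of_sq_le ?_
  rw [l2norm_sq]
  exact (sum_endDist σ fun j => ‖u j‖ ^ 2).trans_le
    (hu.sum_le_tsum _ fun j _ => sq_nonneg _)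

/-- Extension of a vector on `{0, …, N - 1}` to a sequence by zero. -/
def zeroExtend {N : ℕ} (x : Fin N → ℂ) (j : ℕ) : ℂ := if h : j < N then x ⟨j, h⟩ else 0

lemma star_zeroExtend {N : ℕ} (x : Fin N → ℂ) (j : ℕ) :
    star (zeroExtend x j) = zeroExtend (star x) j := by
  simp only [zeroExtend, apply_dite star, star_zero, Pi.star_apply]

lemma sum_mul_zeroExtend {N M : ℕ} (h : N ≤ M) (F : ℕ → ℂ) (x : Fin N → ℂ) :
    ∑ j : Fin M, F j * zeroExtend x j = ∑ j : Fin N, F j * x j := by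
  have hsum : ∑ j ∈ Finset.range N, F j * zeroExtend x j =
      ∑ j ∈ Finset.range M, F j * zeroExtend x j := by
    refine Finset.sum_subset (Finset.range_subset_range.mpr h) fun j _ hj => ?_
    rw [zeroExtend, dif_neg (by simpa using hj), mul_zero]
  rw [Fin.sum_univ_eq_sum_range (fun j => F j * zeroExtend x j) M, ← hsum,
    ← Fin.sum_univ_eq_sum_range (fun j => F j * zeroExtend x j) N]
  simp [zeroExtend]

/-- The solution of the truncated Toeplitz system `T_N(a) x = (u_0, …, u_{N-1})`. -/
def toeplitzSolution (a : ℝ → ℝ) (u : ℕ → ℂ) (N : ℕ) : Fin N → ℂ :=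
  (toeplitz a N)⁻¹ *ᵥ endVec N false u

/-- The energy `⟨x, T_N(a) x⟩` of the solution `x` of the truncated system. -/
def galerkinEnergy (a : ℝ → ℝ) (u : ℕ → ℂ) (N : ℕ) : ℝ :=
  (star (toeplitzSolution a u N) ⬝ᵥ endVec N false u).re

variable {a : ℝ → ℝ} {δ : ℝ}

lemma CoerciveSymbol.toeplitz_mulVec_toeplitzSolution (ha : CoerciveSymbol a δ) (u : ℕ → ℂ)
    (N : ℕ) : toeplitz a N *ᵥ toeplitzSolution a u N = endVec N false u := by
  rw [toeplitzSolution, Matrix.mulVec_mulVec,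
    Matrix.mul_nonsing_inv _ (ha.det_toeplitz_ne_zero N).isUnit, Matrix.one_mulVec]

lemma star_zeroExtend_dotProduct {N M : ℕ} (h : N ≤ M) (x : Fin N → ℂ) (w : ℕ → ℂ) :
    star (endVec M false (zeroExtend x)) ⬝ᵥ endVec M false w = star x ⬝ᵥ endVec N false w := by
  rw [dotProduct_comm, dotProduct_comm (star x)]
  exact (Finset.sum_congr rfl fun (j : Fin M) _ => congrArg (w j * ·) (star_zeroExtend x j)).trans
    (sum_mul_zeroExtend h w (star x))

lemma toeplitz_mulVec_zeroExtend {N M : ℕ} (h : N ≤ M) (a : ℝ → ℝ) (x : Fin N → ℂ) :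
    toeplitz a M *ᵥ endVec M false (zeroExtend x) =
      endVec M false fun j => ∑ k : Fin N, fourierCoef a ((j : ℤ) - (k : ℕ)) * x k :=
  funext fun j => sum_mul_zeroExtend h (fun k => fourierCoef a (((j : ℕ) : ℤ) - (k : ℕ))) x

lemma CoerciveSymbol.l2norm_sub_zeroExtend_sq_le (ha : CoerciveSymbol a δ) (u : ℕ → ℂ)
    {N M : ℕ} (h : N ≤ M) :
    δ * l2norm (toeplitzSolution a u M -
      endVec M false (zeroExtend (toeplitzSolution a u N))) ^ 2 ≤
        galerkinEnergy a u M - galerkinEnergy a u N := by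
  set x := toeplitzSolution a u M
  set y := endVec M false (zeroExtend (toeplitzSolution a u N))
  have hxx : toeplitz a M *ᵥ x = endVec M false u := ha.toeplitz_mulVec_toeplitzSolution u M
  have hyx : star y ⬝ᵥ endVec M false u =
      star (toeplitzSolution a u N) ⬝ᵥ endVec N false u := star_zeroExtend_dotProduct h _ u
  have hyy : star y ⬝ᵥ (toeplitz a M *ᵥ y) =
      star (toeplitzSolution a u N) ⬝ᵥ endVec N false u := by
    rw [toeplitz_mulVec_zeroExtend h, star_zeroExtend_dotProduct h,
      ← ha.toeplitz_mulVec_toeplitzSolution u N]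
    rfl
  have hxy : star x ⬝ᵥ (toeplitz a M *ᵥ y) = star (star y ⬝ᵥ (toeplitz a M *ᵥ x)) := by
    rw [← Matrix.star_dotProduct, Matrix.star_mulVec, (toeplitz_isHermitian a M).eq,
      Matrix.dotProduct_mulVec]
  rw [l2norm_sq]
  refine (ha.le_re_star_dotProduct (x - y)).trans_eq ?_
  rw [Matrix.mulVec_sub, star_sub, sub_dotProduct, dotProduct_sub, dotProduct_sub, hxy, hyy, hxx,
    hyx, galerkinEnergy, galerkinEnergy]
  simp [x]

lemma CoerciveSymbol.l2norm_toeplitzSolution_le (ha : CoerciveSymbol a δ)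
    (hu : Summable fun j => ‖u j‖ ^ 2) (N : ℕ) :
    l2norm (toeplitzSolution a u N) ≤ 1 / δ * √(∑' j, ‖u j‖ ^ 2) :=
  (l2norm_mulVec_le _ _).trans (mul_le_mul (ha.norm_inv_toeplitz_le N) (l2norm_endVec_le hu N _)
    (l2norm_nonneg _) (one_div_nonneg.mpr ha.pos.le))

lemma CoerciveSymbol.bddAbove_galerkinEnergy (ha : CoerciveSymbol a δ)
    (hu : Summable fun j => ‖u j‖ ^ 2) : BddAbove (Set.range (galerkinEnergy a u)) := by
  refine ⟨1 / δ * √(∑' j, ‖u j‖ ^ 2) * √(∑' j, ‖u j‖ ^ 2), ?_⟩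
  rintro _ ⟨N, rfl⟩
  refine (Complex.re_le_norm _).trans ((norm_dotProduct_le _ _).trans ?_)
  have := ha.pos
  rw [l2norm_star]
  exact mul_le_mul (ha.l2norm_toeplitzSolution_le hu N) (l2norm_endVec_le hu N _)
    (l2norm_nonneg _) (by positivity)

lemma CoerciveSymbol.exists_l2norm_sub_zeroExtend_le (ha : CoerciveSymbol a δ)
    (hu : Summable fun j => ‖u j‖ ^ 2) {ε : ℝ} (hε : 0 < ε) :
    ∃ N₀, ∀ N, N₀ ≤ N → l2norm (toeplitzSolution a u N -
      endVec N false (zeroExtend (toeplitzSolution a u N₀))) ≤ ε := by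
  have hbdd := ha.bddAbove_galerkinEnergy hu
  have hlt : (⨆ N, galerkinEnergy a u N) - δ * ε ^ 2 < ⨆ N, galerkinEnergy a u N :=
    sub_lt_self _ (mul_pos ha.pos (pow_pos hε 2))
  obtain ⟨N₀, hN₀⟩ := exists_lt_of_lt_ciSup hlt
  refine ⟨N₀, fun N hN => ?_⟩
  have hsq : δ * l2norm (toeplitzSolution a u N -
      endVec N false (zeroExtend (toeplitzSolution a u N₀))) ^ 2 ≤ δ * ε ^ 2 := by
    linarith [ha.l2norm_sub_zeroExtend_sq_le u hN, le_ciSup hbdd N]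
  exact (sq_le_sq₀ (l2norm_nonneg _) hε.le).mp (le_of_mul_le_mul_left hsq ha.pos)

lemma CoerciveSymbol.exists_norm_dotProduct_sub_zeroExtend_le (ha : CoerciveSymbol a δ)
    (hu : Summable fun j => ‖u j‖ ^ 2) (hw : Summable fun j => ‖w j‖ ^ 2) (σ : Bool) {ε : ℝ}
    (hε : 0 < ε) :
    ∃ N₀, ∀ N, N₀ ≤ N → ‖endVec N σ w ⬝ᵥ toeplitzSolution a u N -
      endVec N σ w ⬝ᵥ endVec N false (zeroExtend (toeplitzSolution a u N₀))‖ ≤ ε := by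
  set B := √(∑' j, ‖w j‖ ^ 2)
  have hB : 0 ≤ B := Real.sqrt_nonneg _
  obtain ⟨N₀, hN₀⟩ := ha.exists_l2norm_sub_zeroExtend_le hu (ε := ε / (B + 1)) (by positivity)
  refine ⟨N₀, fun N hN => ?_⟩
  rw [← dotProduct_sub]
  refine (norm_dotProduct_le _ _).trans ?_
  calc _ ≤ B * (ε / (B + 1)) :=
        mul_le_mul (l2norm_endVec_le hw N σ) (hN₀ N hN) (l2norm_nonneg _) hB
    _ ≤ ε := by
      rw [mul_div_assoc', div_le_iff₀ (by positivity)]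
      nlinarith

lemma CoerciveSymbol.exists_tendsto_left_left (ha : CoerciveSymbol a δ)
    (hu : Summable fun j => ‖u j‖ ^ 2) (hw : Summable fun j => ‖w j‖ ^ 2) :
    ∃ L, Tendsto (fun N => endVec N false w ⬝ᵥ toeplitzSolution a u N) atTop (𝓝 L) := by
  refine cauchySeq_tendsto_of_complete (Metric.cauchySeq_iff'.mpr fun ε hε => ?_)
  obtain ⟨N₀, hN₀⟩ := ha.exists_norm_dotProduct_sub_zeroExtend_le hu hw false (half_pos hε)
  refine ⟨N₀, fun N hN => ?_⟩
  have hext : endVec N false w ⬝ᵥ endVec N false (zeroExtend (toeplitzSolution a u N₀)) =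
      endVec N₀ false w ⬝ᵥ toeplitzSolution a u N₀ := sum_mul_zeroExtend hN w _
  rw [dist_eq_norm, ← hext]
  exact (hN₀ N hN).trans_lt (half_lt_self hε)

lemma tendsto_zero_of_summable_norm_sq (hw : Summable fun j => ‖w j‖ ^ 2) :
    Tendsto w atTop (𝓝 0) := by
  refine tendsto_zero_iff_norm_tendsto_zero.mpr ?_
  simpa using hw.tendsto_atTop_zero.sqrt

lemma CoerciveSymbol.tendsto_right_left (ha : CoerciveSymbol a δ)
    (hu : Summable fun j => ‖u j‖ ^ 2) (hw : Summable fun j => ‖w j‖ ^ 2) :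
    Tendsto (fun N => endVec N true w ⬝ᵥ toeplitzSolution a u N) atTop (𝓝 0) := by
  refine Metric.tendsto_atTop.mpr fun ε hε => ?_
  obtain ⟨N₀, hN₀⟩ := ha.exists_norm_dotProduct_sub_zeroExtend_le hu hw true (half_pos hε)
  have hext : ∀ N, N₀ ≤ N →
      endVec N true w ⬝ᵥ endVec N false (zeroExtend (toeplitzSolution a u N₀)) =
        ∑ j : Fin N₀, w (N - (j + 1)) * toeplitzSolution a u N₀ j := fun N hN =>
    (Finset.sum_congr rfl fun j _ => by simp [endVec, endDist, Fin.val_rev]).trans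
      (sum_mul_zeroExtend hN (fun j => w (N - (j + 1))) _)
  have hlim : Tendsto (fun N => ∑ j : Fin N₀, w (N - (j + 1)) * toeplitzSolution a u N₀ j)
      atTop (𝓝 0) := by
    simpa using tendsto_finsetSum Finset.univ fun (j : Fin N₀) _ =>
      ((tendsto_zero_of_summable_norm_sq hw).comp
        (tendsto_sub_atTop_nat ((j : ℕ) + 1))).mul_const (toeplitzSolution a u N₀ j)
  obtain ⟨N₁, hN₁⟩ := Metric.tendsto_atTop.mp hlim (ε / 2) (half_pos hε)
  refine ⟨max N₀ N₁, fun N hN => ?_⟩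
  have hle := hN₀ N (le_of_max_le_left hN)
  have hlt := hN₁ N (le_of_max_le_right hN)
  rw [← hext N (le_of_max_le_left hN), dist_zero_right] at hlt
  rw [dist_zero_right]
  linarith [norm_le_norm_add_norm_sub'
    (endVec N true w ⬝ᵥ toeplitzSolution a u N)
    (endVec N true w ⬝ᵥ endVec N false (zeroExtend (toeplitzSolution a u N₀)))]

lemma inv_toeplitz_submatrix_rev (a : ℝ → ℝ) (N : ℕ) :
    (toeplitz a N)⁻¹.submatrix Fin.revPerm Fin.revPerm = ((toeplitz a N)⁻¹)ᵀ := by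
  rw [← Matrix.inv_submatrix_equiv, Matrix.transpose_nonsing_inv]
  congr 1
  ext j k
  simp only [Matrix.submatrix_apply, Matrix.transpose_apply, toeplitz, Matrix.of_apply,
    Fin.revPerm_apply, Fin.val_rev]
  congr 1
  omega

lemma dotProduct_inv_toeplitz_rev (a : ℝ → ℝ) (N : ℕ) (u w : Fin N → ℂ) :
    (w ∘ Fin.rev) ⬝ᵥ ((toeplitz a N)⁻¹ *ᵥ (u ∘ Fin.rev)) = u ⬝ᵥ ((toeplitz a N)⁻¹ *ᵥ w) := by
  have hrev : (toeplitz a N)⁻¹ *ᵥ (u ∘ Fin.rev) = (((toeplitz a N)⁻¹)ᵀ *ᵥ u) ∘ Fin.rev := by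
    rw [← inv_toeplitz_submatrix_rev, Matrix.submatrix_mulVec_equiv]
    funext j
    simp [Fin.revPerm]
  have hsum : (w ∘ Fin.rev) ⬝ᵥ ((((toeplitz a N)⁻¹)ᵀ *ᵥ u) ∘ Fin.rev) =
      w ⬝ᵥ (((toeplitz a N)⁻¹)ᵀ *ᵥ u) :=
    Equiv.sum_comp Fin.revPerm fun j => w j * (((toeplitz a N)⁻¹)ᵀ *ᵥ u) j
  rw [hrev, hsum, Matrix.mulVec_transpose, dotProduct_comm, ← Matrix.dotProduct_mulVec]

lemma dotProduct_inv_toeplitz_conj (a : ℝ → ℝ) (N : ℕ) (u w : Fin N → ℂ) :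
    w ⬝ᵥ ((toeplitz a N)⁻¹ *ᵥ u) = star (star u ⬝ᵥ ((toeplitz a N)⁻¹ *ᵥ star w)) := by
  rw [← Matrix.star_dotProduct, Matrix.star_mulVec, star_star, Matrix.conjTranspose_nonsing_inv,
    (toeplitz_isHermitian a N).eq, Matrix.dotProduct_mulVec]

theorem CoerciveSymbol.exists_tendsto_dotProduct_inv_toeplitz (ha : CoerciveSymbol a δ)
    (hu : Summable fun j => ‖u j‖ ^ 2) (hw : Summable fun j => ‖w j‖ ^ 2) (σ σ' : Bool) :
    ∃ L, Tendsto (fun N => endVec N σ w ⬝ᵥ ((toeplitz a N)⁻¹ *ᵥ endVec N σ' u)) atTop (𝓝 L) := by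
  cases σ <;> cases σ'
  · exact ha.exists_tendsto_left_left hu hw
  · have hlim := (ha.tendsto_right_left (u := fun j => star (w j)) (w := fun j => star (u j))
      (by simpa using hw) (by simpa using hu)).star
    exact ⟨star 0, hlim.congr fun N =>
      (dotProduct_inv_toeplitz_conj a N (endVec N true u) (endVec N false w)).symm⟩
  · exact ⟨0, ha.tendsto_right_left hu hw⟩
  · obtain ⟨L, hL⟩ := ha.exists_tendsto_left_left hw hu
    exact ⟨L, hL.congr fun N =>
      (dotProduct_inv_toeplitz_rev a N (endVec N false u) (endVec N false w)).symm⟩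

end Galerkin

/-! ### Separation of singularities -/

section Separation

/-- The parameters of one `oscillatingSum`: the end of the chain at which its vectors are
concentrated, their oscillations `z`, `z'` and the imaginary shifts `m`, `m'` of their
denominators. -/
structure OscillationData where
  σ : Bool
  z : Circle
  z' : Circle
  m : ℝ
  m' : ℝ

lemma summable_norm_decayTerm_sq (z : Circle) (m : ℝ) (l : ℕ) :
    Summable fun j => ‖decayTerm z m 0 l j‖ ^ 2 := by
  refine Summable.of_nonneg_of_le (fun j => sq_nonneg _) (fun j => ?_) summable_one_div_succ_sq
  rw [← one_div_pow]
  refine pow_le_pow_left₀ (norm_nonneg _) ((norm_decayTerm_le z m 0 l j).trans ?_) 2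
  rw [pow_zero, one_mul]
  exact one_div_le_one_div_of_le (by positivity) (by linarith [l.cast_nonneg (α := ℝ)])

variable {T : Type*} {ω : T → Circle} {c : T → ℂ} {P : T → OscillationData}
  {a b : ℝ → ℝ} {δ : ℝ}

/-- The column vectors of the first `L` terms of each oscillating sum. -/
def leftVec (P : T → OscillationData) (N L : ℕ) (s : T × Fin L) : Fin N → ℂ :=
  decayVec N (P s.1).σ (P s.1).z (P s.1).m 0 s.2

/-- The row vectors of the first `L` terms of each oscillating sum. -/
def rightVec (P : T → OscillationData) (N L : ℕ) (s : T × Fin L) : Fin N → ℂ :=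
  decayVec N (P s.1).σ (P s.1).z' (P s.1).m' 0 s.2

lemma norm_weight_mul_l2norm_le {κ : T → ℕ → ℂ} {C : ℝ} (hκ : ∀ t l, ‖κ t l‖ ≤ C) (c : T → ℂ)
    (P : T → OscillationData) (N L : ℕ) (s t : T × Fin L) :
    ‖c s.1 * κ s.1 s.2‖ * (l2norm (rightVec P N L s) * l2norm (leftVec P N L t)) ≤
      4 * C * ‖c s.1‖ := by
  have hC : 0 ≤ C := (norm_nonneg _).trans (hκ s.1 s.2)
  have hweight : ‖c s.1 * κ s.1 s.2‖ ≤ ‖c s.1‖ * C := by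
    rw [norm_mul]
    exact mul_le_mul_of_nonneg_left (hκ _ _) (norm_nonneg _)
  have hvec : l2norm (rightVec P N L s) * l2norm (leftVec P N L t) ≤ 2 * 2 :=
    mul_le_mul (l2norm_decayVec_le_two ..) (l2norm_decayVec_le_two ..) (l2norm_nonneg _)
      zero_le_two
  calc ‖c s.1 * κ s.1 s.2‖ * (l2norm (rightVec P N L s) * l2norm (leftVec P N L t))
      ≤ ‖c s.1‖ * C * (2 * 2) := mul_le_mul hweight hvec
        (mul_nonneg (l2norm_nonneg _) (l2norm_nonneg _)) (by positivity)
    _ = 4 * C * ‖c s.1‖ := by ring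

variable [Fintype T]

/-- The linear combination of oscillating sums that the remainder `T(ab) - T(a) T(b)` is. -/
def remainderSum (ω : T → Circle) (c : T → ℂ) (P : T → OscillationData) (N : ℕ) :
    Matrix (Fin N) (Fin N) ℂ :=
  ∑ t, c t • oscillatingSum N (P t).σ (P t).z (P t).z' (P t).m (P t).m' (ω t)

/-- The finite-rank approximation of `remainderSum` in which the `l`-th term of the `t`-th
oscillating sum has the weight `κ t l`. -/
def truncatedRemainder (κ : T → ℕ → ℂ) (c : T → ℂ) (P : T → OscillationData) (N L : ℕ) :
    Matrix (Fin N) (Fin N) ℂ :=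
  sumRankOne (fun s : T × Fin L => c s.1 * κ s.1 s.2) (leftVec P N L) (rightVec P N L)

lemma remainderSum_sub_truncatedRemainder (ω : T → Circle) (κ : T → ℕ → ℂ) (c : T → ℂ)
    (P : T → OscillationData) (N L : ℕ) :
    remainderSum ω c P N - truncatedRemainder κ c P N L =
      ∑ t, c t • (oscillatingSum N (P t).σ (P t).z (P t).z' (P t).m (P t).m' (ω t) -
        ∑ l ∈ Finset.range L, κ t l • Matrix.vecMulVec
          (decayVec N (P t).σ (P t).z (P t).m 0 l) (decayVec N (P t).σ (P t).z' (P t).m' 0 l)) := by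
  simp only [smul_sub, Finset.sum_sub_distrib, remainderSum, truncatedRemainder, sumRankOne,
    Fintype.sum_prod_type, leftVec, rightVec, Finset.smul_sum, smul_smul]
  exact congrArg _ (Finset.sum_congr rfl fun t _ => Fin.sum_univ_eq_sum_range (fun l =>
    (c t * κ t l) • Matrix.vecMulVec (decayVec N (P t).σ (P t).z (P t).m 0 l)
      (decayVec N (P t).σ (P t).z' (P t).m' 0 l)) L)

lemma exists_truncatedRemainder_approx (hω : ∀ t, ω t ≠ 1) (p : ℕ) :
    ∃ C : ℝ, 0 ≤ C ∧ ∀ M : ℕ, ∃ κ : T → ℕ → ℂ, (∀ t l, ‖κ t l‖ ≤ C) ∧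
      ∀ (c : T → ℂ) (P : T → OscillationData) (N : ℕ),
      NuclearNormLE (remainderSum ω c P N - truncatedRemainder κ c P N (M + (p + 1)))
        (C * (∑ t, ‖c t‖) / (M + 1 : ℝ) ^ p) := by
  choose C hC happrox using fun t => exists_oscillatingSum_approx (hω t) p
  have hle : ∀ t, C t ≤ ∑ t, C t := fun t =>
    Finset.single_le_sum (fun t _ => hC t) (Finset.mem_univ t)
  refine ⟨∑ t, C t, Finset.sum_nonneg fun t _ => hC t, fun M => ?_⟩
  choose κ hκ happrox using fun t => happrox t M
  refine ⟨κ, fun t l => (hκ t l).trans (hle t), fun c P N => ?_⟩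
  rw [remainderSum_sub_truncatedRemainder]
  refine (NuclearNormLE.sum fun t _ => (happrox t N _ _ _ _ _).smul (c t)).mono ?_
  rw [Finset.mul_sum, Finset.sum_div]
  refine Finset.sum_le_sum fun t _ => ?_
  rw [mul_div_assoc', mul_comm]
  gcongr
  exact hle t

lemma nuclearNormLE_truncatedRemainder {κ : T → ℕ → ℂ} {C : ℝ} (hκ : ∀ t l, ‖κ t l‖ ≤ C)
    (c : T → ℂ) (P : T → OscillationData) (N L : ℕ) :
    NuclearNormLE (truncatedRemainder κ c P N L) (L * (4 * C * ∑ t, ‖c t‖)) := by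
  refine (NuclearNormLE.sum fun s _ => (NuclearNormLE.vecMulVec _ _).smul _).mono ?_
  calc ∑ s : T × Fin L, ‖c s.1 * κ s.1 s.2‖ * (l2norm (leftVec P N L s) * l2norm (rightVec P N L s))
      ≤ ∑ s : T × Fin L, 4 * C * ‖c s.1‖ := Finset.sum_le_sum fun s _ => by
        rw [mul_comm (l2norm (leftVec P N L s))]
        exact norm_weight_mul_l2norm_le hκ c P N L s s
    _ = L * (4 * C * ∑ t, ‖c t‖) := by
        simp only [Fintype.sum_prod_type, Finset.sum_const, Finset.card_univ, Fintype.card_fin,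
          nsmul_eq_mul, Finset.mul_sum]

lemma exists_nuclearNormLE_remainderSum (hω : ∀ t, ω t ≠ 1) :
    ∃ K : ℝ, 0 ≤ K ∧ ∀ (c : T → ℂ) (P : T → OscillationData) (N : ℕ),
      NuclearNormLE (remainderSum ω c P N) (K * ∑ t, ‖c t‖) := by
  obtain ⟨C, hC, happrox⟩ := exists_truncatedRemainder_approx hω 0
  obtain ⟨κ, hκ, happrox⟩ := happrox 0
  refine ⟨C + 4 * C, by positivity, fun c P N => ?_⟩
  have h := (happrox c P N).add (nuclearNormLE_truncatedRemainder hκ c P N (0 + (0 + 1)))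
  rw [sub_add_cancel] at h
  refine h.mono (le_of_eq ?_)
  push_cast
  ring

/-- The logarithm of the modulus of the Toeplitz determinant of the symbol `a`. -/
def logDet (a : ℝ → ℝ) (N : ℕ) : ℝ := Real.log ‖(toeplitz a N).det‖

/-- The failure of multiplicativity of Toeplitz determinants, on a logarithmic scale. -/
def logDetRatio (a b : ℝ → ℝ) (N : ℕ) : ℝ :=
  logDet a N + logDet b N - logDet (fun t => a t * b t) N

/-- A pair of coercive symbols without a common singularity: every oscillating sum in the
remainder `T(ab) - T(a) T(b)` has a frequency `ω t ≠ 1`. -/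
structure SeparatedSymbols (ω : T → Circle) (c : T → ℂ) (P : T → OscillationData)
    (a b : ℝ → ℝ) (δ : ℝ) : Prop where
  left : CoerciveSymbol a δ
  right : CoerciveSymbol b δ
  mul : CoerciveSymbol (fun t => a t * b t) δ
  ω_ne_one : ∀ t, ω t ≠ 1
  toeplitz_mul : ∀ N, toeplitz (fun t => a t * b t) N =
    toeplitz a N * toeplitz b N + remainderSum ω c P N

namespace SeparatedSymbols

lemma det_toeplitz_mul_ne_zero (h : SeparatedSymbols ω c P a b δ) (N : ℕ) :
    (toeplitz a N * toeplitz b N).det ≠ 0 := by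
  rw [Matrix.det_mul]
  exact mul_ne_zero (h.left.det_toeplitz_ne_zero N) (h.right.det_toeplitz_ne_zero N)

lemma norm_inv_toeplitz_mul_le (h : SeparatedSymbols ω c P a b δ) (N : ℕ) :
    ‖(toeplitz a N * toeplitz b N)⁻¹‖ ≤ 1 / δ ^ 2 := by
  rw [Matrix.mul_inv_rev, sq, ← one_div_mul_one_div]
  exact (norm_mul_le _ _).trans (mul_le_mul (h.right.norm_inv_toeplitz_le N)
    (h.left.norm_inv_toeplitz_le N) (norm_nonneg _) (one_div_nonneg.mpr h.left.pos.le))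

lemma one_add_remainderSum_mul_neg_inv (h : SeparatedSymbols ω c P a b δ) (N : ℕ) :
    1 + remainderSum ω c P N * -(toeplitz (fun t => a t * b t) N)⁻¹ =
      toeplitz a N * toeplitz b N * (toeplitz (fun t => a t * b t) N)⁻¹ := by
  rw [eq_sub_of_add_eq (h.toeplitz_mul N).symm, Matrix.sub_mul,
    Matrix.mul_nonsing_inv _ (h.mul.det_toeplitz_ne_zero N).isUnit, Matrix.mul_neg, sub_eq_add_neg]

lemma one_add_remainderSum_mul_inv (h : SeparatedSymbols ω c P a b δ) (N : ℕ) :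
    1 + remainderSum ω c P N * (toeplitz a N * toeplitz b N)⁻¹ =
      toeplitz (fun t => a t * b t) N * (toeplitz a N * toeplitz b N)⁻¹ := by
  rw [h.toeplitz_mul N, Matrix.add_mul,
    Matrix.mul_nonsing_inv _ (h.det_toeplitz_mul_ne_zero N).isUnit]

lemma exp_logDetRatio (h : SeparatedSymbols ω c P a b δ) (N : ℕ) :
    Real.exp (logDetRatio a b N) = ‖(toeplitz a N * toeplitz b N).det‖ /
      ‖(toeplitz (fun t => a t * b t) N).det‖ := by
  rw [logDetRatio, logDet, logDet, logDet, Real.exp_sub, Real.exp_add,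
    Real.exp_log (norm_pos_iff.mpr (h.left.det_toeplitz_ne_zero N)),
    Real.exp_log (norm_pos_iff.mpr (h.right.det_toeplitz_ne_zero N)),
    Real.exp_log (norm_pos_iff.mpr (h.mul.det_toeplitz_ne_zero N)), Matrix.det_mul, norm_mul]

lemma norm_det_one_add_remainderSum_mul_neg_inv (h : SeparatedSymbols ω c P a b δ) (N : ℕ) :
    ‖(1 + remainderSum ω c P N * -(toeplitz (fun t => a t * b t) N)⁻¹).det‖ =
      Real.exp (logDetRatio a b N) := by
  rw [h.one_add_remainderSum_mul_neg_inv, h.exp_logDetRatio, Matrix.det_mul,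
    Matrix.det_nonsing_inv, Ring.inverse_eq_inv', norm_mul, norm_inv, div_eq_mul_inv]

lemma norm_det_one_add_remainderSum_mul_inv (h : SeparatedSymbols ω c P a b δ) (N : ℕ) :
    ‖(1 + remainderSum ω c P N * (toeplitz a N * toeplitz b N)⁻¹).det‖ =
      Real.exp (-logDetRatio a b N) := by
  rw [h.one_add_remainderSum_mul_inv, Real.exp_neg, h.exp_logDetRatio, Matrix.det_mul,
    Matrix.det_nonsing_inv, Ring.inverse_eq_inv', norm_mul, norm_inv, inv_div, div_eq_mul_inv]

lemma abs_logDetRatio_le_of_norm_det_le (h : SeparatedSymbols ω c P a b δ) (N : ℕ) {D s : ℝ}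
    (hD : 1 / δ ≤ D) (hD' : 1 / δ ^ 2 ≤ D)
    (hs : ∀ G : Matrix (Fin N) (Fin N) ℂ, ‖G‖ ≤ D →
      ‖(1 + remainderSum ω c P N * G).det‖ ≤ Real.exp s) : |logDetRatio a b N| ≤ s := by
  refine abs_le'.mpr ⟨?_, ?_⟩
  · rw [← Real.exp_le_exp, ← h.norm_det_one_add_remainderSum_mul_neg_inv]
    exact hs _ ((norm_neg _).trans_le ((h.mul.norm_inv_toeplitz_le N).trans hD))
  · rw [← Real.exp_le_exp, ← h.norm_det_one_add_remainderSum_mul_inv]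
    exact hs _ ((h.norm_inv_toeplitz_mul_le N).trans hD')

lemma abs_logDetRatio_le_of_nuclearNormLE (h : SeparatedSymbols ω c P a b δ) (N : ℕ) {D ν : ℝ}
    (hD : 1 / δ ≤ D) (hD' : 1 / δ ^ 2 ≤ D) (hν : NuclearNormLE (remainderSum ω c P N) ν) :
    |logDetRatio a b N| ≤ D * ν + (D * ν) ^ 2 / 2 :=
  h.abs_logDetRatio_le_of_norm_det_le N hD hD' fun G hG =>
    ((hν.mul_right G).mono (mul_le_mul_of_nonneg_right hG hν.nonneg)).norm_det_one_add_le

/-- Replacing the remainder `Z` by an approximation `F` multiplies `1 - Z T(ab)⁻¹`, whose inverse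
`1 + Z (T(a) T(b))⁻¹` is bounded, by a factor close to the identity in nuclear norm. -/
lemma exists_norm_det_one_add_mul_neg_inv (h : SeparatedSymbols ω c P a b δ) {N : ℕ}
    {F : Matrix (Fin N) (Fin N) ℂ} {D ν ε η : ℝ} (hD : 1 / δ ≤ D) (hD' : 1 / δ ^ 2 ≤ D)
    (hν : NuclearNormLE (remainderSum ω c P N) ν) (hε : NuclearNormLE (remainderSum ω c P N - F) ε)
    (hη : (1 + D * ν) * (D * ε) ≤ η) (hη' : η ≤ 1 / 2) :
    ∃ r, |r - logDetRatio a b N| ≤ 4 * η ∧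
      ‖(1 + F * -(toeplitz (fun t => a t * b t) N)⁻¹).det‖ = Real.exp r := by
  set G := -(toeplitz (fun t => a t * b t) N)⁻¹
  set Z := remainderSum ω c P N
  set B := 1 + Z * (toeplitz a N * toeplitz b N)⁻¹ with hB
  have hinv : (1 + Z * G) * B = 1 := by
    rw [hB, h.one_add_remainderSum_mul_neg_inv, h.one_add_remainderSum_mul_inv, Matrix.mul_assoc,
      ← Matrix.mul_assoc _⁻¹, Matrix.nonsing_inv_mul _ (h.mul.det_toeplitz_ne_zero N).isUnit,
      Matrix.one_mul, Matrix.mul_nonsing_inv _ (h.det_toeplitz_mul_ne_zero N).isUnit]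
  have hBle : ‖B‖ ≤ 1 + D * ν := (norm_add_le _ _).trans <| add_le_add l2_opNorm_one_le <|
    (hν.mul_right _).norm_le.trans <|
      mul_le_mul_of_nonneg_right ((h.norm_inv_toeplitz_mul_le N).trans hD') hν.nonneg
  have hGle : ‖G‖ ≤ D := (norm_neg _).trans_le ((h.mul.norm_inv_toeplitz_le N).trans hD)
  have hsmall : NuclearNormLE (B * (-(Z - F) * G)) η :=
    ((hε.neg.mul_right G).mul_left B).mono <| le_trans
      (mul_le_mul hBle (mul_le_mul_of_nonneg_right hGle hε.nonneg)
        (mul_nonneg (norm_nonneg _) hε.nonneg) ((norm_nonneg _).trans hBle)) hη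
  have hfactor : 1 + F * G = (1 + Z * G) * (1 + B * (-(Z - F) * G)) := by
    rw [Matrix.mul_add, Matrix.mul_one, ← Matrix.mul_assoc, hinv, Matrix.one_mul, neg_sub,
      Matrix.sub_mul]
    abel
  refine ⟨logDetRatio a b N + Real.log ‖(1 + B * (-(Z - F) * G)).det‖, ?_, ?_⟩
  · rw [add_sub_cancel_left]
    exact hsmall.abs_log_norm_det_one_add_le hη'
  · rw [hfactor, Matrix.det_mul, norm_mul, h.norm_det_one_add_remainderSum_mul_neg_inv,
      Real.exp_add, Real.exp_log (norm_pos_iff.mpr (hsmall.det_one_add_ne_zero (by linarith)))]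

end SeparatedSymbols

lemma exists_tendsto_of_forall_approx {y : ℕ → ℝ} (h : ∀ ε > 0, ∃ (w : ℕ → ℝ) (L : ℝ),
    Tendsto w atTop (𝓝 L) ∧ ∀ n, |w n - y n| ≤ ε) : ∃ L, Tendsto y atTop (𝓝 L) := by
  refine cauchySeq_tendsto_of_complete (Metric.cauchySeq_iff.mpr fun ε hε => ?_)
  obtain ⟨w, L, hw, hwy⟩ := h (ε / 4) (by positivity)
  obtain ⟨n₀, hn₀⟩ := Metric.cauchySeq_iff.mp hw.cauchySeq (ε / 2) (by positivity)
  refine ⟨n₀, fun m hm n hn => ?_⟩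
  have hmn := abs_lt.mp (hn₀ m hm n hn)
  have hm := abs_le.mp (hwy m)
  have hn := abs_le.mp (hwy n)
  exact abs_lt.mpr ⟨by linarith, by linarith⟩

lemma exists_tendsto_of_norm_eq_exp {d : ℕ → ℂ} {D : ℂ} {r : ℕ → ℝ} {A : ℝ}
    (hd : Tendsto d atTop (𝓝 D)) (hr : ∀ n, ‖d n‖ = Real.exp (r n)) (hA : ∀ n, A ≤ r n) :
    ∃ L, Tendsto r atTop (𝓝 L) := by
  have hlower : Real.exp A ≤ ‖D‖ :=
    ge_of_tendsto' hd.norm fun n => (Real.exp_le_exp.mpr (hA n)).trans_eq (hr n).symm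
  refine ⟨Real.log ‖D‖, (hd.norm.log ((Real.exp_pos A).trans_le hlower).ne').congr fun n => ?_⟩
  rw [hr, Real.log_exp]

lemma CoerciveSymbol.exists_tendsto_det_one_add_truncatedRemainder (ha : CoerciveSymbol a δ)
    (κ : T → ℕ → ℂ) (c : T → ℂ) (P : T → OscillationData) (L : ℕ) :
    ∃ D, Tendsto (fun N => (1 + truncatedRemainder κ c P N L * -(toeplitz a N)⁻¹).det)
      atTop (𝓝 D) := by
  classical
  have hentry : ∀ s t : T × Fin L, ∃ D, Tendsto (fun N => (c s.1 * κ s.1 s.2) *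
      (rightVec P N L s ⬝ᵥ (-(toeplitz a N)⁻¹ *ᵥ leftVec P N L t))) atTop (𝓝 D) := by
    intro s t
    obtain ⟨D, hD⟩ := ha.exists_tendsto_dotProduct_inv_toeplitz
      (summable_norm_decayTerm_sq (P t.1).z (P t.1).m t.2)
      (summable_norm_decayTerm_sq (P s.1).z' (P s.1).m' s.2) (P s.1).σ (P t.1).σ
    refine ⟨c s.1 * κ s.1 s.2 * -D, (hD.neg.congr fun N => ?_).const_mul _⟩
    rw [Matrix.neg_mulVec, dotProduct_neg]
    rfl
  choose D hD using hentry
  simp only [truncatedRemainder, det_one_add_sumRankOne_mul]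
  exact ⟨_, ((continuous_id.matrix_det.tendsto _).comp (tendsto_const_nhds.add
    (tendsto_pi_nhds.mpr fun s => tendsto_pi_nhds.mpr fun t => hD s t)))⟩

theorem SeparatedSymbols.exists_tendsto_logDetRatio (h : SeparatedSymbols ω c P a b δ) :
    ∃ L, Tendsto (logDetRatio a b) atTop (𝓝 L) := by
  obtain ⟨K, -, hnuc⟩ := exists_nuclearNormLE_remainderSum h.ω_ne_one
  obtain ⟨C, -, happrox⟩ := exists_truncatedRemainder_approx h.ω_ne_one 1
  set S := ∑ t, ‖c t‖
  set D := max (1 / δ) (1 / δ ^ 2)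
  have hbounded N := h.abs_logDetRatio_le_of_nuclearNormLE N (le_max_left _ _) (le_max_right _ _)
    (hnuc c P N)
  refine exists_tendsto_of_forall_approx fun ε hε => ?_
  set η := min (1 / 2) (ε / 4)
  have hη : 0 < η := by positivity
  obtain ⟨M, hM⟩ := exists_nat_gt ((1 + D * (K * S)) * (D * (C * S)) / η)
  obtain ⟨κ, -, happrox⟩ := happrox M
  have hsmall : (1 + D * (K * S)) * (D * (C * S / (M + 1 : ℝ) ^ 1)) ≤ η := by
    rw [pow_one, mul_div_assoc', mul_div_assoc', div_le_iff₀ (by positivity), mul_comm η]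
    rw [div_lt_iff₀ hη] at hM
    linarith
  choose r hr hdet using fun N => h.exists_norm_det_one_add_mul_neg_inv (le_max_left _ _)
    (le_max_right _ _) (hnuc c P N) (happrox c P N) hsmall (min_le_left _ _)
  obtain ⟨d, hd⟩ := h.mul.exists_tendsto_det_one_add_truncatedRemainder κ c P (M + (1 + 1))
  have hlower N : -(D * (K * S) + (D * (K * S)) ^ 2 / 2) - 4 * η ≤ r N := by
    linarith [(abs_le.mp (hbounded N)).1, (abs_le.mp (hr N)).1]
  obtain ⟨L, hL⟩ := exists_tendsto_of_norm_eq_exp hd hdet hlower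
  exact ⟨r, L, hL, fun N => (hr N).trans (by linarith [min_le_right (1 / 2) (ε / 4)])⟩

end Separation

/-! ### Domination of the separation error -/

section Domination

lemma factorial_le_exp_sq (r : ℕ) : (r.factorial : ℝ) ≤ Real.exp ((r : ℝ) ^ 2) :=
  calc (r.factorial : ℝ) ≤ (r : ℝ) ^ r := by exact_mod_cast r.factorial_le_pow
    _ ≤ Real.exp r ^ r := by
        gcongr
        linarith [Real.add_one_le_exp (r : ℝ)]
    _ = Real.exp ((r : ℝ) ^ 2) := by rw [← Real.exp_nat_mul, sq]

lemma sq_le_exp_two_mul_abs (x : ℝ) : x ^ 2 ≤ Real.exp (2 * |x|) := by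
  have h : |x| ≤ Real.exp |x| := by linarith [Real.add_one_le_exp |x|]
  calc x ^ 2 = |x| ^ 2 := (sq_abs x).symm
    _ ≤ Real.exp |x| ^ 2 := by gcongr
    _ = Real.exp (2 * |x|) := by rw [← Real.exp_nat_mul, Nat.cast_ofNat]

lemma log_one_add_mul_exp_le {A y : ℝ} (hA : 0 ≤ A) (hy : 0 ≤ y) :
    Real.log (1 + A * Real.exp y) ≤ A + y := by
  rw [Real.log_le_iff_le_exp (by positivity), Real.exp_add]
  nlinarith [Real.add_one_le_exp A, Real.one_le_exp hy]

variable {T : Type*} [Fintype T] {ω : T → Circle} {c : T → ℂ} {P : T → OscillationData}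
  {a b : ℝ → ℝ} {δ : ℝ}

lemma one_div_sq_le_exp {K x : ℝ} (hδ : 0 < δ) (h : 1 / δ ≤ Real.exp (K * |x|)) :
    1 / δ ^ 2 ≤ Real.exp (2 * K * |x|) :=
  calc 1 / δ ^ 2 = (1 / δ) ^ 2 := by rw [one_div_pow]
    _ ≤ Real.exp (K * |x|) ^ 2 := pow_le_pow_left₀ (one_div_nonneg.mpr hδ.le) h 2
    _ = Real.exp (2 * K * |x|) := by rw [← Real.exp_nat_mul, Nat.cast_ofNat, mul_assoc]

lemma one_div_le_exp_two_mul {K x : ℝ} (hK : 0 ≤ K) (h : 1 / δ ≤ Real.exp (K * |x|)) :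
    1 / δ ≤ Real.exp (2 * K * |x|) :=
  h.trans (Real.exp_le_exp.mpr (by nlinarith [mul_nonneg hK (abs_nonneg x)]))

lemma SeparatedSymbols.abs_logDetRatio_le_of_truncation (h : SeparatedSymbols ω c P a b δ)
    {κ : T → ℕ → ℂ} {C D ε : ℝ} {N L : ℕ} (hC : 0 ≤ C) (hκ : ∀ t l, ‖κ t l‖ ≤ C)
    (hD : 1 / δ ≤ D) (hD' : 1 / δ ^ 2 ≤ D)
    (hε : NuclearNormLE (remainderSum ω c P N - truncatedRemainder κ c P N L) ε)
    (hεD : D * ε ≤ 1 / 2) :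
    |logDetRatio a b N| ≤ 1 + (Fintype.card T * L : ℝ) ^ 2 +
      Fintype.card T * L * Real.log (1 + 8 * C * ((∑ t, ‖c t‖) * D)) := by
  have hDpos : 0 < D := (one_div_pos.mpr h.left.pos).trans_le hD
  have hbase : 0 < 1 + 8 * C * ((∑ t, ‖c t‖) * D) := by positivity
  refine h.abs_logDetRatio_le_of_norm_det_le N hD hD' fun G hG => ?_
  have hweight (s t) : ‖c s.1 * κ s.1 s.2‖ * (l2norm (rightVec P N L s) *
      l2norm (leftVec P N L t)) ≤ 4 * C * ∑ t, ‖c t‖ :=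
    (norm_weight_mul_l2norm_le hκ c P N L s t).trans <| mul_le_mul_of_nonneg_left
      (Finset.single_le_sum (f := fun t => ‖c t‖) (fun t _ => norm_nonneg _)
        (Finset.mem_univ s.1)) (by positivity)
  have hdet := norm_det_one_add_sumRankOne_add_mul_le (by positivity) hG hweight hε hεD
  rw [← truncatedRemainder, add_sub_cancel] at hdet
  refine hdet.trans ?_
  have hcard : ((Fintype.card (T × Fin L) : ℕ) : ℝ) = Fintype.card T * L := by
    rw [Fintype.card_prod, Fintype.card_fin, Nat.cast_mul]
  rw [Real.exp_add, Real.exp_add, ← hcard, ← Real.log_pow,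
    Real.exp_log (pow_pos hbase _),
    show (4 * C * ∑ t, ‖c t‖) * (2 * D) = 8 * C * ((∑ t, ‖c t‖) * D) by ring,
    mul_assoc (Real.exp 1)]
  gcongr
  exact factorial_le_exp_sq _

lemma exists_abs_logDetRatio_le_of_abs_le_one (hω : ∀ t, ω t ≠ 1) {K : ℝ} (hK : 0 ≤ K) :
    ∃ K' : ℝ, 0 ≤ K' ∧ ∀ (x : ℝ) (c : T → ℂ) (P : T → OscillationData) (a b : ℝ → ℝ) (δ : ℝ)
      (N : ℕ), |x| ≤ 1 → SeparatedSymbols ω c P a b δ →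
      ∑ t, ‖c t‖ ≤ K * x ^ 2 * Real.exp (K * |x|) → 1 / δ ≤ Real.exp (K * |x|) →
      |logDetRatio a b N| ≤ K' * x ^ 2 := by
  obtain ⟨K₀, hK₀, hnuc⟩ := exists_nuclearNormLE_remainderSum hω
  set A : ℝ := Real.exp (2 * K) * (K₀ * (K * Real.exp K))
  refine ⟨A + A ^ 2 / 2, by positivity, fun x c P a b δ N hx h hc hδ => ?_⟩
  have hsum : Real.exp (2 * K * |x|) * (K₀ * ∑ t, ‖c t‖) ≤ A * x ^ 2 :=
    calc Real.exp (2 * K * |x|) * (K₀ * ∑ t, ‖c t‖)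
        ≤ Real.exp (2 * K * 1) * (K₀ * (K * x ^ 2 * Real.exp (K * 1))) := by
          gcongr
          exact hc.trans (by gcongr)
      _ = A * x ^ 2 := by
          rw [mul_one, mul_one]
          ring
  have hx2 : x ^ 2 ≤ 1 := by rwa [sq_le_one_iff_abs_le_one]
  have hsq : (A * x ^ 2) ^ 2 ≤ A ^ 2 * x ^ 2 := by
    rw [mul_pow]
    exact mul_le_mul_of_nonneg_left (pow_le_of_le_one (sq_nonneg x) hx2 two_ne_zero) (sq_nonneg A)
  calc |logDetRatio a b N|
      ≤ Real.exp (2 * K * |x|) * (K₀ * ∑ t, ‖c t‖) +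
          (Real.exp (2 * K * |x|) * (K₀ * ∑ t, ‖c t‖)) ^ 2 / 2 :=
        h.abs_logDetRatio_le_of_nuclearNormLE N (one_div_le_exp_two_mul hK hδ)
          (one_div_sq_le_exp h.left.pos hδ) (hnuc c P N)
    _ ≤ A * x ^ 2 + (A * x ^ 2) ^ 2 / 2 := by gcongr
    _ ≤ (A + A ^ 2 / 2) * x ^ 2 := by linarith

lemma mul_exp_le_of_le {K x S Q : ℝ} (hK : 0 ≤ K) (hQ : 3 * K + 2 ≤ Q)
    (hS : S ≤ K * x ^ 2 * Real.exp (K * |x|)) :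
    S * Real.exp (2 * K * |x|) ≤ K * Real.exp (Q * |x|) :=
  calc S * Real.exp (2 * K * |x|)
      ≤ K * Real.exp (2 * |x|) * Real.exp (K * |x|) * Real.exp (2 * K * |x|) := by
        gcongr
        exact hS.trans (by gcongr; exact sq_le_exp_two_mul_abs x)
    _ = K * Real.exp ((3 * K + 2) * |x|) := by
        rw [mul_assoc, mul_assoc, ← Real.exp_add, ← Real.exp_add]
        ring_nf
    _ ≤ K * Real.exp (Q * |x|) := by gcongr

lemma exp_half_abs_sq (x : ℝ) : Real.exp (|x| / 2) ^ 2 = Real.exp |x| := by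
  rw [← Real.exp_nat_mul, Nat.cast_ofNat, mul_div_cancel₀ _ two_ne_zero]

lemma mul_exp_le_ceil_add_one_pow {A : ℝ} (hA : 1 ≤ A) {Q : ℕ} (hQ : Q ≠ 0) (x : ℝ) :
    A * Real.exp (Q * |x|) ≤ (⌈A * Real.exp (|x| / 2)⌉₊ + 1 : ℝ) ^ (2 * Q) :=
  calc A * Real.exp (Q * |x|) ≤ A ^ (2 * Q) * Real.exp (|x| / 2) ^ (2 * Q) := by
        rw [pow_mul (Real.exp _), exp_half_abs_sq, ← Real.exp_nat_mul]
        gcongr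
        exact le_self_pow₀ hA (by positivity)
    _ = (A * Real.exp (|x| / 2)) ^ (2 * Q) := (mul_pow ..).symm
    _ ≤ (⌈A * Real.exp (|x| / 2)⌉₊ + 1 : ℝ) ^ (2 * Q) := by
        gcongr
        linarith [Nat.le_ceil (A * Real.exp (|x| / 2))]

lemma log_one_add_mul_le_mul_exp_half {B K Q p x : ℝ} (hB : 0 ≤ B) (hK : 0 ≤ K) (hQ : 0 ≤ Q)
    (hp₀ : 0 ≤ p) (hp : p ≤ K * Real.exp (Q * |x|)) :
    Real.log (1 + B * p) ≤ (B * K + 2 * Q) * Real.exp (|x| / 2) := by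
  have hone : 1 ≤ Real.exp (|x| / 2) := Real.one_le_exp (by positivity)
  have habs : |x| ≤ 2 * Real.exp (|x| / 2) := by linarith [Real.add_one_le_exp (|x| / 2)]
  calc Real.log (1 + B * p) ≤ Real.log (1 + B * K * Real.exp (Q * |x|)) := by
        rw [mul_assoc B]
        gcongr
    _ ≤ B * K + Q * |x| := log_one_add_mul_exp_le (by positivity) (by positivity)
    _ ≤ (B * K + 2 * Q) * Real.exp (|x| / 2) := by
        nlinarith [mul_nonneg hB hK, mul_le_mul_of_nonneg_left habs hQ]

/-- Truncating at rank `≍ e^{|x|/2}` already makes the remainder small, since it decays faster than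
any power of the rank; the square of the rank is then the dominating term. -/
lemma exists_abs_logDetRatio_le_mul_exp (hω : ∀ t, ω t ≠ 1) {K : ℝ} (hK : 0 ≤ K) :
    ∃ K' : ℝ, ∀ (x : ℝ) (c : T → ℂ) (P : T → OscillationData) (a b : ℝ → ℝ) (δ : ℝ)
      (N : ℕ), SeparatedSymbols ω c P a b δ →
      ∑ t, ‖c t‖ ≤ K * x ^ 2 * Real.exp (K * |x|) → 1 / δ ≤ Real.exp (K * |x|) →
      |logDetRatio a b N| ≤ K' * Real.exp |x| := by
  obtain ⟨Q, hQ⟩ := exists_nat_gt (3 * K + 2)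
  have hQ0 : Q ≠ 0 := by rintro rfl; norm_num at hQ; linarith
  obtain ⟨C, hC, happrox⟩ := exists_truncatedRemainder_approx hω (2 * Q)
  set M₀ := 2 * C * K + 1
  have hM₀ : 1 ≤ M₀ := le_add_of_nonneg_left (by positivity)
  set R := Fintype.card T * (M₀ + 1 + (2 * Q + 1))
  refine ⟨1 + R ^ 2 + R * (8 * C * K + 2 * Q), fun x c P a b δ N h hc hδ => ?_⟩
  set y := Real.exp (|x| / 2)
  have hy1 : 1 ≤ y := Real.one_le_exp (by positivity)
  set M := ⌈M₀ * y⌉₊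
  obtain ⟨κ, hκ, happrox⟩ := happrox M
  have hSD := mul_exp_le_of_le hK hQ.le hc
  set S := ∑ t, ‖c t‖
  set D := Real.exp (2 * K * |x|)
  have hpow : M₀ * Real.exp (Q * |x|) ≤ (M + 1 : ℝ) ^ (2 * Q) :=
    mul_exp_le_ceil_add_one_pow hM₀ hQ0 x
  have hsmall : D * (C * S / (M + 1 : ℝ) ^ (2 * Q)) ≤ 1 / 2 := by
    rw [mul_div_assoc', div_le_iff₀ (by positivity)]
    nlinarith [mul_le_mul_of_nonneg_left hSD hC, Real.exp_pos (Q * |x|)]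
  have hrank : Fintype.card T * ((M + (2 * Q + 1) : ℕ) : ℝ) ≤ R * y := by
    rw [mul_assoc]
    gcongr
    push_cast
    nlinarith [(Nat.ceil_lt_add_one (by positivity : 0 ≤ M₀ * y)).le, Q.cast_nonneg (α := ℝ)]
  have hlog : Real.log (1 + 8 * C * (S * D)) ≤ (8 * C * K + 2 * Q) * y :=
    log_one_add_mul_le_mul_exp_half (by positivity) hK Q.cast_nonneg (by positivity) hSD
  calc |logDetRatio a b N| ≤ _ := h.abs_logDetRatio_le_of_truncation hC hκ
        (one_div_le_exp_two_mul hK hδ) (one_div_sq_le_exp h.left.pos hδ) (happrox c P N) hsmall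
    _ ≤ 1 * y ^ 2 + (R * y) ^ 2 + R * y * ((8 * C * K + 2 * Q) * y) := by
        have := Real.log_nonneg (show 1 ≤ 1 + 8 * C * (S * D) from
          le_add_of_nonneg_right (by positivity))
        gcongr
        rw [one_mul]
        exact one_le_pow₀ hy1
    _ = (1 + R ^ 2 + R * (8 * C * K + 2 * Q)) * Real.exp |x| := by
        rw [← exp_half_abs_sq]
        ring

theorem exists_abs_logDetRatio_le (hω : ∀ t, ω t ≠ 1) {K : ℝ} (hK : 0 ≤ K) :
    ∃ K' : ℝ, 0 ≤ K' ∧ ∀ (x : ℝ) (c : T → ℂ) (P : T → OscillationData) (a b : ℝ → ℝ) (δ : ℝ)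
      (N : ℕ), SeparatedSymbols ω c P a b δ →
      ∑ t, ‖c t‖ ≤ K * x ^ 2 * Real.exp (K * |x|) → 1 / δ ≤ Real.exp (K * |x|) →
      |logDetRatio a b N| ≤ K' * (x ^ 2 * Real.exp |x|) := by
  obtain ⟨K₁, hK₁, hsmall⟩ := exists_abs_logDetRatio_le_of_abs_le_one hω hK
  obtain ⟨K₂, hlarge⟩ := exists_abs_logDetRatio_le_mul_exp hω hK
  refine ⟨max K₁ K₂, le_max_of_le_left hK₁, fun x c P a b δ N h hc hδ => ?_⟩
  rcases le_total |x| 1 with hx | hx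
  · refine (hsmall x c P a b δ N hx h hc hδ).trans ?_
    exact mul_le_mul (le_max_left _ _)
      (le_mul_of_one_le_right (sq_nonneg x) (Real.one_le_exp (abs_nonneg x))) (sq_nonneg x)
      (le_max_of_le_left hK₁)
  · refine (hlarge x c P a b δ N h hc hδ).trans ?_
    exact mul_le_mul (le_max_right _ _) (le_mul_of_one_le_left (Real.exp_pos _).le
      ((one_le_sq_iff_one_le_abs x).mpr hx)) (Real.exp_pos _).le (le_max_of_le_left hK₁)

end Domination

/-! ### Jump symbols -/

section JumpSymbols

/-- The sign `±1` according to whether `θ` lies before or after the jump location `τ`. -/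
def stepSign (τ θ : ℝ) : ℝ := if θ ≤ τ then 1 else -1

/-- The sawtooth function on `(0, 2π]` with slope `1 / π` and a single jump, of height `-2`, at
`τ`. -/
def sawtooth (τ θ : ℝ) : ℝ := (θ - τ) / π + stepSign τ θ

/-- The pure Fisher–Hartwig jump symbol: the positive function on `(0, 2π]` whose only jump is at
`τ`, where its logarithm drops by `2y`. -/
def pureJump (τ y θ : ℝ) : ℝ := Real.exp (y * sawtooth τ θ)

/-- The product of the pure jump symbols at the locations `τ i`, `i ∈ s`. -/
def jumpSymbol {ι : Type*} (τ y : ι → ℝ) (s : Finset ι) (θ : ℝ) : ℝ :=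
  ∏ i ∈ s, pureJump (τ i) (y i) θ

lemma abs_stepSign (τ θ : ℝ) : |stepSign τ θ| = 1 := by
  unfold stepSign
  split_ifs <;> simp

lemma measurable_sawtooth (τ : ℝ) : Measurable (sawtooth τ) :=
  (by fun_prop : Measurable fun θ => (θ - τ) / π).add
    (Measurable.ite measurableSet_Iic measurable_const measurable_const)

lemma abs_sawtooth_le {τ θ : ℝ} (hτ : τ ∈ Set.Ioo 0 (2 * π)) (hθ : θ ∈ Set.Ioc 0 (2 * π)) :
    |sawtooth τ θ| ≤ 3 := by
  have hslope : |(θ - τ) / π| ≤ 2 := by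
    rw [abs_div, abs_of_pos Real.pi_pos, div_le_iff₀ Real.pi_pos, abs_le]
    constructor <;> linarith [hτ.1, hτ.2, hθ.1, hθ.2]
  exact (abs_add_le _ _).trans (by linarith [abs_stepSign τ θ])

lemma sawtooth_two_pi {τ : ℝ} (hτ : τ ∈ Set.Ioo 0 (2 * π)) :
    sawtooth τ (2 * π) = sawtooth τ 0 := by
  rw [sawtooth, sawtooth, stepSign, stepSign, if_neg (not_le.mpr hτ.2), if_pos hτ.1.le]
  field_simp
  ring

lemma abs_sinh_le (y : ℝ) : |Real.sinh y| ≤ |y| * Real.exp |y| := by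
  rw [Real.abs_sinh, Real.sinh_eq]
  have hneg : Real.exp (-|y|) = Real.exp (-(2 * |y|)) * Real.exp |y| := by
    rw [← Real.exp_add]
    congr 1
    ring
  have hbound := mul_le_mul_of_nonneg_right (Real.add_one_le_exp (-(2 * |y|)))
    (Real.exp_pos |y|).le
  linarith

variable {ι : Type*} {τ y : ι → ℝ} {s : Finset ι}

lemma jumpSymbol_eq_exp (τ y : ι → ℝ) (s : Finset ι) (θ : ℝ) :
    jumpSymbol τ y s θ = Real.exp (∑ i ∈ s, y i * sawtooth (τ i) θ) :=
  (Real.exp_sum s _).symm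

lemma jumpSymbol_singleton (τ y : ι → ℝ) (k : ι) :
    jumpSymbol τ y {k} = pureJump (τ k) (y k) := by
  funext θ
  rw [jumpSymbol, Finset.prod_singleton]

lemma jumpSymbol_pos (τ y : ι → ℝ) (s : Finset ι) (θ : ℝ) : 0 < jumpSymbol τ y s θ :=
  Finset.prod_pos fun _ _ => Real.exp_pos _

lemma measurable_jumpSymbol (τ y : ι → ℝ) (s : Finset ι) : Measurable (jumpSymbol τ y s) :=
  Finset.measurable_fun_prod s fun i _ => ((measurable_sawtooth (τ i)).const_mul (y i)).exp

lemma jumpSymbol_two_pi (hτ : ∀ i ∈ s, τ i ∈ Set.Ioo 0 (2 * π)) :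
    jumpSymbol τ y s (2 * π) = jumpSymbol τ y s 0 :=
  Finset.prod_congr rfl fun i hi => by rw [pureJump, pureJump, sawtooth_two_pi (hτ i hi)]

lemma abs_sum_mul_sawtooth_le (hτ : ∀ i ∈ s, τ i ∈ Set.Ioo 0 (2 * π)) {θ : ℝ}
    (hθ : θ ∈ Set.Ioc 0 (2 * π)) :
    |∑ i ∈ s, y i * sawtooth (τ i) θ| ≤ 3 * ∑ i ∈ s, |y i| := by
  rw [Finset.mul_sum]
  refine (Finset.abs_sum_le_sum_abs _ _).trans (Finset.sum_le_sum fun i hi => ?_)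
  rw [abs_mul, mul_comm]
  exact mul_le_mul_of_nonneg_right (abs_sawtooth_le (hτ i hi) hθ) (abs_nonneg _)

lemma jumpSymbol_le (hτ : ∀ i ∈ s, τ i ∈ Set.Ioo 0 (2 * π)) {θ : ℝ} (hθ : θ ∈ Set.Ioc 0 (2 * π)) :
    jumpSymbol τ y s θ ≤ Real.exp (3 * ∑ i ∈ s, |y i|) := by
  rw [jumpSymbol_eq_exp]
  exact Real.exp_le_exp.mpr (abs_le.mp (abs_sum_mul_sawtooth_le hτ hθ)).2

lemma le_jumpSymbol (hτ : ∀ i ∈ s, τ i ∈ Set.Ioo 0 (2 * π)) {θ : ℝ} (hθ : θ ∈ Set.Ioc 0 (2 * π)) :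
    Real.exp (-(3 * ∑ i ∈ s, |y i|)) ≤ jumpSymbol τ y s θ := by
  rw [jumpSymbol_eq_exp]
  exact Real.exp_le_exp.mpr (abs_le.mp (abs_sum_mul_sawtooth_le hτ hθ)).1

lemma memLp_jumpSymbol (y : ι → ℝ) (hτ : ∀ i ∈ s, τ i ∈ Set.Ioo 0 (2 * π)) :
    MemLp (jumpSymbol τ y s) ⊤ periodMeasure := by
  refine memLp_top_of_bound (measurable_jumpSymbol τ y s).aestronglyMeasurable
    (Real.exp (3 * ∑ i ∈ s, |y i|)) ?_
  filter_upwards [ae_restrict_mem measurableSet_Ioc] with θ hθ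
  rw [Real.norm_eq_abs, abs_of_pos (jumpSymbol_pos τ y s θ)]
  exact jumpSymbol_le hτ hθ

lemma coerciveSymbol_jumpSymbol (hτ : ∀ i ∈ s, τ i ∈ Set.Ioo 0 (2 * π)) {M : ℝ}
    (hM : 3 * ∑ i ∈ s, |y i| ≤ M) : CoerciveSymbol (jumpSymbol τ y s) (Real.exp (-M)) where
  memLp := memLp_jumpSymbol y hτ
  pos := Real.exp_pos _
  le := by
    filter_upwards [ae_restrict_mem measurableSet_Ioc] with θ hθ
    exact (Real.exp_le_exp.mpr (neg_le_neg hM)).trans (le_jumpSymbol hτ hθ)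

variable [DecidableEq ι]

lemma exp_sum_mul_stepSign (y : ι → ℝ) (hinj : Set.InjOn τ s) (θ : ℝ) :
    Real.exp (∑ i ∈ s, y i * stepSign (τ i) θ) = Real.exp (-∑ i ∈ s, y i) +
      ∑ i ∈ s, if θ ≤ τ i then
        2 * Real.sinh (y i) * Real.exp (∑ j ∈ s.erase i, y j * stepSign (τ j) (τ i)) else 0 := by
  induction s using Finset.induction_on_max_value τ with
  | empty => simp
  | insert k s hk hmax ih =>
    have hlt (i) (hi : i ∈ s) : τ i < τ k := (hmax i hi).lt_of_ne fun h =>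
      hk (hinj (by simp [hi]) (by simp) h ▸ hi)
    have hold (i) (hi : i ∈ s) :
        Real.exp (∑ j ∈ (insert k s).erase i, y j * stepSign (τ j) (τ i)) =
          Real.exp (y k) * Real.exp (∑ j ∈ s.erase i, y j * stepSign (τ j) (τ i)) := by
      rw [Finset.erase_insert_of_ne (ne_of_mem_of_not_mem hi hk).symm,
        Finset.sum_insert (fun h => hk (Finset.mem_of_mem_erase h)), stepSign,
        if_pos (hlt i hi).le, mul_one, Real.exp_add]
    have hnew : ∑ j ∈ s, y j * stepSign (τ j) (τ k) = -∑ j ∈ s, y j := by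
      rw [← Finset.sum_neg_distrib]
      refine Finset.sum_congr rfl fun j hj => ?_
      rw [stepSign, if_neg (not_le.mpr (hlt j hj)), mul_neg_one]
    rw [Finset.sum_insert hk, Finset.sum_insert hk, Finset.sum_insert hk,
      Finset.erase_insert hk, hnew, Real.exp_add, ih (hinj.mono (by simp)), neg_add, Real.exp_add]
    by_cases hθ : θ ≤ τ k
    · have hsum : (∑ i ∈ s, if θ ≤ τ i then 2 * Real.sinh (y i) *
          Real.exp (∑ j ∈ (insert k s).erase i, y j * stepSign (τ j) (τ i)) else 0) =
          Real.exp (y k) * ∑ i ∈ s, if θ ≤ τ i then 2 * Real.sinh (y i) *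
            Real.exp (∑ j ∈ s.erase i, y j * stepSign (τ j) (τ i)) else 0 := by
        rw [Finset.mul_sum]
        refine Finset.sum_congr rfl fun i hi => ?_
        rw [hold i hi, mul_ite, mul_zero, mul_left_comm]
      rw [stepSign, if_pos hθ, if_pos hθ, hsum, Real.sinh_eq]
      ring_nf
    · have hafter (B : ι → ℝ) : (∑ i ∈ s, if θ ≤ τ i then B i else 0) = 0 :=
        Finset.sum_eq_zero fun i hi => if_neg fun h => hθ (h.trans (hlt i hi).le)
      rw [stepSign, if_neg hθ, if_neg hθ, hafter, hafter, mul_neg_one]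
      ring

lemma jumpSymbol_eq_exp_mul (y : ι → ℝ) (hinj : Set.InjOn τ s) (θ : ℝ) :
    jumpSymbol τ y s θ = Real.exp ((∑ i ∈ s, y i) / π * θ) *
      (Real.exp (-∑ i ∈ s, (y i / π * τ i + y i)) +
        ∑ i ∈ s, if θ ≤ τ i then Real.exp (-((∑ i ∈ s, y i) / π * τ i)) *
          (2 * Real.sinh (y i) * jumpSymbol τ y (s.erase i) (τ i)) else 0) := by
  have hsplit (t : Finset ι) (θ : ℝ) : jumpSymbol τ y t θ =
      Real.exp (∑ i ∈ t, y i * ((θ - τ i) / π)) *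
        Real.exp (∑ i ∈ t, y i * stepSign (τ i) θ) := by
    rw [jumpSymbol_eq_exp, ← Real.exp_add, ← Finset.sum_add_distrib]
    simp only [sawtooth, mul_add]
  have hslope (θ : ℝ) : ∑ i ∈ s, y i * ((θ - τ i) / π) =
      (∑ i ∈ s, y i) / π * θ - ∑ i ∈ s, y i / π * τ i := by
    rw [Finset.sum_div, Finset.sum_mul, ← Finset.sum_sub_distrib]
    exact Finset.sum_congr rfl fun i _ => by ring
  rw [hsplit, exp_sum_mul_stepSign y hinj, hslope, sub_eq_add_neg, Real.exp_add, mul_assoc, mul_add,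
    ← Real.exp_add, Finset.mul_sum, Finset.sum_add_distrib, neg_add]
  congr 2
  refine Finset.sum_congr rfl fun i hi => ?_
  have herase : ∑ j ∈ s.erase i, y j * ((τ i - τ j) / π) =
      (∑ i ∈ s, y i) / π * τ i - ∑ i ∈ s, y i / π * τ i := by
    rw [← hslope, ← Finset.sum_erase_add _ _ hi, sub_self, zero_div, mul_zero, add_zero]
  rw [mul_ite, mul_zero, hsplit, herase, sub_eq_add_neg, Real.exp_add, Real.exp_neg (_ * _)]
  congr 1
  field_simp

end JumpSymbols

section JumpCoefficients

open Complex (I)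

lemma intCast_add_mul_I_ne_zero {n : ℤ} (hn : n ≠ 0) (μ : ℝ) : (n : ℂ) + μ * I ≠ 0 := fun h =>
  hn (by simpa using congrArg Complex.re h)

lemma intervalIntegrable_step_mul_exp (w : ℂ) (τ a b : ℝ) :
    IntervalIntegrable (fun t : ℝ => if t ≤ τ then Complex.exp (w * t) else 0) volume a b := by
  have hexp : IntervalIntegrable (fun t : ℝ => Complex.exp (w * t)) volume a b :=
    Continuous.intervalIntegrable (by fun_prop) a b
  exact ⟨hexp.1.indicator measurableSet_Iic, hexp.2.indicator measurableSet_Iic⟩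

lemma integral_step_mul_exp {w : ℂ} (hw : w ≠ 0) {τ T : ℝ} (hτ : τ ∈ Set.Icc 0 T) :
    (∫ t in (0 : ℝ)..T, if t ≤ τ then Complex.exp (w * t) else 0) =
      (Complex.exp (w * τ) - 1) / w := by
  refine (intervalIntegral.integral_indicator (f := fun t : ℝ => Complex.exp (w * t)) hτ).trans ?_
  rw [integral_exp_mul_complex hw]
  simp

variable {ι : Type*} {s : Finset ι} {τ : ι → ℝ}

lemma integral_exp_mul_step {w : ℂ} (hw : w ≠ 0) {T : ℝ} (hτ : ∀ i ∈ s, τ i ∈ Set.Icc 0 T) (β : ℂ)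
    (B : ι → ℂ) :
    ∫ t in (0 : ℝ)..T, Complex.exp (w * t) * (β + ∑ i ∈ s, if t ≤ τ i then B i else 0) =
      (β * (Complex.exp (w * T) - 1) + ∑ i ∈ s, B i * (Complex.exp (w * τ i) - 1)) / w := by
  have hint (i) : IntervalIntegrable
      (fun t : ℝ => B i * if t ≤ τ i then Complex.exp (w * t) else 0) volume 0 T :=
    (intervalIntegrable_step_mul_exp w (τ i) 0 T).const_mul _
  calc ∫ t in (0 : ℝ)..T, Complex.exp (w * t) * (β + ∑ i ∈ s, if t ≤ τ i then B i else 0)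
      = ∫ t in (0 : ℝ)..T, (β * Complex.exp (w * t) +
          ∑ i ∈ s, B i * if t ≤ τ i then Complex.exp (w * t) else 0) := by
        congr 1
        ext t
        rw [mul_add, mul_comm, Finset.mul_sum]
        simp only [mul_ite, mul_zero, mul_comm]
    _ = β * ((Complex.exp (w * T) - 1) / w) +
          ∑ i ∈ s, B i * ((Complex.exp (w * τ i) - 1) / w) := by
        have hsum : IntervalIntegrable (fun t : ℝ => ∑ i ∈ s,
            B i * if t ≤ τ i then Complex.exp (w * t) else 0) volume 0 T := by
          simpa only [Finset.sum_fn] using IntervalIntegrable.sum s fun i _ => hint i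
        rw [intervalIntegral.integral_add (Continuous.intervalIntegrable (by fun_prop) _ _) hsum,
          intervalIntegral.integral_finsetSum fun i _ => hint i,
          intervalIntegral.integral_const_mul, integral_exp_mul_complex hw]
        simp only [intervalIntegral.integral_const_mul, Complex.ofReal_zero, mul_zero,
          Complex.exp_zero]
        congr 1
        exact Finset.sum_congr rfl fun i hi => by rw [integral_step_mul_exp hw (hτ i hi)]
    _ = _ := by simp only [add_div, Finset.sum_div, mul_div_assoc]

lemma exp_sub_I_mul_mul (μ : ℝ) (n : ℤ) (t : ℝ) : Complex.exp ((μ - I * n) * t) =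
    (Real.exp (μ * t) : ℂ) * Complex.exp (-I * n * t) := by
  rw [Complex.ofReal_exp, ← Complex.exp_add]
  congr 1
  push_cast
  ring

lemma mul_exp_two_pi_sub_one_eq_sum {A : ℝ → ℝ} {μ β : ℝ} {B : ι → ℝ}
    (hτ : ∀ i ∈ s, τ i ∈ Set.Ioo 0 (2 * π))
    (hA : ∀ t, A t = Real.exp (μ * t) * (β + ∑ i ∈ s, if t ≤ τ i then B i else 0))
    (hper : A (2 * π) = A 0) (n : ℤ) :
    (β : ℂ) * (Complex.exp ((μ - I * n) * (2 * π : ℝ)) - 1) = ∑ i ∈ s, (B i : ℂ) := by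
  have hβ : (Real.exp (μ * (2 * π)) * β : ℂ) = β + ∑ i ∈ s, (B i : ℂ) := by
    rw [hA, hA, Finset.sum_eq_zero fun i hi => if_neg (not_le.mpr (hτ i hi).2),
      Finset.sum_congr rfl fun i hi => if_pos (hτ i hi).1.le] at hper
    exact_mod_cast (by simpa using hper : Real.exp (μ * (2 * π)) * β = β + ∑ i ∈ s, B i)
  have hround : Complex.exp (-I * n * (2 * π : ℝ)) = 1 :=
    Complex.exp_eq_one_iff.mpr ⟨-n, by push_cast; ring⟩
  rw [exp_sub_I_mul_mul, hround]
  linear_combination hβ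

/-- Periodicity cancels the boundary terms, so only the jumps contribute. -/
lemma fourierCoef_exp_mul_step {A : ℝ → ℝ} {μ β : ℝ} {B : ι → ℝ}
    (hτ : ∀ i ∈ s, τ i ∈ Set.Ioo 0 (2 * π))
    (hA : ∀ t, A t = Real.exp (μ * t) * (β + ∑ i ∈ s, if t ≤ τ i then B i else 0))
    (hper : A (2 * π) = A 0) {n : ℤ} (hn : (n : ℂ) + μ * I ≠ 0) :
    fourierCoef A n = ∑ i ∈ s, I * (B i * Real.exp (μ * τ i) / (2 * π) : ℝ) *
      Complex.exp (-I * n * τ i) / (n + μ * I) := by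
  set w : ℂ := μ - I * n with hw
  have hwI : w = -I * (n + μ * I) := by
    linear_combination hw + (μ : ℂ) * Complex.I_sq
  have hw0 : w ≠ 0 := hwI ▸ mul_ne_zero (neg_ne_zero.mpr Complex.I_ne_zero) hn
  have hexp := exp_sub_I_mul_mul μ n
  rw [← hw] at hexp
  have hboundary : (β : ℂ) * (Complex.exp (w * (2 * π : ℝ)) - 1) = ∑ i ∈ s, (B i : ℂ) :=
    mul_exp_two_pi_sub_one_eq_sum hτ hA hper n
  calc fourierCoef A n
      = 1 / (2 * π) * ∫ t in (0 : ℝ)..2 * π,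
          Complex.exp (w * t) * (β + ∑ i ∈ s, if t ≤ τ i then (B i : ℂ) else 0) := by
        rw [fourierCoef]
        congr 2
        ext t
        rw [hA, hexp]
        push_cast
        simp only [apply_ite Complex.ofReal, Complex.ofReal_zero]
        ring
    _ = 1 / (2 * π) * ((∑ i ∈ s, B i * Complex.exp (w * τ i)) / w) := by
        rw [integral_exp_mul_step hw0 fun i hi => Set.Ioo_subset_Icc_self (hτ i hi), hboundary,
          ← Finset.sum_add_distrib]
        congr 3 with i
        ring
    _ = _ := by
        rw [Finset.sum_div, Finset.mul_sum]
        refine Finset.sum_congr rfl fun i _ => ?_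
        have hpi : (π : ℂ) ≠ 0 := by exact_mod_cast Real.pi_ne_zero
        rw [hexp, hwI]
        push_cast
        field_simp
        linear_combination (-(B i : ℂ)) * Complex.I_sq

variable [DecidableEq ι] {y : ι → ℝ}

/-- The coefficient of `e^{-inτ_i} / (n + iμ)` in the `n`-th Fourier coefficient of
`jumpSymbol τ y s`, namely `i / 2π` times the height of the drop of the symbol at `τ i`. -/
def jumpCoef (τ y : ι → ℝ) (s : Finset ι) (i : ι) : ℂ :=
  I * (Real.sinh (y i) * jumpSymbol τ y (s.erase i) (τ i) / π : ℝ)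

lemma fourierCoef_jumpSymbol (hτ : ∀ i ∈ s, τ i ∈ Set.Ioo 0 (2 * π)) (hinj : Set.InjOn τ s)
    {n : ℤ} (hn : (n : ℂ) + ((∑ i ∈ s, y i) / π : ℝ) * I ≠ 0) :
    fourierCoef (jumpSymbol τ y s) n = ∑ i ∈ s, jumpCoef τ y s i *
      (Complex.exp (-I * n * τ i) / (n + ((∑ i ∈ s, y i) / π : ℝ) * I)) := by
  rw [fourierCoef_exp_mul_step hτ (jumpSymbol_eq_exp_mul y hinj) (jumpSymbol_two_pi hτ) hn]
  refine Finset.sum_congr rfl fun i _ => ?_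
  rw [jumpCoef, mul_div_assoc]
  congr 3
  rw [Real.exp_neg]
  field_simp

lemma norm_jumpCoef_le (hτ : ∀ i ∈ s, τ i ∈ Set.Ioo 0 (2 * π)) {i : ι} (hi : i ∈ s) :
    ‖jumpCoef τ y s i‖ ≤ |y i| * Real.exp (3 * ∑ j ∈ s, |y j|) := by
  have hsinh := abs_sinh_le (y i)
  have hrest : jumpSymbol τ y (s.erase i) (τ i) ≤ Real.exp (3 * ∑ j ∈ s.erase i, |y j|) :=
    jumpSymbol_le (fun j hj => hτ j (Finset.mem_of_mem_erase hj))
      (Set.Ioo_subset_Ioc_self (hτ i hi))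
  have hpos := jumpSymbol_pos τ y (s.erase i) (τ i)
  rw [jumpCoef, norm_mul, Complex.norm_I, one_mul, Complex.norm_real, Real.norm_eq_abs, abs_div,
    abs_mul, abs_of_pos hpos, abs_of_pos Real.pi_pos]
  calc |Real.sinh (y i)| * jumpSymbol τ y (s.erase i) (τ i) / π
      ≤ |Real.sinh (y i)| * jumpSymbol τ y (s.erase i) (τ i) :=
        div_le_self (by positivity) (by linarith [Real.pi_gt_three])
    _ ≤ |y i| * Real.exp |y i| * Real.exp (3 * ∑ j ∈ s.erase i, |y j|) := by gcongr
    _ = |y i| * Real.exp (|y i| + 3 * ∑ j ∈ s.erase i, |y j|) := by rw [mul_assoc, Real.exp_add]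
    _ ≤ |y i| * Real.exp (3 * ∑ j ∈ s, |y j|) := by
        rw [← Finset.add_sum_erase s _ hi]
        gcongr
        linarith [abs_nonneg (y i)]

end JumpCoefficients

section JumpRemainder

open Complex (I)

lemma decayTerm_zero_order (z : Circle) (m : ℝ) (l j : ℕ) :
    decayTerm z m 0 l j = (z : ℂ) ^ j / ((j + l + 1 : ℕ) + m * I) := by
  simp [decayTerm]

lemma exp_div_eq_decayTerm (τ μ : ℝ) (j l : ℕ) :
    Complex.exp (-I * ((j + l + 1 : ℕ) : ℤ) * τ) / (((j + l + 1 : ℕ) : ℤ) + μ * I) =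
      (Circle.exp (-τ) : ℂ) ^ (l + 1) * decayTerm (Circle.exp (-τ)) μ 0 l j := by
  rw [decayTerm_zero_order, ← mul_div_assoc, ← pow_add, Circle.coe_exp, ← Complex.exp_nat_mul,
    Int.cast_natCast]
  congr 2
  push_cast
  ring

lemma exp_div_neg_eq_decayTerm (τ μ : ℝ) (j l : ℕ) :
    Complex.exp (-I * ((-(j + l + 1 : ℕ) : ℤ) : ℂ) * τ) / (((-(j + l + 1 : ℕ) : ℤ) : ℂ) + μ * I) =
      -((Circle.exp τ : ℂ) ^ (l + 1) * decayTerm (Circle.exp τ) (-μ) 0 l j) := by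
  have h := exp_div_eq_decayTerm (-τ) (-μ) j l
  rw [neg_neg] at h
  rw [← h, ← div_neg]
  congr 1
  · congr 1
    push_cast
    ring
  · push_cast
    ring

lemma toeplitz_mul_apply {a b : ℝ → ℝ} (ha : MemLp a ⊤ periodMeasure)
    (hb : MemLp b ⊤ periodMeasure) {N : ℕ} (p q : Fin N) :
    toeplitz (fun t => a t * b t) N p q = (toeplitz a N * toeplitz b N) p q +
      ∑' l : ℕ, fourierCoef a (-(endDist true p + l + 1 : ℕ)) *
        fourierCoef b (endDist true q + l + 1 : ℕ) +
      ∑' l : ℕ, fourierCoef a (endDist false p + l + 1 : ℕ) *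
        fourierCoef b (-(endDist false q + l + 1 : ℕ)) := by
  set F : ℤ → ℂ := fun m => fourierCoef a (p - m) * fourierCoef b (m - q) with hF
  have hsum : HasSum F (toeplitz (fun t => a t * b t) N p q) := by
    have h := hasSum_fourierCoef_mul ha hb ((p : ℤ) - q)
    rw [← (Equiv.subRight (q : ℤ)).hasSum_iff] at h
    simp only [Function.comp_def, Equiv.subRight_apply, sub_sub_sub_cancel_right] at h
    exact h
  have hnonneg : Summable fun n : ℕ => F n := hsum.summable.comp_injective Nat.cast_injective
  have hneg : Summable fun n : ℕ => F (-(n + 1)) :=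
    hsum.summable.comp_injective (i := fun n : ℕ => (-((n : ℤ) + 1))) fun m n h => by simpa using h
  have hmid : ∑ m ∈ Finset.range N, F m = (toeplitz a N * toeplitz b N) p q := by
    rw [Matrix.mul_apply, ← Fin.sum_univ_eq_sum_range fun m => F m]
    rfl
  rw [← hsum.tsum_eq, tsum_of_nat_of_neg_add_one hnonneg hneg, ← hnonneg.sum_add_tsum_nat_add N,
    hmid]
  congr 2
  · refine tsum_congr fun l => ?_
    simp only [hF, endDist, if_true, Fin.val_rev]
    congr 2 <;> omega
  · funext l
    simp only [hF, endDist, Bool.false_eq_true, if_false]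
    congr 2
    omega

variable {ι : Type*} [Fintype ι] (τ : ι → ℝ) (κ : ℝ)

/-- The frequencies with which the remainder of a product of symbols with jumps at `τ i` and at `κ`
oscillates; the second component of the index is the end of the chain. -/
def jumpFrequency (t : ι × Bool) : Circle :=
  Circle.exp (if t.2 then τ t.1 - κ else κ - τ t.1)

/-- The oscillation data of the remainder of a product of symbols whose Fourier coefficients are
combinations of `e^{-inτ_i} / (n + iμ)` and a multiple of `e^{-inκ} / (n + iμ')`. -/
def jumpData (μ μ' : ℝ) (t : ι × Bool) : OscillationData where
  σ := t.2
  z := Circle.exp (if t.2 then τ t.1 else -τ t.1)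
  z' := Circle.exp (if t.2 then -κ else κ)
  m := if t.2 then -μ else μ
  m' := if t.2 then μ' else -μ'

/-- The weights of the oscillating sums in the remainder of a product of two jump symbols with jump
coefficients `J` and `J'`. -/
def jumpWeight (J : ι → ℂ) (J' : ℂ) (t : ι × Bool) : ℂ :=
  -(J t.1 * J' * jumpFrequency τ κ t)

lemma remainderSum_jumpData_apply (J : ι → ℂ) (J' : ℂ) (μ μ' : ℝ) (N : ℕ) (p q : Fin N) :
    remainderSum (jumpFrequency τ κ) (jumpWeight τ κ J J') (jumpData τ κ μ μ') N p q =
      ∑' l : ℕ, ∑ i, J i * J' * (-((Circle.exp (τ i) : ℂ) ^ (l + 1) *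
          decayTerm (Circle.exp (τ i)) (-μ) 0 l (endDist true p))) *
        ((Circle.exp (-κ) : ℂ) ^ (l + 1) * decayTerm (Circle.exp (-κ)) μ' 0 l (endDist true q)) +
      ∑' l : ℕ, ∑ i, J i * J' * ((Circle.exp (-τ i) : ℂ) ^ (l + 1) *
          decayTerm (Circle.exp (-τ i)) μ 0 l (endDist false p)) *
        (-((Circle.exp κ : ℂ) ^ (l + 1) *
          decayTerm (Circle.exp κ) (-μ') 0 l (endDist false q))) := by
  have hsummable (t : ι × Bool) := (summable_pow_mul (jumpFrequency τ κ t)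
    (summable_decayRankOne_apply N (jumpData τ κ μ μ' t).σ (jumpData τ κ μ μ' t).z
      (jumpData τ κ μ μ' t).z' (jumpData τ κ μ μ' t).m (jumpData τ κ μ μ' t).m' p q)).mul_left
    (jumpWeight τ κ J J' t)
  rw [remainderSum, Matrix.sum_apply, Fintype.sum_prod_type_right, Fintype.sum_bool]
  simp only [Matrix.smul_apply, oscillatingSum, Matrix.of_apply, smul_eq_mul, ← tsum_mul_left]
  rw [← Summable.tsum_finsetSum fun i _ => hsummable (i, true),
    ← Summable.tsum_finsetSum fun i _ => hsummable (i, false)]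
  congr 1 <;> refine tsum_congr fun l => Finset.sum_congr rfl fun i _ => ?_
  · simp only [jumpWeight, jumpFrequency, jumpData, if_true, decayRankOne, Matrix.vecMulVec_apply,
      decayVec, endVec, add_zero, sub_eq_add_neg, Circle.exp_add, Circle.coe_mul]
    ring
  · simp only [jumpWeight, jumpFrequency, jumpData, Bool.false_eq_true, if_false, decayRankOne,
      Matrix.vecMulVec_apply, decayVec, endVec, add_zero, sub_eq_add_neg, Circle.exp_add,
      Circle.coe_mul]
    ring

lemma toeplitz_mul_eq_add_remainderSum {a b : ℝ → ℝ} (ha : MemLp a ⊤ periodMeasure)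
    (hb : MemLp b ⊤ periodMeasure) {μ μ' : ℝ} {J : ι → ℂ} {J' : ℂ}
    (hcoefa : ∀ n : ℤ, n ≠ 0 →
      fourierCoef a n = ∑ i, J i * (Complex.exp (-I * n * τ i) / (n + μ * I)))
    (hcoefb : ∀ n : ℤ, n ≠ 0 →
      fourierCoef b n = J' * (Complex.exp (-I * n * κ) / (n + μ' * I))) (N : ℕ) :
    toeplitz (fun t => a t * b t) N = toeplitz a N * toeplitz b N +
      remainderSum (jumpFrequency τ κ) (jumpWeight τ κ J J') (jumpData τ κ μ μ') N := by
  ext p q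
  have hne (n : ℕ) : ((n + 1 : ℕ) : ℤ) ≠ 0 := by omega
  rw [toeplitz_mul_apply ha hb, Matrix.add_apply, remainderSum_jumpData_apply, add_assoc]
  congr 2
  · refine tsum_congr fun l => ?_
    rw [hcoefa _ (neg_ne_zero.mpr (hne _)), hcoefb _ (hne _), Finset.sum_mul]
    refine Finset.sum_congr rfl fun i _ => ?_
    rw [exp_div_eq_decayTerm, exp_div_neg_eq_decayTerm]
    ring
  · refine tsum_congr fun l => ?_
    rw [hcoefa _ (hne _), hcoefb _ (neg_ne_zero.mpr (hne _)), Finset.sum_mul]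
    refine Finset.sum_congr rfl fun i _ => ?_
    rw [exp_div_eq_decayTerm, exp_div_neg_eq_decayTerm]
    ring

end JumpRemainder

section JumpSeparation

variable {ι : Type*} {τ y : ι → ℝ} {s : Finset ι} {k : ι}

lemma circleExp_ne_one {t : ℝ} (h0 : t ≠ 0) (ht : |t| < 2 * π) : Circle.exp t ≠ 1 := by
  rw [← Circle.exp_zero, Ne, Circle.exp_eq_exp]
  rintro ⟨n, hn⟩
  have hn0 : n ≠ 0 := by
    rintro rfl
    exact h0 (by simpa using hn)
  have habs : (1 : ℝ) ≤ |(n : ℝ)| := by exact_mod_cast Int.one_le_abs hn0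
  rw [hn, zero_add, abs_mul, abs_of_pos Real.two_pi_pos] at ht
  nlinarith [Real.two_pi_pos]

lemma norm_jumpWeight {κ : ℝ} (J : ι → ℂ) (J' : ℂ) (t : ι × Bool) :
    ‖jumpWeight τ κ J J' t‖ = ‖J t.1‖ * ‖J'‖ := by
  rw [jumpWeight, norm_neg, norm_mul, norm_mul, Circle.norm_coe, mul_one]

variable [DecidableEq ι]

lemma jumpFrequency_ne_one (hτ : ∀ i ∈ insert k s, τ i ∈ Set.Ioo 0 (2 * π))
    (hinj : Set.InjOn τ (insert k s : Finset ι)) (hk : k ∉ s) (t : s × Bool) :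
    jumpFrequency (fun i : s => τ i) (τ k) t ≠ 1 := by
  obtain ⟨⟨i, hi⟩, σ⟩ := t
  have hne : τ i ≠ τ k := fun h =>
    hk (hinj (Finset.mem_insert_of_mem hi) (Finset.mem_insert_self k s) h ▸ hi)
  have hτi := hτ i (Finset.mem_insert_of_mem hi)
  have hτk := hτ k (Finset.mem_insert_self k s)
  refine circleExp_ne_one ?_ (abs_lt.mpr ?_)
  · cases σ
    · exact sub_ne_zero.mpr hne.symm
    · exact sub_ne_zero.mpr hne
  · cases σ <;> constructor <;> simp only [Bool.false_eq_true, if_true, if_false] <;>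
      linarith [hτi.1, hτi.2, hτk.1, hτk.2]

lemma jumpSymbol_insert (τ y : ι → ℝ) (hk : k ∉ s) :
    jumpSymbol τ y (insert k s) = fun θ => jumpSymbol τ y s θ * jumpSymbol τ y {k} θ := by
  funext θ
  rw [jumpSymbol, jumpSymbol, jumpSymbol, Finset.prod_insert hk, Finset.prod_singleton, mul_comm]

lemma separatedSymbols_jumpSymbol (hτ : ∀ i ∈ insert k s, τ i ∈ Set.Ioo 0 (2 * π))
    (hinj : Set.InjOn τ (insert k s : Finset ι)) (hk : k ∉ s) :
    SeparatedSymbols (jumpFrequency (fun i : s => τ i) (τ k))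
      (jumpWeight (fun i : s => τ i) (τ k) (fun i : s => jumpCoef τ y s i) (jumpCoef τ y {k} k))
      (jumpData (fun i : s => τ i) (τ k) ((∑ i ∈ s, y i) / π) ((∑ i ∈ {k}, y i) / π))
      (jumpSymbol τ y s) (jumpSymbol τ y {k}) (Real.exp (-(3 * ∑ i ∈ insert k s, |y i|))) := by
  have hsub : s ⊆ insert k s := Finset.subset_insert k s
  have hsub' : {k} ⊆ insert k s := by simp
  have hcoef {t : Finset ι} (ht : t ⊆ insert k s) {n : ℤ} (hn : n ≠ 0) :=
    fourierCoef_jumpSymbol (y := y) (fun i hi => hτ i (ht hi)) (hinj.mono (by exact_mod_cast ht))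
      (intCast_add_mul_I_ne_zero hn _)
  have hcoercive {t : Finset ι} (ht : t ⊆ insert k s) :=
    coerciveSymbol_jumpSymbol (τ := τ) (y := y) (fun i hi => hτ i (ht hi))
      (mul_le_mul_of_nonneg_left
        (Finset.sum_le_sum_of_subset_of_nonneg ht fun i _ _ => abs_nonneg (y i)) zero_le_three)
  refine ⟨hcoercive hsub, hcoercive hsub', ?_, jumpFrequency_ne_one hτ hinj hk, fun N => ?_⟩
  · rw [← jumpSymbol_insert τ y hk]
    exact hcoercive subset_rfl
  · refine toeplitz_mul_eq_add_remainderSum _ _ (hcoercive hsub).memLp (hcoercive hsub').memLp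
      (fun n hn => ?_) (fun n hn => ?_) N
    · rw [hcoef hsub hn]
      exact (Finset.sum_coe_sort s _).symm
    · rw [hcoef hsub' hn, Finset.sum_singleton]

lemma sum_norm_jumpWeight_le (hτ : ∀ i ∈ insert k s, τ i ∈ Set.Ioo 0 (2 * π)) (hk : k ∉ s) :
    ∑ t, ‖jumpWeight (fun i : s => τ i) (τ k) (fun i : s => jumpCoef τ y s i)
        (jumpCoef τ y {k} k) t‖ ≤
      2 * (∑ i ∈ s, |y i|) * |y k| * Real.exp (3 * ∑ i ∈ insert k s, |y i|) := by
  have hs (i : ι) (hi : i ∈ s) := norm_jumpCoef_le (y := y)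
    (fun j hj => hτ j (Finset.mem_insert_of_mem hj)) hi
  have hk' : ‖jumpCoef τ y {k} k‖ ≤ |y k| * Real.exp (3 * |y k|) := by
    simpa only [Finset.sum_singleton] using norm_jumpCoef_le (τ := τ) (y := y) (s := {k})
      (by simpa using hτ k (Finset.mem_insert_self k s)) (Finset.mem_singleton_self k)
  simp only [norm_jumpWeight]
  rw [Fintype.sum_prod_type]
  simp only [Fintype.sum_bool, ← two_mul]
  rw [Finset.sum_coe_sort s fun i => 2 * (‖jumpCoef τ y s i‖ * ‖jumpCoef τ y {k} k‖),
    ← Finset.mul_sum, ← Finset.sum_mul, Finset.sum_insert hk]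
  calc 2 * ((∑ i ∈ s, ‖jumpCoef τ y s i‖) * ‖jumpCoef τ y {k} k‖)
      ≤ 2 * ((∑ i ∈ s, |y i| * Real.exp (3 * ∑ j ∈ s, |y j|)) *
          (|y k| * Real.exp (3 * |y k|))) := by
        gcongr with i hi
        exact hs i hi
    _ = 2 * (∑ i ∈ s, |y i|) * |y k| * Real.exp (3 * (|y k| + ∑ i ∈ s, |y i|)) := by
        rw [← Finset.sum_mul, mul_add, Real.exp_add]
        ring

theorem exists_logDetRatio_jumpSymbol (hτ : ∀ i ∈ insert k s, τ i ∈ Set.Ioo 0 (2 * π))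
    (hinj : Set.InjOn τ (insert k s : Finset ι)) (hk : k ∉ s) (η : ι → ℝ) :
    ∃ K : ℝ, 0 ≤ K ∧ ∀ x : ℝ,
      (∃ L, Tendsto (logDetRatio (jumpSymbol τ (fun i => x * η i) s)
        (jumpSymbol τ (fun i => x * η i) {k})) atTop (𝓝 L)) ∧
      ∀ N, |logDetRatio (jumpSymbol τ (fun i => x * η i) s)
        (jumpSymbol τ (fun i => x * η i) {k}) N| ≤ K * (x ^ 2 * Real.exp |x|) := by
  set A := 2 * (∑ i ∈ s, |η i|) * |η k|
  set E := 3 * ∑ i ∈ insert k s, |η i| with hE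
  have hscale (t : Finset ι) (x : ℝ) : ∑ i ∈ t, |x * η i| = |x| * ∑ i ∈ t, |η i| := by
    simp only [abs_mul, Finset.mul_sum]
  have hexponent (x : ℝ) : 3 * ∑ i ∈ insert k s, |x * η i| ≤ (A + E) * |x| := by
    rw [hscale, mul_left_comm, ← hE, mul_comm]
    exact mul_le_mul_of_nonneg_right (le_add_of_nonneg_left (by positivity)) (abs_nonneg x)
  obtain ⟨K, hK, hbound⟩ := exists_abs_logDetRatio_le (jumpFrequency_ne_one hτ hinj hk)
    (K := A + E) (by positivity)
  refine ⟨K, hK, fun x => ?_⟩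
  have hsep := separatedSymbols_jumpSymbol (y := fun i => x * η i) hτ hinj hk
  refine ⟨hsep.exists_tendsto_logDetRatio, fun N => hbound x _ _ _ _ _ N hsep ?_ ?_⟩
  · refine (sum_norm_jumpWeight_le hτ hk).trans ?_
    rw [hscale s, abs_mul x]
    calc 2 * (|x| * ∑ i ∈ s, |η i|) * (|x| * |η k|) *
          Real.exp (3 * ∑ i ∈ insert k s, |x * η i|)
        = A * x ^ 2 * Real.exp (3 * ∑ i ∈ insert k s, |x * η i|) := by
          rw [← sq_abs x]
          ring
      _ ≤ (A + E) * x ^ 2 * Real.exp ((A + E) * |x|) := by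
          refine mul_le_mul (mul_le_mul_of_nonneg_right ?_ (sq_nonneg x))
            (Real.exp_le_exp.mpr (hexponent x)) (Real.exp_pos _).le (by positivity)
          exact le_add_of_nonneg_right (by positivity)
  · rw [one_div, ← Real.exp_neg, neg_neg]
    exact Real.exp_le_exp.mpr (hexponent x)

end JumpSeparation

theorem exists_logDet_jumpSymbol_sub_sum {ι : Type*} {τ : ι → ℝ} {s : Finset ι}
    (hτ : ∀ i ∈ s, τ i ∈ Set.Ioo 0 (2 * π))
    (hinj : Set.InjOn τ s) (η : ι → ℝ) :
    ∃ K : ℝ, ∀ x : ℝ,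
      (∃ L, Tendsto (fun N => logDet (jumpSymbol τ (fun i => x * η i) s) N -
        ∑ i ∈ s, logDet (pureJump (τ i) (x * η i)) N) atTop (𝓝 L)) ∧
      ∀ N, |logDet (jumpSymbol τ (fun i => x * η i) s) N -
        ∑ i ∈ s, logDet (pureJump (τ i) (x * η i)) N| ≤ K * (x ^ 2 * Real.exp |x|) := by
  classical
  induction s using Finset.induction_on with
  | empty =>
    have hempty (x : ℝ) (N : ℕ) : logDet (jumpSymbol τ (fun i => x * η i) ∅) N = 0 := by
      have h : jumpSymbol τ (fun i => x * η i) ∅ = fun _ => 1 := by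
        funext θ
        rw [jumpSymbol, Finset.prod_empty]
      rw [logDet, h, toeplitz_one, Matrix.det_one, norm_one, Real.log_one]
    exact ⟨0, fun x => ⟨⟨0, by simp [hempty]⟩, fun N => by simp [hempty]⟩⟩
  | insert k s hk ih =>
    obtain ⟨K₁, ih⟩ := ih (fun i hi => hτ i (Finset.mem_insert_of_mem hi))
      (hinj.mono (by simp))
    obtain ⟨K₂, -, hstep⟩ := exists_logDetRatio_jumpSymbol hτ hinj hk η
    have hinsert (x : ℝ) (N : ℕ) : logDet (jumpSymbol τ (fun i => x * η i) (insert k s)) N -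
        ∑ i ∈ insert k s, logDet (pureJump (τ i) (x * η i)) N =
        (logDet (jumpSymbol τ (fun i => x * η i) s) N -
          ∑ i ∈ s, logDet (pureJump (τ i) (x * η i)) N) -
        logDetRatio (jumpSymbol τ (fun i => x * η i) s)
          (jumpSymbol τ (fun i => x * η i) {k}) N := by
      rw [jumpSymbol_insert τ _ hk, Finset.sum_insert hk, logDetRatio, jumpSymbol_singleton]
      ring
    refine ⟨K₁ + K₂, fun x => ?_⟩
    obtain ⟨⟨L₁, hL₁⟩, hK₁⟩ := ih x
    obtain ⟨⟨L₂, hL₂⟩, hK₂⟩ := hstep x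
    simp only [hinsert]
    refine ⟨⟨L₁ - L₂, hL₁.sub hL₂⟩, fun N => ?_⟩
    rw [add_mul]
    exact (abs_sub _ _).trans (add_le_add (hK₁ N) (hK₂ N))

/-! ### The determinant of a single jump -/

section CauchyDeterminant

open Complex (I)

lemma det_cauchy_succ {K : Type*} [Field K] {n : ℕ} {x y : Fin (n + 1) → K}
    (h : ∀ j k, x j + y k ≠ 0) :
    (Matrix.of fun j k => 1 / (x j + y k)).det = 1 / (x 0 + y 0) *
      ((∏ j : Fin n, (x j.succ - x 0) / (x j.succ + y 0)) *
        ((∏ k : Fin n, (y k.succ - y 0) / (x 0 + y k.succ)) *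
          (Matrix.of fun j k : Fin n => 1 / (x j.succ + y k.succ)).det)) := by
  set A : Matrix (Fin (n + 1)) (Fin (n + 1)) K := Matrix.of fun j k => 1 / (x j + y k) with hA
  set c : Fin (n + 1) → K := fun j => if j = 0 then 0 else (x 0 + y 0) / (x j + y 0) with hc
  set B : Matrix (Fin (n + 1)) (Fin (n + 1)) K := Matrix.of fun j k => A j k - c j * A 0 k with hB
  have hdet : A.det = B.det :=
    Matrix.det_eq_of_forall_row_eq_smul_add_const c 0 (by simp [hc]) fun i j => by simp [hB, hc]
  have htop : B 0 0 = 1 / (x 0 + y 0) := by simp [hB, hc, hA]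
  have hcol (i : Fin n) : B i.succ 0 = 0 := by
    have hi := h i.succ 0
    have h0 := h 0 0
    simp only [hB, hc, hA, Matrix.of_apply, if_neg (Fin.succ_ne_zero i)]
    field_simp
    ring
  rw [hdet, Matrix.det_succ_column_zero, Fin.sum_univ_succ, htop]
  simp only [hcol, mul_zero, zero_mul, Finset.sum_const_zero, add_zero, Fin.val_zero, pow_zero,
    one_mul]
  rw [← Matrix.det_mul_row, ← Matrix.det_mul_column]
  congr 2
  ext j k
  have hj := h j.succ 0
  have hk := h 0 k.succ
  have hjk := h j.succ k.succ
  simp only [Matrix.submatrix_apply, Fin.zero_succAbove, Matrix.of_apply, hB, hA, hc,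
    if_neg (Fin.succ_ne_zero j)]
  field_simp
  ring

/-- The Toeplitz matrix of Cauchy type with entries `1 / (j - k + iγ)`. -/
def cauchyToeplitz (γ : ℝ) (N : ℕ) : Matrix (Fin N) (Fin N) ℂ :=
  Matrix.of fun j k => 1 / (((j : ℤ) - (k : ℤ) : ℤ) + γ * I)

/-- The partial products of Euler's product for `sinh (πγ) / (πγ)`. -/
def eulerProduct (γ : ℝ) (n : ℕ) : ℝ := ∏ j ∈ Finset.range n, (1 + γ ^ 2 / (j + 1 : ℝ) ^ 2)

lemma eulerProduct_pos (γ : ℝ) (n : ℕ) : 0 < eulerProduct γ n :=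
  Finset.prod_pos fun j _ => by positivity

lemma norm_div_mul_norm_div_neg (γ : ℝ) {a : ℝ} (ha : a ≠ 0) :
    ‖(a : ℂ) / (a + γ * I)‖ * ‖(-a : ℂ) / (-a + γ * I)‖ = (1 + γ ^ 2 / a ^ 2)⁻¹ := by
  have hnorm (b : ℝ) : ‖(b : ℂ) + γ * I‖ = √(b ^ 2 + γ ^ 2) := Complex.norm_add_mul_I b γ
  have hneg := hnorm (-a)
  rw [Complex.ofReal_neg, neg_sq] at hneg
  rw [norm_div, norm_div, hneg, hnorm, norm_neg, Complex.norm_real, Real.norm_eq_abs,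
    div_mul_div_comm, abs_mul_abs_self, Real.mul_self_sqrt (by positivity)]
  field_simp

lemma norm_det_cauchyToeplitz_succ {γ : ℝ} (hγ : γ ≠ 0) (n : ℕ) :
    ‖(cauchyToeplitz γ (n + 1)).det‖ =
      1 / |γ| / eulerProduct γ n * ‖(cauchyToeplitz γ n).det‖ := by
  have hdiff (N : ℕ) (c : ℂ) : cauchyToeplitz γ N =
      Matrix.of fun j k : Fin N => 1 / ((j + c) + (-(k + c) + γ * I)) := by
    ext j k
    simp only [cauchyToeplitz, Matrix.of_apply]
    push_cast
    ring_nf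
  have hne (j k : Fin (n + 1)) : ((j : ℂ) + 0) + (-(k + 0) + γ * I) ≠ 0 := by
    have h : (((j : ℤ) - k : ℝ) : ℂ) + γ * I ≠ 0 := fun h =>
      hγ (by simpa using congrArg Complex.im h)
    refine ne_of_eq_of_ne ?_ h
    push_cast
    ring
  have hprod : (∏ j : Fin n, ‖((j + 1 : ℝ) : ℂ) / ((j + 1 : ℝ) + γ * I)‖) *
      ∏ j : Fin n, ‖(-(j + 1 : ℝ) : ℂ) / (-(j + 1 : ℝ) + γ * I)‖ = (eulerProduct γ n)⁻¹ := by
    rw [← Finset.prod_mul_distrib, eulerProduct, ← Finset.prod_inv_distrib,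
      ← Fin.prod_univ_eq_prod_range fun j => (1 + γ ^ 2 / (j + 1 : ℝ) ^ 2)⁻¹]
    exact Finset.prod_congr rfl fun j _ => norm_div_mul_norm_div_neg γ (by positivity)
  rw [hdiff (n + 1) 0, det_cauchy_succ hne, hdiff n 1, div_eq_mul_inv (1 / |γ|), ← hprod]
  simp [norm_prod, mul_assoc]

variable {τ γ : ℝ}

lemma fourierCoef_pureJump (hτ : τ ∈ Set.Ioo 0 (2 * π)) (hγ : γ ≠ 0) (n : ℤ) :
    fourierCoef (pureJump τ (π * γ)) n =
      I * (Real.sinh (π * γ) / π : ℝ) * (Complex.exp (-I * n * τ) / (n + γ * I)) := by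
  have hμ : (∑ _i ∈ {()}, π * γ) / π = γ := by
    rw [Finset.sum_singleton, mul_div_cancel_left₀ _ Real.pi_ne_zero]
  have hne : (n : ℂ) + ((∑ _i ∈ {()}, π * γ) / π : ℝ) * I ≠ 0 := fun h =>
    hγ (by simpa [hμ] using congrArg Complex.im h)
  have h := fourierCoef_jumpSymbol (s := {()}) (τ := fun _ => τ) (y := fun _ => π * γ)
    (fun _ _ => hτ) (by simp) hne
  rw [jumpSymbol_singleton, Finset.sum_singleton, hμ] at h
  simpa only [jumpCoef, Finset.erase_singleton, jumpSymbol, Finset.prod_empty, mul_one] using h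

lemma norm_det_toeplitz_pureJump (hτ : τ ∈ Set.Ioo 0 (2 * π)) (hγ : γ ≠ 0) (N : ℕ) :
    ‖(toeplitz (pureJump τ (π * γ)) N).det‖ =
      |Real.sinh (π * γ) / π| ^ N * ‖(cauchyToeplitz γ N).det‖ := by
  have hT : toeplitz (pureJump τ (π * γ)) N = (I * (Real.sinh (π * γ) / π : ℝ)) •
      Matrix.of fun p q : Fin N => (Circle.exp (-(p * τ)) : ℂ) *
        (Matrix.of fun p q : Fin N => (Circle.exp (q * τ) : ℂ) * cauchyToeplitz γ N p q) p q := by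
    ext p q
    simp only [toeplitz, Matrix.of_apply, Matrix.smul_apply, fourierCoef_pureJump hτ hγ,
      cauchyToeplitz, smul_eq_mul, Circle.coe_exp]
    rw [← mul_assoc (Complex.exp _) (Complex.exp _), ← Complex.exp_add, mul_one_div]
    congr 3
    push_cast
    ring
  rw [hT, Matrix.det_smul, Matrix.det_mul_column, Matrix.det_mul_row, norm_mul, norm_pow, norm_mul,
    Complex.norm_I, one_mul, Complex.norm_real, Real.norm_eq_abs]
  simp [norm_prod]

lemma coerciveSymbol_pureJump (hτ : τ ∈ Set.Ioo 0 (2 * π)) (y : ℝ) :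
    CoerciveSymbol (pureJump τ y) (Real.exp (-(3 * |y|))) := by
  rw [← jumpSymbol_singleton (fun _ => τ) (fun _ => y) ()]
  exact coerciveSymbol_jumpSymbol (fun _ _ => hτ) (by simp)

lemma tendsto_eulerProduct (hγ : γ ≠ 0) :
    Tendsto (eulerProduct γ) atTop (𝓝 (Real.sinh (π * γ) / (π * γ))) := by
  have hsin : Complex.sin (π * (γ * I)) / (π * (γ * I)) =
      ((Real.sinh (π * γ) / (π * γ) : ℝ) : ℂ) := by
    rw [← mul_assoc, Complex.sin_mul_I, mul_div_mul_right _ _ Complex.I_ne_zero]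
    push_cast
    rfl
  have hprod (n : ℕ) : ∏ j ∈ Finset.range n, (1 + sineTerm (γ * I) j) = (eulerProduct γ n : ℂ) := by
    rw [eulerProduct, Complex.ofReal_prod]
    refine Finset.prod_congr rfl fun j _ => ?_
    rw [sineTerm, mul_pow, Complex.I_sq]
    push_cast
    ring
  have h := tendsto_euler_sin_prod'
    (mul_ne_zero (Complex.ofReal_ne_zero.mpr hγ) Complex.I_ne_zero)
  simp only [hsin, hprod] at h
  exact tendsto_ofReal_iff.mp h

lemma one_le_sinh_div (hγ : γ ≠ 0) : 1 ≤ Real.sinh (π * γ) / (π * γ) :=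
  ge_of_tendsto' (tendsto_eulerProduct hγ) fun _ =>
    Finset.one_le_prod fun _ _ => le_add_of_nonneg_right (by positivity)

lemma logDet_pureJump_succ (hτ : τ ∈ Set.Ioo 0 (2 * π)) (hγ : γ ≠ 0) (N : ℕ) :
    logDet (pureJump τ (π * γ)) (N + 1) = logDet (pureJump τ (π * γ)) N +
      (Real.log (Real.sinh (π * γ) / (π * γ)) - Real.log (eulerProduct γ N)) := by
  have hs : 0 < Real.sinh (π * γ) / (π * γ) := zero_lt_one.trans_le (one_le_sinh_div hγ)
  have hP := eulerProduct_pos γ N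
  have hdet := norm_ne_zero_iff.mpr
    ((coerciveSymbol_pureJump hτ (π * γ)).det_toeplitz_ne_zero N)
  have habs : Real.sinh (π * γ) / (π * γ) = |Real.sinh (π * γ) / π| * (1 / |γ|) := by
    rw [← abs_of_pos hs, ← div_div, abs_div _ γ, mul_one_div]
  have hrec : ‖(toeplitz (pureJump τ (π * γ)) (N + 1)).det‖ =
      ‖(toeplitz (pureJump τ (π * γ)) N).det‖ *
        (Real.sinh (π * γ) / (π * γ) / eulerProduct γ N) := by
    rw [norm_det_toeplitz_pureJump hτ hγ, norm_det_toeplitz_pureJump hτ hγ,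
      norm_det_cauchyToeplitz_succ hγ, habs, pow_succ]
    ring
  rw [logDet, logDet, hrec, Real.log_mul hdet (by positivity), Real.log_div hs.ne' hP.ne']

end CauchyDeterminant

section PureJumpAsymptotics

lemma log_one_add_mul_add_mul_log_le {a t : ℝ} (ha : 0 ≤ a) (ht0 : 0 ≤ t) (ht1 : t < 1) :
    Real.log (1 + a * t) + a * Real.log (1 - t) ≤ 0 := by
  have hadd := Real.log_le_sub_one_of_pos (x := 1 + a * t) (by positivity)
  have hsub := mul_le_mul_of_nonneg_left
    (Real.log_le_sub_one_of_pos (x := 1 - t) (by linarith)) ha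
  linarith

lemma le_log_one_add_mul_add_mul_log {a t : ℝ} (ha : 0 ≤ a) (ht0 : 0 ≤ t) (ht1 : t ≤ 1 / 2) :
    -((a ^ 2 + 2 * a) * t ^ 2) ≤ Real.log (1 + a * t) + a * Real.log (1 - t) := by
  have hadd : a * t - (a * t) ^ 2 ≤ Real.log (1 + a * t) := by
    refine le_trans ?_ (Real.one_sub_inv_le_log_of_pos (by positivity))
    have hat : 0 ≤ a * t := by positivity
    rw [le_sub_comm, inv_le_iff_one_le_mul₀ (by positivity)]
    nlinarith [pow_nonneg hat 3]
  have hsub : -t - 2 * t ^ 2 ≤ Real.log (1 - t) := by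
    refine le_trans ?_ (Real.one_sub_inv_le_log_of_pos (by linarith))
    rw [le_sub_comm, inv_le_iff_one_le_mul₀ (by linarith)]
    nlinarith [mul_nonneg (sq_nonneg t) (sub_nonneg.mpr ht1)]
  linarith [mul_le_mul_of_nonneg_left hsub ha]

/-- The logarithm of a partial Euler product, corrected so that its difference to the limit is the
increment in `N` of `γ² log N` minus the logarithmic determinant of a single jump. -/
def correctedLogEuler (γ : ℝ) (n : ℕ) : ℝ :=
  Real.log (eulerProduct γ n) + γ ^ 2 * (Real.log (n + 1) - Real.log n)

lemma correctedLogEuler_succ (γ : ℝ) {n : ℕ} (hn : n ≠ 0) :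
    correctedLogEuler γ (n + 1) = correctedLogEuler γ n +
      (Real.log (1 + γ ^ 2 * (1 / (n + 1 : ℝ) ^ 2)) +
        γ ^ 2 * Real.log (1 - 1 / (n + 1 : ℝ) ^ 2)) := by
  have hn' : (n : ℝ) ≠ 0 := Nat.cast_ne_zero.mpr hn
  have hlog : Real.log (1 - 1 / (n + 1 : ℝ) ^ 2) =
      Real.log n + Real.log (n + 1 + 1) - 2 * Real.log (n + 1) := by
    have hsq : 2 * Real.log (n + 1) = Real.log ((n + 1 : ℝ) ^ 2) := by
      rw [Real.log_pow, Nat.cast_ofNat]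
    rw [hsq, ← Real.log_mul hn' (by positivity), ← Real.log_div (by positivity) (by positivity)]
    congr 1
    field_simp
    ring
  have hprod : Real.log (eulerProduct γ (n + 1)) =
      Real.log (eulerProduct γ n) + Real.log (1 + γ ^ 2 * (1 / (n + 1 : ℝ) ^ 2)) := by
    rw [eulerProduct, Finset.prod_range_succ, ← eulerProduct,
      Real.log_mul (eulerProduct_pos γ n).ne' (by positivity), mul_one_div]
  rw [correctedLogEuler, correctedLogEuler, hprod, hlog, Nat.cast_add_one]
  ring

variable {τ γ : ℝ}

lemma tendsto_correctedLogEuler (hγ : γ ≠ 0) :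
    Tendsto (correctedLogEuler γ) atTop (𝓝 (Real.log (Real.sinh (π * γ) / (π * γ)))) := by
  have hlog := (tendsto_eulerProduct hγ).log (zero_lt_one.trans_le (one_le_sinh_div hγ)).ne'
  have hadd := hlog.add (Real.tendsto_log_nat_add_one_sub_log.const_mul (γ ^ 2))
  rwa [mul_zero, add_zero] at hadd

lemma log_sinh_div_le_correctedLogEuler (hγ : γ ≠ 0) (n : ℕ) :
    Real.log (Real.sinh (π * γ) / (π * γ)) ≤ correctedLogEuler γ (n + 1) := by
  have hanti : Antitone fun n => correctedLogEuler γ (n + 1) := by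
    refine antitone_nat_of_succ_le fun n => ?_
    rw [correctedLogEuler_succ γ n.succ_ne_zero]
    have hn : (1 : ℝ) < ((n + 1 : ℕ) + 1 : ℝ) := by simp [Nat.cast_add_one_pos]
    have hstep := log_one_add_mul_add_mul_log_le (sq_nonneg γ)
      (t := 1 / ((n + 1 : ℕ) + 1 : ℝ) ^ 2) (by positivity)
      ((div_lt_one (by positivity)).mpr (one_lt_pow₀ hn two_ne_zero))
    linarith
  exact hanti.le_of_tendsto ((tendsto_add_atTop_iff_nat 1).mpr (tendsto_correctedLogEuler hγ)) n

lemma correctedLogEuler_sub_le_log_sinh_div (hγ : γ ≠ 0) (n : ℕ) :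
    correctedLogEuler γ (n + 1) - (γ ^ 4 + 2 * γ ^ 2) * (1 / (n + 1 : ℝ) ^ 2) ≤
      Real.log (Real.sinh (π * γ) / (π * γ)) := by
  have hmono : Monotone fun n : ℕ =>
      correctedLogEuler γ (n + 1) - (γ ^ 4 + 2 * γ ^ 2) * (1 / (n + 1 : ℝ) ^ 2) := by
    refine monotone_nat_of_le_succ fun n => ?_
    rw [correctedLogEuler_succ γ n.succ_ne_zero, Nat.cast_add_one]
    have hn : (2 : ℝ) ≤ (n + 1 + 1 : ℝ) ^ 2 := by nlinarith [n.cast_nonneg (α := ℝ)]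
    have hstep := le_log_one_add_mul_add_mul_log (sq_nonneg γ)
      (t := 1 / (n + 1 + 1 : ℝ) ^ 2) (by positivity) (one_div_le_one_div_of_le two_pos hn)
    have hgap : (1 / (n + 1 + 1 : ℝ) ^ 2) ^ 2 ≤ 1 / (n + 1 : ℝ) ^ 2 - 1 / (n + 1 + 1 : ℝ) ^ 2 := by
      rw [div_sub_div _ _ (by positivity) (by positivity), one_div_pow,
        div_le_div_iff₀ (by positivity) (by positivity)]
      nlinarith [n.cast_nonneg (α := ℝ), pow_pos (n.cast_add_one_pos (α := ℝ)) 2,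
        pow_pos (n.cast_add_one_pos (α := ℝ)) 3]
    have hscaled := mul_le_mul_of_nonneg_left hgap
      (show 0 ≤ γ ^ 4 + 2 * γ ^ 2 by positivity)
    linarith
  have hzero : Tendsto (fun n : ℕ => 1 / (n + 1 : ℝ) ^ 2) atTop (𝓝 0) := by
    simpa only [one_div_pow, zero_pow two_ne_zero] using
      (tendsto_one_div_add_atTop_nhds_zero_nat (𝕜 := ℝ)).pow 2
  refine hmono.ge_of_tendsto ?_ n
  simpa only [mul_zero, sub_zero] using ((tendsto_add_atTop_iff_nat 1).mpr
    (tendsto_correctedLogEuler hγ)).sub (hzero.const_mul (γ ^ 4 + 2 * γ ^ 2))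

lemma abs_log_sinh_div_sub_correctedLogEuler_le (hγ : γ ≠ 0) (n : ℕ) :
    |Real.log (Real.sinh (π * γ) / (π * γ)) - correctedLogEuler γ n| ≤
      (γ ^ 4 + 2 * γ ^ 2) * (4 / (n + 1 : ℝ) ^ 2) := by
  rcases n with _ | n
  · have hzero : correctedLogEuler γ 0 = 0 := by simp [correctedLogEuler, eulerProduct]
    have hone : correctedLogEuler γ 1 = Real.log (1 + γ ^ 2) + γ ^ 2 * Real.log 2 := by
      simp [correctedLogEuler, eulerProduct, one_add_one_eq_two]
    have hupper := log_sinh_div_le_correctedLogEuler hγ 0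
    rw [zero_add, hone] at hupper
    have hadd := Real.log_le_sub_one_of_pos (x := 1 + γ ^ 2) (by positivity)
    have htwo := mul_le_mul_of_nonneg_left Real.log_two_lt_d9.le (sq_nonneg γ)
    rw [hzero, sub_zero, abs_of_nonneg (Real.log_nonneg (one_le_sinh_div hγ)), Nat.cast_zero,
      zero_add, one_pow, div_one]
    nlinarith [sq_nonneg γ, sq_nonneg (γ ^ 2)]
  · have hle : 1 / (n + 1 : ℝ) ^ 2 ≤ 4 / ((n + 1 : ℕ) + 1 : ℝ) ^ 2 := by
      rw [div_le_div_iff₀ (by positivity) (by positivity)]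
      push_cast
      nlinarith [n.cast_nonneg (α := ℝ)]
    have hscaled := mul_le_mul_of_nonneg_left hle (show 0 ≤ γ ^ 4 + 2 * γ ^ 2 by positivity)
    rw [abs_le]
    constructor <;> linarith [log_sinh_div_le_correctedLogEuler hγ n,
      correctedLogEuler_sub_le_log_sinh_div hγ n]

lemma summable_four_div_sq : Summable fun n : ℕ => 4 / (n + 1 : ℝ) ^ 2 := by
  have h := ((summable_nat_add_iff 1).mpr (Real.summable_one_div_nat_pow.mpr one_lt_two)).mul_left 4
  simpa only [mul_one_div, Nat.cast_add_one] using h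

lemma logDet_pureJump_zero (τ : ℝ) : logDet (pureJump τ 0) = 0 := by
  have h : pureJump τ 0 = fun _ => 1 := by
    funext θ
    rw [pureJump, zero_mul, Real.exp_zero]
  funext N
  rw [logDet, h, toeplitz_one, Matrix.det_one, norm_one, Real.log_one, Pi.zero_apply]

theorem logDet_pureJump_asymptotics (hτ : τ ∈ Set.Ioo 0 (2 * π)) (γ : ℝ) :
    (∃ L, Tendsto (fun N => logDet (pureJump τ (π * γ)) N - γ ^ 2 * Real.log N) atTop (𝓝 L)) ∧
    ∀ N, |logDet (pureJump τ (π * γ)) N - γ ^ 2 * Real.log N| ≤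
      (γ ^ 4 + 2 * γ ^ 2) * ∑' n : ℕ, 4 / (n + 1 : ℝ) ^ 2 := by
  rcases eq_or_ne γ 0 with rfl | hγ
  · simp [logDet_pureJump_zero]
  set D : ℕ → ℝ := fun N => logDet (pureJump τ (π * γ)) N - γ ^ 2 * Real.log N
  set b : ℕ → ℝ := fun n => (γ ^ 4 + 2 * γ ^ 2) * (4 / (n + 1 : ℝ) ^ 2)
  have hb : Summable b := summable_four_div_sq.mul_left _
  have hdist (n : ℕ) : dist (D n) (D (n + 1)) ≤ b n := by
    refine le_of_eq_of_le ?_ (abs_log_sinh_div_sub_correctedLogEuler_le hγ n)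
    rw [dist_comm, Real.dist_eq]
    simp only [D, logDet_pureJump_succ hτ hγ, correctedLogEuler, Nat.cast_add_one]
    congr 1
    ring
  refine ⟨cauchySeq_tendsto_of_complete (cauchySeq_of_dist_le_of_summable b hdist hb),
    fun N => ?_⟩
  have hzero : D 0 = 0 := by simp [D, logDet]
  calc |D N| = dist (D 0) (D N) := by rw [hzero, dist_comm, Real.dist_eq, sub_zero]
    _ ≤ ∑ n ∈ Finset.range N, b n := dist_le_range_sum_of_dist_le N fun {n} _ => hdist n
    _ ≤ ∑' n, b n := hb.sum_le_tsum _ fun n _ => by positivity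
    _ = (γ ^ 4 + 2 * γ ^ 2) * ∑' n : ℕ, 4 / (n + 1 : ℝ) ^ 2 := tsum_mul_left

lemma sq_add_pow_four_le_mul_exp (η x : ℝ) :
    (x * η / π) ^ 4 + 2 * (x * η / π) ^ 2 ≤ 2 * (η ^ 4 + η ^ 2) * (x ^ 2 * Real.exp |x|) := by
  have hdiv (k : ℕ) (hk : Even k) : (x * η / π) ^ k ≤ (x * η) ^ k := by
    rw [div_pow]
    exact div_le_self (hk.pow_nonneg _) (one_le_pow₀ (by linarith [Real.pi_gt_three]))
  have hexp : 1 ≤ Real.exp |x| := Real.one_le_exp (abs_nonneg x)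
  have hsq : x ^ 2 ≤ 2 * Real.exp |x| := by
    have h := Real.quadratic_le_exp_of_nonneg (abs_nonneg x)
    rw [sq_abs] at h
    linarith [abs_nonneg x]
  calc (x * η / π) ^ 4 + 2 * (x * η / π) ^ 2
      ≤ (x * η) ^ 4 + 2 * (x * η) ^ 2 := by
        linarith [hdiv 4 (by decide), hdiv 2 even_two]
    _ = η ^ 4 * (x ^ 2 * x ^ 2) + 2 * η ^ 2 * (x ^ 2 * 1) := by ring
    _ ≤ η ^ 4 * (x ^ 2 * (2 * Real.exp |x|)) + 2 * η ^ 2 * (x ^ 2 * Real.exp |x|) := by gcongr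
    _ = 2 * (η ^ 4 + η ^ 2) * (x ^ 2 * Real.exp |x|) := by ring

theorem exists_logDet_jumpSymbol_asymptotics {ι : Type*} {τ : ι → ℝ} {s : Finset ι}
    (hτ : ∀ i ∈ s, τ i ∈ Set.Ioo 0 (2 * π)) (hinj : Set.InjOn τ s) (η : ι → ℝ) :
    ∃ K : ℝ, ∀ x : ℝ,
      (∃ L, Tendsto (fun N : ℕ => logDet (jumpSymbol τ (fun i => x * η i) s) N -
        (∑ i ∈ s, (x * η i / π) ^ 2) * Real.log N) atTop (𝓝 L)) ∧
      ∀ N : ℕ, |logDet (jumpSymbol τ (fun i => x * η i) s) N -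
        (∑ i ∈ s, (x * η i / π) ^ 2) * Real.log N| ≤ K * (x ^ 2 * Real.exp |x|) := by
  obtain ⟨K, hK⟩ := exists_logDet_jumpSymbol_sub_sum hτ hinj η
  set Z := ∑' n : ℕ, 4 / (n + 1 : ℝ) ^ 2
  have hZ : 0 ≤ Z := tsum_nonneg fun n => by positivity
  have hsingle (x : ℝ) (i : ι) (hi : i ∈ s) := logDet_pureJump_asymptotics (hτ i hi) (x * η i / π)
  simp only [mul_div_cancel₀ _ Real.pi_ne_zero] at hsingle
  have hsplit (x : ℝ) (N : ℕ) : logDet (jumpSymbol τ (fun i => x * η i) s) N -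
      (∑ i ∈ s, (x * η i / π) ^ 2) * Real.log N =
      (logDet (jumpSymbol τ (fun i => x * η i) s) N -
        ∑ i ∈ s, logDet (pureJump (τ i) (x * η i)) N) +
      ∑ i ∈ s, (logDet (pureJump (τ i) (x * η i)) N - (x * η i / π) ^ 2 * Real.log N) := by
    rw [Finset.sum_sub_distrib, Finset.sum_mul]
    ring
  refine ⟨K + ∑ i ∈ s, 2 * (η i ^ 4 + η i ^ 2) * Z, fun x => ?_⟩
  obtain ⟨⟨L, hL⟩, hbound⟩ := hK x
  simp only [hsplit]
  constructor
  · choose! M hM using fun i hi => (hsingle x i hi).1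
    exact ⟨_, hL.add (tendsto_finsetSum s hM)⟩
  · intro N
    refine (abs_add_le _ _).trans ?_
    rw [add_mul, Finset.sum_mul]
    refine add_le_add (hbound N) ((Finset.abs_sum_le_sum_abs _ _).trans
      (Finset.sum_le_sum fun i hi => ((hsingle x i hi).2 N).trans ?_))
    rw [mul_right_comm]
    exact mul_le_mul_of_nonneg_right (sq_add_pow_four_le_mul_exp (η i) x) hZ

end PureJumpAsymptotics

/-! ### The entropy as an integral of logarithms -/

section EntropyIntegral

variable {ν x : ℝ}

lemma cosh_add_mul_sinh_pos (hν : |ν| ≤ 1) (x : ℝ) : 0 < Real.cosh x + ν * Real.sinh x := by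
  have h : |ν * Real.sinh x| < Real.cosh x := calc
    |ν * Real.sinh x| ≤ 1 * |Real.sinh x| := by rw [abs_mul]; gcongr
    _ < Real.cosh x := by
      rw [one_mul, Real.abs_sinh, ← Real.cosh_abs]
      exact Real.sinh_lt_cosh _
  linarith [neg_abs_le (ν * Real.sinh x)]

lemma cosh_sub_mul_sinh_pos (hν : |ν| ≤ 1) (x : ℝ) : 0 < Real.cosh x - ν * Real.sinh x := by
  simpa only [neg_mul, ← sub_eq_add_neg] using cosh_add_mul_sinh_pos (ν := -ν) (by rwa [abs_neg]) x

/-- The integrand on `(0, ∞)` representing the entropy `2 log 2 * entBin ν` of an eigenvalue `ν`;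
its numerator is `log (cosh x + ν * sinh x) + log (cosh x - ν * sinh x)`. -/
def entropyIntegrand (ν x : ℝ) : ℝ :=
  Real.log (1 + (1 - ν ^ 2) * Real.sinh x ^ 2) / Real.sinh x ^ 2

lemma log_cosh_add_add_log_cosh_sub (hν : |ν| ≤ 1) (x : ℝ) :
    Real.log (Real.cosh x + ν * Real.sinh x) + Real.log (Real.cosh x - ν * Real.sinh x) =
      Real.log (1 + (1 - ν ^ 2) * Real.sinh x ^ 2) := by
  rw [← Real.log_mul (cosh_add_mul_sinh_pos hν x).ne' (cosh_sub_mul_sinh_pos hν x).ne']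
  congr 1
  linear_combination Real.cosh_sq x

lemma one_sub_sq_nonneg (hν : |ν| ≤ 1) : 0 ≤ 1 - ν ^ 2 :=
  sub_nonneg.mpr ((sq_le_one_iff_abs_le_one ν).mpr hν)

lemma log_one_add_mul_sinh_sq_nonneg (hν : |ν| ≤ 1) (x : ℝ) :
    0 ≤ Real.log (1 + (1 - ν ^ 2) * Real.sinh x ^ 2) :=
  Real.log_nonneg (le_add_of_nonneg_right (mul_nonneg (one_sub_sq_nonneg hν) (sq_nonneg _)))

lemma entropyIntegrand_nonneg (hν : |ν| ≤ 1) (x : ℝ) : 0 ≤ entropyIntegrand ν x :=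
  div_nonneg (log_one_add_mul_sinh_sq_nonneg hν x) (sq_nonneg _)

/-- An antiderivative of `entropyIntegrand ν` on `(0, ∞)`. -/
def entropyPrimitive (ν x : ℝ) : ℝ :=
  2 * x - Real.cosh x / Real.sinh x * Real.log (1 + (1 - ν ^ 2) * Real.sinh x ^ 2) -
    ν * (Real.log (Real.cosh x + ν * Real.sinh x) - Real.log (Real.cosh x - ν * Real.sinh x))

lemma hasDerivAt_entropyPrimitive (hν : |ν| ≤ 1) (hx : 0 < x) :
    HasDerivAt (entropyPrimitive ν) (entropyIntegrand ν x) x := by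
  have hsinh : Real.sinh x ≠ 0 := (Real.sinh_pos_iff.mpr hx).ne'
  have hadd := (cosh_add_mul_sinh_pos hν x).ne'
  have hsub := (cosh_sub_mul_sinh_pos hν x).ne'
  have hprod : 1 + (1 - ν ^ 2) * Real.sinh x ^ 2 =
      (Real.cosh x + ν * Real.sinh x) * (Real.cosh x - ν * Real.sinh x) := by
    linear_combination -Real.cosh_sq x
  have dcosh := Real.hasDerivAt_cosh x
  have dsinh := Real.hasDerivAt_sinh x
  have dlog := (((dsinh.pow 2).const_mul (1 - ν ^ 2)).const_add 1).log
    (hprod ▸ mul_ne_zero hadd hsub)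
  have dlogs := ((dcosh.add (dsinh.const_mul ν)).log hadd).sub
    ((dcosh.sub (dsinh.const_mul ν)).log hsub)
  refine ((((hasDerivAt_id x).const_mul 2).sub ((dcosh.div dsinh hsinh).mul dlog)).sub
    (dlogs.const_mul ν)).congr_deriv ?_
  simp only [entropyIntegrand, Pi.add_apply, Pi.sub_apply, Pi.div_apply, Pi.pow_apply,
    Nat.cast_ofNat, Nat.add_one_sub_one, pow_one]
  rw [hprod]
  rw [mul_comm ν] at hadd hsub
  field_simp
  set P := (Real.cosh x + Real.sinh x * ν) * (Real.cosh x - Real.sinh x * ν)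
  linear_combination P * Real.log P * Real.cosh_sq x

lemma tendsto_entropyPrimitive_zero (hν : |ν| ≤ 1) :
    Tendsto (entropyPrimitive ν) (𝓝[>] 0) (𝓝 0) := by
  have hadd : ContinuousAt (fun x => Real.log (Real.cosh x + ν * Real.sinh x)) 0 :=
    ContinuousAt.log (by fun_prop) (cosh_add_mul_sinh_pos hν 0).ne'
  have hsub : ContinuousAt (fun x => Real.log (Real.cosh x - ν * Real.sinh x)) 0 :=
    ContinuousAt.log (by fun_prop) (cosh_sub_mul_sinh_pos hν 0).ne'
  have hcoth : Tendsto (fun x => Real.cosh x / Real.sinh x *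
      Real.log (1 + (1 - ν ^ 2) * Real.sinh x ^ 2)) (𝓝[>] 0) (𝓝 0) := by
    have hbound : Tendsto (fun x => Real.cosh x * Real.sinh x) (𝓝[>] 0) (𝓝 0) := by
      have h : Continuous fun x => Real.cosh x * Real.sinh x := by fun_prop
      simpa only [Real.sinh_zero, mul_zero] using (h.tendsto 0).mono_left nhdsWithin_le_nhds
    refine tendsto_of_tendsto_of_tendsto_of_le_of_le' tendsto_const_nhds hbound ?_ ?_
    all_goals
      filter_upwards [self_mem_nhdsWithin] with x hx
      have hsinh : 0 < Real.sinh x := Real.sinh_pos_iff.mpr hx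
      have hdiv : 0 ≤ Real.cosh x / Real.sinh x := div_nonneg (Real.cosh_pos x).le hsinh.le
    · exact mul_nonneg hdiv (log_one_add_mul_sinh_sq_nonneg hν x)
    · have hlog : Real.log (1 + (1 - ν ^ 2) * Real.sinh x ^ 2) ≤ Real.sinh x ^ 2 := by
        have hcoef := mul_nonneg (one_sub_sq_nonneg hν) (sq_nonneg (Real.sinh x))
        have h := Real.log_le_sub_one_of_pos (add_pos_of_pos_of_nonneg one_pos hcoef)
        nlinarith [sq_nonneg (ν * Real.sinh x)]
      calc Real.cosh x / Real.sinh x * Real.log (1 + (1 - ν ^ 2) * Real.sinh x ^ 2)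
          ≤ Real.cosh x / Real.sinh x * Real.sinh x ^ 2 := mul_le_mul_of_nonneg_left hlog hdiv
        _ = Real.cosh x * Real.sinh x := by field_simp
  have hid : Tendsto (fun x : ℝ => 2 * x) (𝓝 0) (𝓝 (2 * 0)) := tendsto_id.const_mul 2
  have hlim := ((hid.mono_left nhdsWithin_le_nhds).sub hcoth).sub
    (((hadd.tendsto.sub hsub.tendsto).const_mul ν).mono_left nhdsWithin_le_nhds)
  simpa [entropyPrimitive] using! hlim

lemma tendsto_log_cosh_add_mul_sinh_sub (hν : |ν| < 1) :
    Tendsto (fun x => Real.log (Real.cosh x + ν * Real.sinh x) - x) atTop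
      (𝓝 (Real.log ((1 + ν) / 2))) := by
  have hpos : 0 < (1 + ν) / 2 := by linarith [(abs_lt.mp hν).1]
  have hexp : Tendsto (fun x : ℝ => (1 + ν) / 2 + (1 - ν) / 2 * Real.exp (-x) ^ 2) atTop
      (𝓝 ((1 + ν) / 2)) := by
    simpa only [zero_pow two_ne_zero, mul_zero, add_zero] using
      ((Real.tendsto_exp_neg_atTop_nhds_zero.pow 2).const_mul ((1 - ν) / 2)).const_add ((1 + ν) / 2)
  refine (hexp.log hpos.ne').congr fun x => ?_
  have hmul : Real.exp x * Real.exp (-x) = 1 := by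
    rw [← Real.exp_add, add_neg_cancel, Real.exp_zero]
  have hfactor : (1 + ν) / 2 + (1 - ν) / 2 * Real.exp (-x) ^ 2 =
      (Real.cosh x + ν * Real.sinh x) * Real.exp (-x) := by
    rw [Real.cosh_eq, Real.sinh_eq]
    linear_combination -((1 + ν) / 2) * hmul
  rw [hfactor, Real.log_mul (cosh_add_mul_sinh_pos hν.le x).ne' (Real.exp_pos _).ne', Real.log_exp,
    sub_eq_add_neg]

lemma tendsto_coth_sub_one_mul_id :
    Tendsto (fun x => (Real.cosh x / Real.sinh x - 1) * x) atTop (𝓝 0) := by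
  refine tendsto_of_tendsto_of_tendsto_of_le_of_le' tendsto_const_nhds
    Real.tendsto_exp_neg_atTop_nhds_zero ?_ ?_
  all_goals
    filter_upwards [eventually_gt_atTop 0] with x hx
    have hsinh : 0 < Real.sinh x := Real.sinh_pos_iff.mpr hx
    rw [div_sub_one hsinh.ne', Real.cosh_sub_sinh]
  · positivity
  · rw [div_mul_eq_mul_div, div_le_iff₀ hsinh]
    exact mul_le_mul_of_nonneg_left (Real.self_le_sinh_iff.mpr hx.le) (Real.exp_pos _).le

lemma tendsto_coth_sub_one : Tendsto (fun x => Real.cosh x / Real.sinh x - 1) atTop (𝓝 0) := by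
  have h := tendsto_coth_sub_one_mul_id.mul tendsto_inv_atTop_zero
  rw [mul_zero] at h
  refine h.congr' ?_
  filter_upwards [eventually_ne_atTop 0] with x hx
  rw [mul_inv_cancel_right₀ hx]

lemma two_mul_log_two_mul_entBin (ν : ℝ) : 2 * Real.log 2 * entBin ν =
    -((1 + ν) * Real.log ((1 + ν) / 2) + (1 - ν) * Real.log ((1 - ν) / 2)) := by
  have hlog : Real.log 2 ≠ 0 := (Real.log_pos one_lt_two).ne'
  rw [entBin, Real.logb, Real.logb]
  field_simp
  ring

lemma tendsto_entropyPrimitive_atTop (hν : |ν| < 1) :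
    Tendsto (entropyPrimitive ν) atTop (𝓝 (2 * Real.log 2 * entBin ν)) := by
  have hadd := tendsto_log_cosh_add_mul_sinh_sub hν
  have hsub := tendsto_log_cosh_add_mul_sinh_sub (ν := -ν) (by rwa [abs_neg])
  simp only [neg_mul, ← sub_eq_add_neg] at hsub
  have hcoth := (tendsto_coth_sub_one.mul (hadd.add hsub)).add
    (tendsto_coth_sub_one_mul_id.const_mul 2)
  convert (((hadd.add hsub).neg.sub hcoth).sub ((hadd.sub hsub).const_mul ν)) using 1
  · funext x
    rw [entropyPrimitive, ← log_cosh_add_add_log_cosh_sub hν.le]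
    ring
  · rw [two_mul_log_two_mul_entBin]
    ring_nf

lemma integrableOn_and_integral_entropyIntegrand (hν : |ν| ≤ 1) :
    IntegrableOn (entropyIntegrand ν) (Set.Ioi 0) ∧
      ∫ x in Set.Ioi 0, entropyIntegrand ν x = 2 * Real.log 2 * entBin ν := by
  rcases hν.lt_or_eq with hlt | heq
  · have hzero : entropyPrimitive ν 0 = 0 := by simp [entropyPrimitive]
    have hcont : ContinuousWithinAt (entropyPrimitive ν) (Set.Ici 0) 0 := by
      rw [← Set.Ioi_insert, continuousWithinAt_insert_self, ContinuousWithinAt, hzero]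
      exact tendsto_entropyPrimitive_zero hν
    have hderiv (x : ℝ) (hx : x ∈ Set.Ioi 0) := hasDerivAt_entropyPrimitive hν hx
    have hnonneg (x : ℝ) (_ : x ∈ Set.Ioi 0) := entropyIntegrand_nonneg hν x
    have htop := tendsto_entropyPrimitive_atTop hlt
    refine ⟨integrableOn_Ioi_deriv_of_nonneg hcont hderiv hnonneg htop, ?_⟩
    rw [integral_Ioi_of_hasDerivAt_of_nonneg hcont hderiv hnonneg htop, hzero, sub_zero]
  · have hsq : ν ^ 2 = 1 := by rw [← sq_abs, heq, one_pow]
    have hzero : entropyIntegrand ν = 0 := by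
      funext x
      rw [entropyIntegrand, hsq, sub_self, zero_mul, add_zero, Real.log_one, zero_div,
        Pi.zero_apply]
    rw [hzero]
    refine ⟨integrableOn_zero, ?_⟩
    rcases (abs_eq zero_le_one).mp heq with h | h <;> simp [h, entBin]

end EntropyIntegral

section SinhIntegrals

variable {x : ℝ}

lemma mul_exp_le_mul_sinh (x : ℝ) : x * Real.exp x ≤ (1 + 2 * x) * Real.sinh x := by
  have h : (1 + 2 * x) * Real.exp (-x) ≤ Real.exp x := calc
    (1 + 2 * x) * Real.exp (-x) ≤ Real.exp (2 * x) * Real.exp (-x) := by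
      gcongr
      linarith [Real.add_one_le_exp (2 * x)]
    _ = Real.exp x := by rw [← Real.exp_add]; ring_nf
  rw [Real.sinh_eq]
  linarith

lemma sq_mul_exp_div_sinh_sq_le (hx : 0 < x) :
    x ^ 2 * Real.exp |x| / Real.sinh x ^ 2 ≤ 64 * Real.exp (-(1 / 2) * x) := by
  have hsinh : 0 < Real.sinh x := Real.sinh_pos_iff.mpr hx
  have hlin : 1 + 2 * x ≤ 8 * Real.exp (x / 4) := by linarith [Real.add_one_le_exp (x / 4)]
  have hmul : x * Real.exp x ≤ 8 * Real.exp (x / 4) * Real.sinh x :=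
    (mul_exp_le_mul_sinh x).trans (mul_le_mul_of_nonneg_right hlin hsinh.le)
  have hexp : Real.exp (x / 4) ^ 2 * Real.exp (-x) = Real.exp (-(1 / 2) * x) := by
    rw [← Real.exp_nat_mul, ← Real.exp_add]
    congr 1
    push_cast
    ring
  rw [abs_of_pos hx, div_le_iff₀ (by positivity)]
  calc x ^ 2 * Real.exp x = (x * Real.exp x) ^ 2 * Real.exp (-x) := by
        rw [Real.exp_neg]
        field_simp
    _ ≤ (8 * Real.exp (x / 4) * Real.sinh x) ^ 2 * Real.exp (-x) := by gcongr
    _ = 64 * Real.exp (-(1 / 2) * x) * Real.sinh x ^ 2 := by rw [← hexp]; ring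

lemma integrableOn_sq_mul_exp_div_sinh_sq :
    IntegrableOn (fun x => x ^ 2 * Real.exp |x| / Real.sinh x ^ 2) (Set.Ioi 0) := by
  refine ((integrableOn_exp_mul_Ioi (a := -(1 / 2)) (by norm_num) 0).const_mul 64).mono'
    (Measurable.aestronglyMeasurable (by fun_prop)) ?_
  filter_upwards [ae_restrict_mem measurableSet_Ioi] with x hx
  rw [Real.norm_of_nonneg (by positivity)]
  exact sq_mul_exp_div_sinh_sq_le hx

lemma integrableOn_sq_div_sinh_sq :
    IntegrableOn (fun x => x ^ 2 / Real.sinh x ^ 2) (Set.Ioi 0) := by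
  refine integrableOn_sq_mul_exp_div_sinh_sq.mono'
    (Measurable.aestronglyMeasurable (by fun_prop)) (ae_of_all _ fun x => ?_)
  rw [Real.norm_of_nonneg (by positivity)]
  gcongr
  exact le_mul_of_one_le_right (sq_nonneg x) (Real.one_le_exp (abs_nonneg x))

lemma hasSum_sq_div_sinh_sq (hx : 0 < x) :
    HasSum (fun n : ℕ => 4 * n * (x ^ 2 * Real.exp (-(2 * n * x)))) (x ^ 2 / Real.sinh x ^ 2) := by
  set q := Real.exp (-(2 * x))
  have hq : q < 1 := Real.exp_lt_one_iff.mpr (by linarith)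
  have hgeom := (hasSum_coe_mul_geometric_of_norm_lt_one (r := q)
    (by rwa [Real.norm_of_nonneg (Real.exp_pos _).le])).mul_left (4 * x ^ 2)
  have hterm (n : ℕ) : 4 * n * (x ^ 2 * Real.exp (-(2 * n * x))) = 4 * x ^ 2 * (n * q ^ n) := by
    have hpow : Real.exp (-(2 * n * x)) = q ^ n := by
      rw [← Real.exp_nat_mul]
      congr 1
      ring
    rw [hpow]
    ring
  have hvalue : x ^ 2 / Real.sinh x ^ 2 = 4 * x ^ 2 * (q / (1 - q) ^ 2) := by
    have hsinh : Real.sinh x ≠ 0 := (Real.sinh_pos_iff.mpr hx).ne'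
    have hsq : q = Real.exp (-x) ^ 2 := by
      rw [← Real.exp_nat_mul, Nat.cast_ofNat, mul_neg]
    have hmul : 2 * Real.sinh x * Real.exp (-x) = 1 - q := by
      have hexp : Real.exp x * Real.exp (-x) = 1 := by
        rw [← Real.exp_add, add_neg_cancel, Real.exp_zero]
      rw [hsq, Real.sinh_eq]
      linear_combination hexp
    rw [← hmul, hsq]
    field_simp [hsinh]
    norm_num
  simp only [hterm, hvalue]
  exact hgeom

lemma integral_sq_mul_exp_neg_mul_Ioi (n : ℕ) :
    ∫ x in Set.Ioi (0 : ℝ), 4 * n * (x ^ 2 * Real.exp (-(2 * n * x))) = 1 / (n : ℝ) ^ 2 := by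
  rcases n.eq_zero_or_pos with rfl | hn
  · simp
  have hGamma := Real.integral_rpow_mul_exp_neg_mul_Ioi (a := 3) (r := 2 * n) three_pos
    (by positivity)
  have hthree : Real.Gamma 3 = 2 := by
    rw [Real.Gamma_ofNat_eq_factorial 2, Nat.factorial_two, Nat.cast_ofNat]
  norm_num [hthree] at hGamma
  rw [integral_const_mul, hGamma]
  field_simp
  norm_num

lemma integral_sq_div_sinh_sq :
    ∫ x in Set.Ioi (0 : ℝ), x ^ 2 / Real.sinh x ^ 2 = π ^ 2 / 6 := by
  have hterm := integral_sq_mul_exp_neg_mul_Ioi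
  have hint (n : ℕ) : IntegrableOn (fun x => 4 * n * (x ^ 2 * Real.exp (-(2 * n * x))))
      (Set.Ioi 0) := by
    rcases n.eq_zero_or_pos with rfl | hn
    · simp
    · refine Integrable.of_integral_ne_zero ?_
      rw [hterm n]
      positivity
  have hnorm (n : ℕ) : ∫ x in Set.Ioi (0 : ℝ), ‖4 * n * (x ^ 2 * Real.exp (-(2 * n * x)))‖ =
      1 / (n : ℝ) ^ 2 := by
    simp only [Real.norm_of_nonneg (show 0 ≤ 4 * (n : ℝ) * (_ ^ 2 * Real.exp _) by positivity),
      hterm]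
  have hsum := hasSum_integral_of_summable_integral_norm hint
    (by simpa only [hnorm] using hasSum_zeta_two.summable)
  simp only [hterm] at hsum
  rw [hasSum_zeta_two.unique hsum]
  exact setIntegral_congr_fun measurableSet_Ioi fun x hx => (hasSum_sq_div_sinh_sq hx).tsum_eq.symm

end SinhIntegrals

/-! ### Spectra of Toeplitz matrices of sign symbols -/

lemma le_eigenvalues_toeplitz {a : ℝ → ℝ} (ha : MemLp a ⊤ periodMeasure) {δ : ℝ}
    (h0 : ∀ᵐ t ∂periodMeasure, δ ≤ a t) (N : ℕ) (k : Fin N) :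
    δ ≤ (toeplitz_isHermitian a N).eigenvalues k := by
  have hunit := (toeplitz_isHermitian a N).eigenvectorBasis.orthonormal.1 k
  rw [EuclideanSpace.norm_eq, Real.sqrt_eq_one] at hunit
  have hform := le_re_star_dotProduct_toeplitz_mulVec ha h0
    ((toeplitz_isHermitian a N).eigenvectorBasis k)
  rw [hunit, mul_one] at hform
  exact hform.trans_eq ((toeplitz_isHermitian a N).eigenvalues_eq k).symm

lemma eigenvalues_toeplitz_le {a : ℝ → ℝ} (ha : MemLp a ⊤ periodMeasure) {δ : ℝ}
    (h0 : ∀ᵐ t ∂periodMeasure, a t ≤ δ) (N : ℕ) (k : Fin N) :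
    (toeplitz_isHermitian a N).eigenvalues k ≤ δ := by
  have hunit := (toeplitz_isHermitian a N).eigenvectorBasis.orthonormal.1 k
  rw [EuclideanSpace.norm_eq, Real.sqrt_eq_one] at hunit
  have hform := le_re_star_dotProduct_toeplitz_mulVec (ha.const_mul (-1)) (δ := -δ)
    (h0.mono fun t ht => by linarith) ((toeplitz_isHermitian a N).eigenvectorBasis k)
  rw [hunit, mul_one, toeplitz_const_mul, Complex.ofReal_neg, Complex.ofReal_one, neg_one_smul,
    Matrix.neg_mulVec, dotProduct_neg, Complex.neg_re, neg_le_neg_iff] at hform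
  exact ((toeplitz_isHermitian a N).eigenvalues_eq k).trans_le hform

lemma det_smul_one_add_smul {n : Type*} [Fintype n] [DecidableEq n] {A : Matrix n n ℂ}
    (hA : A.IsHermitian) (a b : ℝ) :
    ((a : ℂ) • (1 : Matrix n n ℂ) + (b : ℂ) • A).det =
      ∏ k, ((a + hA.eigenvalues k * b : ℝ) : ℂ) := by
  have hdiag : (a : ℂ) • (1 : Matrix n n ℂ) + (b : ℂ) • A =
      Unitary.conjStarAlgAut ℂ _ hA.eigenvectorUnitary
        (Matrix.diagonal fun k => ((a + hA.eigenvalues k * b : ℝ) : ℂ)) := by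
    conv_lhs => rw [hA.spectral_theorem, ← map_one (Unitary.conjStarAlgAut ℂ (Matrix n n ℂ)
      hA.eigenvectorUnitary), ← map_smul, ← map_smul, ← map_add]
    congr 1
    ext i j
    by_cases hij : i = j
    · subst hij
      simp [mul_comm]
    · simp [hij]
  rw [hdiag]
  simp [-Unitary.conjStarAlgAut_apply]

/-- The entropy integrand of `T_N(f)`, with its logarithmic divergence subtracted. -/
def entropyRemainder {ι : Type*} (f : ℝ → ℝ) (η : ι → ℝ) (s : Finset ι) (N : ℕ)
    (x : ℝ) : ℝ :=
  ∑ k, entropyIntegrand ((toeplitz_isHermitian f N).eigenvalues k) x -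
    2 * (∑ i ∈ s, η i ^ 2) / π ^ 2 * Real.log N * (x ^ 2 / Real.sinh x ^ 2)

/-- A function with values `±1` which, on the period `(0, 2π]`, is a constant plus a combination of
sawtooth functions with distinct jump locations; the `i`-th jump has height `-2 * η i`. -/
structure IsSignSymbol {ι : Type*} (f : ℝ → ℝ) (c : ℝ) (τ η : ι → ℝ) (s : Finset ι) : Prop where
  mem_Ioo : ∀ i ∈ s, τ i ∈ Set.Ioo 0 (2 * π)
  injOn : Set.InjOn τ s
  eq_sum : ∀ᵐ t ∂periodMeasure, f t = c + ∑ i ∈ s, η i * sawtooth (τ i) t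
  eq_one_or : ∀ᵐ t ∂periodMeasure, f t = 1 ∨ f t = -1

namespace IsSignSymbol

variable {ι : Type*} {f : ℝ → ℝ} {c : ℝ} {τ η : ι → ℝ} {s : Finset ι}

lemma abs_le_one (hf : IsSignSymbol f c τ η s) : ∀ᵐ t ∂periodMeasure, |f t| ≤ 1 := by
  filter_upwards [hf.eq_one_or] with t ht
  rcases ht with h | h <;> simp [h]

lemma memLp (hf : IsSignSymbol f c τ η s) : MemLp f ⊤ periodMeasure := by
  have hmeas : Measurable fun t => c + ∑ i ∈ s, η i * sawtooth (τ i) t :=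
    (Finset.measurable_fun_sum s fun i _ => (measurable_sawtooth (τ i)).const_mul (η i)).const_add c
  exact memLp_top_of_bound (hmeas.aestronglyMeasurable.congr (EventuallyEq.symm hf.eq_sum)) 1
    hf.abs_le_one

lemma abs_eigenvalues_le_one (hf : IsSignSymbol f c τ η s) (N : ℕ) (k : Fin N) :
    |(toeplitz_isHermitian f N).eigenvalues k| ≤ 1 :=
  abs_le.mpr
    ⟨le_eigenvalues_toeplitz hf.memLp (hf.abs_le_one.mono fun _ ht => (abs_le.mp ht).1) N k,
      eigenvalues_toeplitz_le hf.memLp (hf.abs_le_one.mono fun _ ht => (abs_le.mp ht).2) N k⟩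

lemma jumpSymbol_ae_eq (hf : IsSignSymbol f c τ η s) (x : ℝ) :
    jumpSymbol τ (fun i => x * η i) s =ᵐ[periodMeasure]
      fun t => Real.exp (-(x * c)) * (Real.cosh x * 1 + Real.sinh x * f t) := by
  filter_upwards [hf.eq_sum, hf.eq_one_or] with t hsum hsign
  have hexp : Real.cosh x * 1 + Real.sinh x * f t = Real.exp (x * f t) := by
    rcases hsign with h | h
    · rw [h, mul_one, mul_one, mul_one, Real.cosh_add_sinh]
    · rw [h, mul_neg_one, mul_neg_one, mul_one, ← sub_eq_add_neg, Real.cosh_sub_sinh]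
  rw [hexp, hsum, ← Real.exp_add, jumpSymbol_eq_exp]
  congr 1
  simp only [mul_assoc, ← Finset.mul_sum]
  ring

lemma det_toeplitz_jumpSymbol (hf : IsSignSymbol f c τ η s) (x : ℝ) (N : ℕ) :
    (toeplitz (jumpSymbol τ (fun i => x * η i) s) N).det = (Real.exp (-(x * c)) ^ N *
      ∏ k, (Real.cosh x + (toeplitz_isHermitian f N).eigenvalues k * Real.sinh x) : ℝ) := by
  have hmatrix : toeplitz (jumpSymbol τ (fun i => x * η i) s) N = (Real.exp (-(x * c)) : ℂ) •
      ((Real.cosh x : ℂ) • (1 : Matrix (Fin N) (Fin N) ℂ) +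
        (Real.sinh x : ℂ) • toeplitz f N) := by
    rw [toeplitz_congr (hf.jumpSymbol_ae_eq x),
      toeplitz_const_mul _ fun t => Real.cosh x * 1 + Real.sinh x * f t,
      toeplitz_add (memLp_const _) (hf.memLp.const_mul _), toeplitz_const_mul _ fun _ => 1,
      toeplitz_const_mul, toeplitz_one, Complex.ofReal_exp]
  rw [hmatrix, Matrix.det_smul, Fintype.card_fin,
    det_smul_one_add_smul (toeplitz_isHermitian f N)]
  push_cast
  rfl

lemma logDet_jumpSymbol (hf : IsSignSymbol f c τ η s) (x : ℝ) (N : ℕ) :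
    logDet (jumpSymbol τ (fun i => x * η i) s) N = -(x * c * N) + ∑ k,
      Real.log (Real.cosh x + (toeplitz_isHermitian f N).eigenvalues k * Real.sinh x) := by
  have hne (k : Fin N) :=
    (cosh_add_mul_sinh_pos (hf.abs_eigenvalues_le_one N k) x).ne'
  rw [logDet, hf.det_toeplitz_jumpSymbol, Complex.norm_real, Real.norm_eq_abs, Real.log_abs,
    Real.log_mul (by positivity) (Finset.prod_ne_zero_iff.mpr fun k _ => hne k), Real.log_pow,
    Real.log_exp, Real.log_prod fun k _ => hne k]
  ring

lemma sum_entropyIntegrand_eq (hf : IsSignSymbol f c τ η s) (x : ℝ) (N : ℕ) :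
    ∑ k, entropyIntegrand ((toeplitz_isHermitian f N).eigenvalues k) x =
      (logDet (jumpSymbol τ (fun i => x * η i) s) N +
        logDet (jumpSymbol τ (fun i => -x * η i) s) N) / Real.sinh x ^ 2 := by
  rw [hf.logDet_jumpSymbol, hf.logDet_jumpSymbol, Real.cosh_neg, Real.sinh_neg]
  simp only [entropyIntegrand, ← log_cosh_add_add_log_cosh_sub (hf.abs_eigenvalues_le_one N _),
    ← Finset.sum_div, Finset.sum_add_distrib, mul_neg, ← sub_eq_add_neg]
  ring

lemma integrableOn_sum_entropyIntegrand (hf : IsSignSymbol f c τ η s) (N : ℕ) :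
    IntegrableOn
      (fun x => ∑ k, entropyIntegrand ((toeplitz_isHermitian f N).eigenvalues k) x)
      (Set.Ioi 0) :=
  integrable_finsetSum _ fun k _ =>
    (integrableOn_and_integral_entropyIntegrand (hf.abs_eigenvalues_le_one N k)).1

lemma integral_entropyRemainder (hf : IsSignSymbol f c τ η s) (N : ℕ) :
    ∫ x in Set.Ioi 0, entropyRemainder f η s N x = 2 * Real.log 2 *
      ((∑ k, entBin ((toeplitz_isHermitian f N).eigenvalues k)) -
        (∑ i ∈ s, η i ^ 2) / 6 * Real.logb 2 N) := by
  have hent (k : Fin N) :=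
    integrableOn_and_integral_entropyIntegrand (hf.abs_eigenvalues_le_one N k)
  simp only [entropyRemainder]
  rw [integral_sub (hf.integrableOn_sum_entropyIntegrand N)
      (integrableOn_sq_div_sinh_sq.const_mul _), integral_finsetSum _ fun k _ => (hent k).1,
    integral_const_mul, integral_sq_div_sinh_sq, Finset.sum_congr rfl fun k _ => (hent k).2,
    ← Finset.mul_sum, Real.logb]
  have hlog : Real.log 2 ≠ 0 := (Real.log_pos one_lt_two).ne'
  field_simp

lemma entropyRemainder_eq (hf : IsSignSymbol f c τ η s) (N : ℕ) (x : ℝ) :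
    entropyRemainder f η s N x =
      ((logDet (jumpSymbol τ (fun i => x * η i) s) N -
          (∑ i ∈ s, (x * η i / π) ^ 2) * Real.log N) +
        (logDet (jumpSymbol τ (fun i => -x * η i) s) N -
          (∑ i ∈ s, (-x * η i / π) ^ 2) * Real.log N)) / Real.sinh x ^ 2 := by
  have hcoeff (y : ℝ) : ∑ i ∈ s, (y * η i / π) ^ 2 = y ^ 2 * (∑ i ∈ s, η i ^ 2) / π ^ 2 := by
    rw [Finset.mul_sum, Finset.sum_div]
    exact Finset.sum_congr rfl fun i _ => by rw [div_pow, mul_pow]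
  rw [entropyRemainder, hf.sum_entropyIntegrand_eq, hcoeff, hcoeff]
  ring

lemma exists_tendsto_integral_entropyRemainder (hf : IsSignSymbol f c τ η s) :
    ∃ L, Tendsto (fun N => ∫ x in Set.Ioi 0, entropyRemainder f η s N x) atTop (𝓝 L) := by
  obtain ⟨K, hK⟩ := exists_logDet_jumpSymbol_asymptotics hf.mem_Ioo hf.injOn η
  choose A hA using fun x => (hK x).1
  refine ⟨_, tendsto_integral_of_dominated_convergence
    (F := fun N => entropyRemainder f η s N) (f := fun x => (A x + A (-x)) / Real.sinh x ^ 2)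
    (fun x => 2 * K * (x ^ 2 * Real.exp |x| / Real.sinh x ^ 2))
    (fun N => ((hf.integrableOn_sum_entropyIntegrand N).sub
      (integrableOn_sq_div_sinh_sq.const_mul _)).1)
    (integrableOn_sq_mul_exp_div_sinh_sq.const_mul _)
    (fun N => ae_of_all _ fun x => ?_) (ae_of_all _ fun x => ?_)⟩
  · have hpos := (hK x).2 N
    have hneg := (hK (-x)).2 N
    rw [abs_neg, neg_sq] at hneg
    rw [hf.entropyRemainder_eq, norm_div, Real.norm_eq_abs, Real.norm_of_nonneg (sq_nonneg _),
      ← mul_div_assoc]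
    gcongr
    exact (abs_add_le _ _).trans (by linarith)
  · simp only [hf.entropyRemainder_eq]
    exact ((hA x).add (hA (-x))).div_const _

theorem exists_tendsto_sum_entBin (hf : IsSignSymbol f c τ η s) :
    ∃ L, Tendsto (fun N : ℕ => (∑ k, entBin ((toeplitz_isHermitian f N).eigenvalues k)) -
      (∑ i ∈ s, η i ^ 2) / 6 * Real.logb 2 N) atTop (𝓝 L) := by
  obtain ⟨L, hL⟩ := hf.exists_tendsto_integral_entropyRemainder
  have hlog : 2 * Real.log 2 ≠ 0 := (mul_pos two_pos (Real.log_pos one_lt_two)).ne'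
  refine ⟨_, (hL.const_mul (2 * Real.log 2)⁻¹).congr fun N => ?_⟩
  rw [hf.integral_entropyRemainder, inv_mul_cancel_left₀ hlog]

end IsSignSymbol

/-! ### Alternating step functions -/

section Alternating

variable {φ : ℕ → ℝ} {f : ℝ → ℝ}

lemma stepSign_of_mem_Ioc {n m j : ℕ} {t : ℝ} (hφ : StrictMonoOn φ (Set.Iic (n + 1)))
    (ht : t ∈ Set.Ioc (φ m) (φ (m + 1))) (hm : m ≤ n) (hj : j < n) :
    stepSign (φ (j + 1)) t = if j < m then -1 else 1 := by
  rw [stepSign, ← ite_not]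
  refine if_congr (not_le.trans ⟨fun h => ?_, fun h => ?_⟩) rfl rfl
  · have hlt := (hφ.lt_iff_lt (by simp; omega) (by simp; omega)).mp (h.trans_le ht.2)
    omega
  · exact ((hφ.le_iff_le (by simp; omega) (by simp; omega)).mpr h).trans_lt ht.1

lemma two_mul_sum_range_neg_one_pow (n : ℕ) :
    2 * ∑ j ∈ Finset.range n, (-1 : ℝ) ^ j = 1 - (-1) ^ n := by
  rw [← mul_neg_geom_sum]
  norm_num

lemma neg_one_pow_eq_sum_stepSign {M m : ℕ} {t : ℝ}
    (hφ : StrictMonoOn φ (Set.Iic (2 * M + 1))) (ht : t ∈ Set.Ioc (φ m) (φ (m + 1)))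
    (hm : m ≤ 2 * M) :
    (-1) ^ m = 1 + ∑ j ∈ Finset.range (2 * M), (-1) ^ j * stepSign (φ (j + 1)) t := by
  have hterm : ∀ j ∈ Finset.range (2 * M), (-1) ^ j * stepSign (φ (j + 1)) t =
      (-1) ^ j - 2 * if j < m then (-1) ^ j else 0 := by
    intro j hj
    rw [stepSign_of_mem_Ioc hφ ht hm (Finset.mem_range.mp hj)]
    split_ifs <;> ring
  have hfilter : (Finset.range (2 * M)).filter (· < m) = Finset.range m := by
    ext j
    simp only [Finset.mem_filter, Finset.mem_range]
    omega
  rw [Finset.sum_congr rfl hterm, Finset.sum_sub_distrib, ← Finset.mul_sum, ← Finset.sum_filter,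
    hfilter, two_mul_sum_range_neg_one_pow, neg_one_geom_sum, if_pos (even_two_mul M)]
  ring

theorem isSignSymbol_of_alternating {M : ℕ} (hφ : StrictMonoOn φ (Set.Iic (2 * M + 1)))
    (h0 : φ 0 = 0) (htop : φ (2 * M + 1) = 2 * π)
    (hf : ∀ᵐ t, ∀ m ≤ 2 * M, t ∈ Set.Ioc (φ m) (φ (m + 1)) → f t = (-1) ^ m) :
    IsSignSymbol f (1 + ∑ j ∈ Finset.range (2 * M), (-1) ^ j * (φ (j + 1) / π))
      (fun j => φ (j + 1)) (fun j => (-1) ^ j) (Finset.range (2 * M)) := by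
  have hpiece : ∀ᵐ t ∂periodMeasure,
      ∃ m ≤ 2 * M, t ∈ Set.Ioc (φ m) (φ (m + 1)) ∧ f t = (-1) ^ m := by
    filter_upwards [ae_restrict_mem measurableSet_Ioc, ae_restrict_of_ae hf] with t ht hft
    rw [← h0, ← htop] at ht
    obtain ⟨m, hm, htm⟩ := Set.mem_iUnion₂.mp (Ioc_subset_biUnion_Ioc _ φ ht)
    have hm' : m ≤ 2 * M := Nat.lt_succ_iff.mp (Finset.mem_range.mp hm)
    exact ⟨m, hm', htm, hft m hm' htm⟩
  refine ⟨fun j hj => ?_, fun i hi j hj hij => ?_, ?_, ?_⟩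
  · rw [Finset.mem_range] at hj
    rw [← h0, ← htop]
    exact ⟨hφ (by simp) (by simp; omega) j.succ_pos,
      hφ (by simp; omega) (by simp) (by omega)⟩
  · rw [Finset.mem_coe, Finset.mem_range] at hi hj
    exact Nat.succ_injective (hφ.injOn (by simp; omega) (by simp; omega) hij)
  · filter_upwards [hpiece] with t ⟨m, hm, htm, hft⟩
    have hzero : ∑ j ∈ Finset.range (2 * M), (-1 : ℝ) ^ j * (t / π) = 0 := by
      rw [← Finset.sum_mul, neg_one_geom_sum, if_pos (even_two_mul M), zero_mul]
    rw [hft, neg_one_pow_eq_sum_stepSign hφ htm hm, add_assoc, ← Finset.sum_add_distrib,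
      ← add_zero (∑ j ∈ _, _ * stepSign _ t), ← hzero, ← Finset.sum_add_distrib]
    congr 1
    refine Finset.sum_congr rfl fun j _ => ?_
    rw [sawtooth]
    ring
  · filter_upwards [hpiece] with t ⟨m, _, _, hft⟩
    exact hft ▸ neg_one_pow_eq_or ℝ m

end Alternating

/-! ### The symbol with Fermi points `±θ_r` -/

section FermiPoints

variable {R : ℕ} {θ : ℕ → ℝ} {f : ℝ → ℝ}

/-- The Fermi points `θ_1 < ⋯ < θ_R` continued to all of `[0, 2π]` by the reflection `t ↦ 2π - t`,
with `0` and `2π` as first and last entry (index `0` and `2R + 1`). -/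
def mirroredFermiPoint (θ : ℕ → ℝ) (R j : ℕ) : ℝ :=
  if j ≤ R then θ j else 2 * π - θ (2 * R + 1 - j)

lemma strictMonoOn_mirroredFermiPoint (hθtop : θ (R + 1) = π)
    (hmono : ∀ r ≤ R, θ r < θ (r + 1)) :
    StrictMonoOn (mirroredFermiPoint θ R) (Set.Iic (2 * R + 1)) := by
  refine strictMonoOn_Iic_of_lt_succ fun j hj => ?_
  rw [Nat.succ_eq_succ, Nat.succ_eq_add_one, mirroredFermiPoint, mirroredFermiPoint]
  rcases lt_trichotomy j R with hlt | rfl | hgt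
  · rw [if_pos hlt.le, if_pos (Nat.succ_le_of_lt hlt)]
    exact hmono j hlt.le
  · rw [if_pos le_rfl, if_neg (by omega), show 2 * j + 1 - (j + 1) = j by omega]
    linarith [hmono j le_rfl]
  · rw [if_neg (by omega), if_neg (by omega),
      show 2 * R + 1 - j = 2 * R + 1 - (j + 1) + 1 by omega]
    linarith [hmono (2 * R + 1 - (j + 1)) (by omega)]

lemma eq_of_two_pi_sub (hper : ∀ t, f (t + 2 * π) = f t) (heven : ∀ t, f (-t) = f t) (t : ℝ) :
    f (2 * π - t) = f t := by
  rw [← heven t, ← hper (-t), neg_add_eq_sub]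

lemma eq_neg_one_pow_of_mem_Ioo (hθtop : θ (R + 1) = π) (hper : ∀ t, f (t + 2 * π) = f t)
    (heven : ∀ t, f (-t) = f t)
    (hval : ∀ r ≤ R, ∀ t, θ r < t → t < θ (r + 1) → f t = (-1 : ℝ) ^ r) {m : ℕ}
    (hm : m ≤ 2 * R) {t : ℝ} (htπ : t ≠ π)
    (ht : t ∈ Set.Ioo (mirroredFermiPoint θ R m) (mirroredFermiPoint θ R (m + 1))) :
    f t = (-1) ^ m := by
  rw [mirroredFermiPoint, mirroredFermiPoint] at ht
  rcases lt_trichotomy m R with hlt | rfl | hgt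
  · rw [if_pos hlt.le, if_pos (Nat.succ_le_of_lt hlt)] at ht
    exact hval m hlt.le t ht.1 ht.2
  · rw [if_pos le_rfl, if_neg (by omega), show 2 * m + 1 - (m + 1) = m by omega] at ht
    rcases htπ.lt_or_gt with h | h
    · exact hval m le_rfl t ht.1 (hθtop ▸ h)
    · rw [← eq_of_two_pi_sub hper heven]
      exact hval m le_rfl _ (by linarith [ht.2]) (by linarith)
  · rw [if_neg (by omega), if_neg (by omega),
      show 2 * R + 1 - (m + 1) = 2 * R - m by omega,
      show 2 * R + 1 - m = 2 * R - m + 1 by omega] at ht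
    rw [← eq_of_two_pi_sub hper heven, hval (2 * R - m) (by omega) _ (by linarith [ht.2])
      (by linarith [ht.1])]
    exact neg_one_pow_congr (by simp [Nat.even_sub hm])

theorem isSignSymbol_fermiPoints (hθ0 : θ 0 = 0) (hθtop : θ (R + 1) = π)
    (hmono : ∀ r ≤ R, θ r < θ (r + 1)) (hper : ∀ t, f (t + 2 * π) = f t)
    (heven : ∀ t, f (-t) = f t)
    (hval : ∀ r ≤ R, ∀ t, θ r < t → t < θ (r + 1) → f t = (-1 : ℝ) ^ r) :
    ∃ (c : ℝ) (τ : ℕ → ℝ),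
      IsSignSymbol f c τ (fun j => (-1) ^ j) (Finset.range (2 * R)) := by
  refine ⟨_, _, isSignSymbol_of_alternating (strictMonoOn_mirroredFermiPoint hθtop hmono)
    (by simp [mirroredFermiPoint, hθ0]) (by simp [mirroredFermiPoint, hθ0]; omega) ?_⟩
  filter_upwards
    [((Set.countable_range (mirroredFermiPoint θ R)).insert π).ae_notMem volume] with t ht m hm htm
  rw [Set.mem_insert_iff, not_or] at ht
  exact eq_neg_one_pow_of_mem_Ioo hθtop hper heven hval hm ht.1
    ⟨htm.1, htm.2.lt_of_ne fun h => ht.2 ⟨_, h.symm⟩⟩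

lemma fourierCoef_neg_of_even (hper : ∀ t, f (t + 2 * π) = f t) (heven : ∀ t, f (-t) = f t)
    (n : ℤ) : fourierCoef f (-n) = fourierCoef f n := by
  rw [fourierCoef, fourierCoef]
  congr 1
  have hreflect := intervalIntegral.integral_comp_sub_left (a := 0) (b := 2 * π)
    (fun t : ℝ => (f t : ℂ) * Complex.exp (-Complex.I * (n : ℂ) * (t : ℂ))) (2 * π)
  rw [sub_self, sub_zero] at hreflect
  rw [← hreflect]
  refine intervalIntegral.integral_congr fun t _ => ?_
  have hphase : -Complex.I * (n : ℂ) * ((2 * π - t : ℝ) : ℂ) =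
      -Complex.I * ((-n : ℤ) : ℂ) * (t : ℂ) + ((-n : ℤ) : ℂ) * (2 * π * Complex.I) := by
    push_cast
    ring
  simp only [eq_of_two_pi_sub hper heven]
  rw [hphase, Complex.exp_add, Complex.exp_int_mul_two_pi_mul_I, mul_one]

lemma im_fourierCoef_of_even (hper : ∀ t, f (t + 2 * π) = f t) (heven : ∀ t, f (-t) = f t)
    (n : ℤ) : (fourierCoef f n).im = 0 := by
  rw [← Complex.conj_eq_iff_im, conj_fourierCoef, fourierCoef_neg_of_even hper heven]

lemma toeplitz_isSymm_of_even (hper : ∀ t, f (t + 2 * π) = f t) (heven : ∀ t, f (-t) = f t)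
    (N : ℕ) : (toeplitz f N).IsSymm := by
  ext j k
  simp [toeplitz, ← fourierCoef_neg_of_even hper heven ((j : ℤ) - k)]

end FermiPoints

end ToeplitzEntropy

/-- With `f` the sign symbol with jumps at `±θ_1,…,±θ_R` and
`T_N(f) = (f_{j−k})_{j,k=0}^{N−1}`: `T_N(f)` is real symmetric (hence Hermitian) with
all eigenvalues in `[−1,1]`, and the entanglement entropy
`S(T_N(f)) = Σ_k e(1, ν_k)` satisfies `S(T_N(f)) − (R/3) log₂ N → const` as
`N → ∞`. -/
theorem entanglement_entropy_TI_chain (R : ℕ) (hR : 1 ≤ R) (θ : ℕ → ℝ)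
    (hθ0 : θ 0 = 0) (hθtop : θ (R + 1) = Real.pi)
    (hmono : ∀ r ≤ R, θ r < θ (r + 1))
    (f : ℝ → ℝ) (hper : ∀ t, f (t + 2 * Real.pi) = f t) (heven : ∀ t, f (-t) = f t)
    (hval : ∀ r ≤ R, ∀ t, θ r < t → t < θ (r + 1) → f t = (-1 : ℝ) ^ r) :
    ∃ hH : ∀ N : ℕ,
        (Matrix.of fun j k : Fin N => fourierCoef f ((j : ℤ) - (k : ℤ))).IsHermitian,
      (∀ N : ℕ,
        (Matrix.of fun j k : Fin N => fourierCoef f ((j : ℤ) - (k : ℤ))).IsSymm) ∧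
      (∀ (N : ℕ) (j k : Fin N), (fourierCoef f ((j : ℤ) - (k : ℤ))).im = 0) ∧
      (∀ (N : ℕ) (k : Fin N), (hH N).eigenvalues k ∈ Set.Icc (-1 : ℝ) 1) ∧
      ∃ L : ℝ, Filter.Tendsto
        (fun N : ℕ => (∑ k : Fin N, entBin ((hH N).eigenvalues k))
          - (R : ℝ) / 3 * Real.logb 2 (N : ℝ))
        Filter.atTop (nhds L) := by
  obtain ⟨c, τ, hf⟩ :=
    ToeplitzEntropy.isSignSymbol_fermiPoints hθ0 hθtop hmono hper heven hval
  refine ⟨ToeplitzEntropy.toeplitz_isHermitian f,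
    ToeplitzEntropy.toeplitz_isSymm_of_even hper heven,
    fun _ _ _ => ToeplitzEntropy.im_fourierCoef_of_even hper heven _,
    fun N k => abs_le.mp (hf.abs_eigenvalues_le_one N k), ?_⟩
  obtain ⟨L, hL⟩ := hf.exists_tendsto_sum_entBin
  have hcoeff : (∑ j ∈ Finset.range (2 * R), ((-1 : ℝ) ^ j) ^ 2) / 6 = R / 3 := by
    simp only [← pow_mul, (even_two.mul_left _).neg_one_pow, Finset.sum_const, Finset.card_range,
      nsmul_eq_mul, Nat.cast_mul, Nat.cast_ofNat]
    ring
  rw [hcoeff] at hL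
  exact ⟨L, hL⟩

end
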